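/- There exists a constant C > 0 such that for every T with 0 ≤ T ≤ 1 and every admissible source g on [0,T]×ℝ², the Duhamel term D(t) = ∫₀^t U(t−τ) g(τ) dτ satisfies (∫_ℝ (sup_{(x₂,t) ∈ ℝ×[0,T]} |∂_{x₁}D(t)(x₁,x₂)|)² dx₁)^{1/2} ≤ C ∫_ℝ (∫_ℝ ∫₀^T |((1 + D_{x₁}^{7/9} + D_{x₂}^{7/9})g)(τ,x₁,x₂)|² dτ dx₂)^{1/2} dx₁. -/

import Mathlib

/-!
Put `W(ξ, η) = 1 + |ξ|^{7/9} + |η|^{7/9}` and `Λ = W · F g`. On the Fourier side the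
`x₁`-derivative of the Duhamel term is `2πi · Fd Λ`, where `Fd` integrates `ξ W⁻¹ Λ` against the
retarded propagator (`norm_pd1_le`), and by Plancherel in `x₂` the right-hand norm is `∫ gam Λ T z dz`,
where `gam Λ T z` is the `L²` norm of the weighted source on the line `x₁ = z` (`rhs_eq`). So a
maximal function estimate for `Fd` has to be proved.

The suprema are linearised by measurable selectors `t(x)`, `y(x)` and the `L²_{x₁}` norm is dualised
against a function `c` (`sup_estimate`, `selected_estimate`). A Gaussian factor `e^{-δξ²}` makes all
kernels absolutely convergent; every bound is uniform in `δ`, which tends to `0` in `dual_estimate`.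
Fourier inversion in `x₁` (`inner_eq`) writes `Fd` as a superposition over `z` of sources
concentrated on the lines `x₁ = z`, so Minkowski's inequality (`reg_estimate`) reduces matters to a
single line (`core`), and by translation to the line `z = 0` (`core0`).

There the causal cutoff is decomposed as `1_{τ<t} = 1_{x≤0} + sg`, with `sg` supported where `x` and
`t - τ` have the same sign.

* The term `1_{x≤0}` carries no coupling between `t` and `τ`, and factors through a product of two
  `L²` functions of `(ξ, η)` (`free_part`). One is bounded by local smoothing (`smoothing`): Bessel's
  inequality in `τ` with the change of variable `σ = ξ(ξ² + η²)` gains the factor `|ξ|`. The other is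
  the dual form of the maximal estimate from `L²` to `L²_{x₁} L^∞_{x₂ T}` with weight `W⁻¹`
  (`max_dual`). That estimate is proved by `TT*`. In the coordinates `ξ = a + b`, `η = √3 (a - b)` the
  symbol is `4(a³ + b³)`, so with tent cutoffs at frequency `N` the kernel is a product of two
  one-dimensional Airy-type integrals. By van der Corput one is `O(t^{-1/3})` and the other
  `O((t|s|)^{-1/4})`; the product has an even majorant depending on `x - x'` only, of integral
  `O(N^{3/2})` (`tentAiry_mul_le`, `lintegral_majH`), and the Schur test applies. Finally `W⁻²` is
  dominated by a superposition of tents with density `N^{-23/9}` (`weight_le_tents`), and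
  `N^{-23/9} · N^{3/2} = N^{-19/18}` is integrable at infinity: this is the condition `7/9 > 3/4`.

* Where `x` and `s = t - τ` are both positive (or both negative), rotating the `ξ`-contour by `π/6`
  turns the oscillation of `e^{isξ(ξ²+η²) + 2πixξ}` into decay (`fk_rotate`). The resulting kernel is
  square integrable in `(x, η, s)` (`kd_l2`), and Cauchy–Schwarz concludes (`diag_part`).
-/
open MeasureTheory
open scoped ENNReal NNReal

noncomputable section

/-- Fourier transform on ℝ² (realized as ℝ × ℝ). -/
def FT (f : ℝ × ℝ → ℂ) : ℝ × ℝ → ℂ := fun ξ =>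
  ∫ x : ℝ × ℝ,
    Complex.exp (((-(2 * Real.pi * (x.1 * ξ.1 + x.2 * ξ.2)) : ℝ) : ℂ) * Complex.I) * f x

/-- Inverse Fourier transform on ℝ². -/
def FTinv (f : ℝ × ℝ → ℂ) : ℝ × ℝ → ℂ := fun x =>
  ∫ ξ : ℝ × ℝ,
    Complex.exp ((((2 * Real.pi * (x.1 * ξ.1 + x.2 * ξ.2)) : ℝ) : ℂ) * Complex.I) * f ξ

/-- The linear Zakharov–Kuznetsov group `U(t)φ = F⁻¹(e^{i t ξ₁(ξ₁²+ξ₂²)} Fφ)`. -/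
def U (t : ℝ) (φ : ℝ × ℝ → ℂ) : ℝ × ℝ → ℂ :=
  FTinv (fun ξ => Complex.exp (Complex.I * ((t * ξ.1 * (ξ.1 ^ 2 + ξ.2 ^ 2) : ℝ) : ℂ)) * FT φ ξ)

/-- Fractional derivative in the first variable: `D^r_{x₁} f = F⁻¹(|ξ₁|^r F f)`. -/
def Dx1 (r : ℝ) (f : ℝ × ℝ → ℂ) : ℝ × ℝ → ℂ :=
  FTinv (fun ξ => ((|ξ.1| ^ r : ℝ) : ℂ) * FT f ξ)

/-- Fractional derivative in the second variable: `D^r_{x₂} f = F⁻¹(|ξ₂|^r F f)`. -/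
def Dx2 (r : ℝ) (f : ℝ × ℝ → ℂ) : ℝ × ℝ → ℂ :=
  FTinv (fun ξ => ((|ξ.2| ^ r : ℝ) : ℂ) * FT f ξ)

/-- Partial derivative ∂_{x₁}. -/
def pd1 (f : ℝ × ℝ → ℂ) : ℝ × ℝ → ℂ := fun x => fderiv ℝ f x (1, 0)

/-- Partial derivative ∂_{x₂}. -/
def pd2 (f : ℝ × ℝ → ℂ) : ℝ × ℝ → ℂ := fun x => fderiv ℝ f x (0, 1)

/-- Duhamel integral `∫₀^t U(t-τ) g(τ) dτ`. -/
def Duh (g : ℝ → ℝ × ℝ → ℂ) (t : ℝ) : ℝ × ℝ → ℂ := fun x =>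
  ∫ τ in (0:ℝ)..t, U (t - τ) (g τ) x

/-- Sobolev norm `‖f‖_{H^s(ℝ²)}`. -/
def HsNorm (s : ℝ) (f : ℝ × ℝ → ℂ) : ℝ≥0∞ :=
  (∫⁻ ξ : ℝ × ℝ,
      ENNReal.ofReal ((1 + ξ.1 ^ 2 + ξ.2 ^ 2) ^ s) * (‖FT f ξ‖₊ : ℝ≥0∞) ^ (2 : ℝ)) ^ ((1:ℝ)/2)

/-- The mixed norm `‖f‖_{L^{9/4}_T L^∞_x}`. -/
def L94LinfNorm (T : ℝ) (f : ℝ → ℝ × ℝ → ℂ) : ℝ≥0∞ :=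
  (∫⁻ t in Set.Icc (0:ℝ) T, (eLpNorm (f t) ⊤ volume) ^ ((9:ℝ)/4)) ^ ((4:ℝ)/9)

/-- The mixed norm `‖f‖_{L²_{x₁} L^∞_{x₂ T}}` (with genuine suprema). -/
def L2x1LinfNorm (T : ℝ) (f : ℝ → ℝ × ℝ → ℂ) : ℝ≥0∞ :=
  (∫⁻ x₁ : ℝ,
      (⨆ x₂ : ℝ, ⨆ t ∈ Set.Icc (0:ℝ) T, (‖f t (x₁, x₂)‖₊ : ℝ≥0∞)) ^ (2 : ℝ)) ^ ((1:ℝ)/2)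

/-- The mixed norm `‖f‖_{L^∞_{x₁} L²_{x₂ T}}`. -/
def LinfX1L2Norm (T : ℝ) (f : ℝ → ℝ × ℝ → ℂ) : ℝ≥0∞ :=
  ⨆ x₁ : ℝ,
    (∫⁻ x₂ : ℝ, ∫⁻ t in Set.Icc (0:ℝ) T, (‖f t (x₁, x₂)‖₊ : ℝ≥0∞) ^ (2 : ℝ)) ^ ((1:ℝ)/2)

/-- The mixed norm `‖g‖_{L¹_{x₁} L²_{x₂ T}}`. -/
def L1x1L2Norm (T : ℝ) (g : ℝ → ℝ × ℝ → ℂ) : ℝ≥0∞ :=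
  ∫⁻ x₁ : ℝ,
    (∫⁻ x₂ : ℝ, ∫⁻ τ in Set.Icc (0:ℝ) T, (‖g τ (x₁, x₂)‖₊ : ℝ≥0∞) ^ (2 : ℝ)) ^ ((1:ℝ)/2)

/-! ### Van der Corput estimates for cubic phases -/

namespace ZK

lemma hasDerivAt_cubic (t s x : ℝ) :
    HasDerivAt (fun x : ℝ => t * x ^ 3 + s * x) (3 * t * x ^ 2 + s) x := by
  have := ((hasDerivAt_pow 3 x).const_mul t).add ((hasDerivAt_id' x).const_mul s)
  refine this.congr_deriv ?_
  push_cast; ring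

lemma hasDerivAt_quad (t s x : ℝ) :
    HasDerivAt (fun x : ℝ => 3 * t * x ^ 2 + s) (6 * t * x) x := by
  have := ((hasDerivAt_pow 2 x).const_mul (3 * t)).add_const s
  refine this.congr_deriv ?_
  push_cast; ring

/-- Van der Corput's first derivative estimate. The derivative of the phase is monotone on
`[a, b] ⊆ [0, ∞)`, so one integration by parts suffices. -/
lemma vdc1 (t s a b l : ℝ) (ht : 0 ≤ t) (ha : 0 ≤ a) (hab : a ≤ b) (hl : 0 < l)
    (h : ∀ x ∈ Set.Icc a b, l ≤ |3 * t * x ^ 2 + s|) :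
    |∫ x in a..b, Real.cos (t * x ^ 3 + s * x)| ≤ 4 / l := by
  have hu : Set.uIcc a b = Set.Icc a b := Set.uIcc_of_le hab
  have hne : ∀ x ∈ Set.uIcc a b, 3 * t * x ^ 2 + s ≠ 0 := by
    intro x hx hx0
    have := h x (hu ▸ hx)
    rw [hx0, abs_zero] at this
    linarith
  have hinv : ∀ x ∈ Set.uIcc a b, |(3 * t * x ^ 2 + s)⁻¹| ≤ 1 / l := by
    intro x hx
    rw [abs_inv, one_div]
    exact inv_anti₀ hl (h x (hu ▸ hx))
  have d1 : ∀ x ∈ Set.uIcc a b, HasDerivAt (fun x : ℝ => (3 * t * x ^ 2 + s)⁻¹)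
      (-(6 * t * x) / (3 * t * x ^ 2 + s) ^ 2) x := by
    intro x hx
    exact (hasDerivAt_quad t s x).inv (hne x hx)
  have d2 : ∀ x ∈ Set.uIcc a b, HasDerivAt (fun x : ℝ => Real.sin (t * x ^ 3 + s * x))
      (Real.cos (t * x ^ 3 + s * x) * (3 * t * x ^ 2 + s)) x := by
    intro x hx
    exact (hasDerivAt_cubic t s x).sin
  have c1 : ContinuousOn (fun x : ℝ => -(6 * t * x) / (3 * t * x ^ 2 + s) ^ 2) (Set.uIcc a b) := by
    apply ContinuousOn.div (by fun_prop) (by fun_prop)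
    intro x hx; exact pow_ne_zero _ (hne x hx)
  have key := intervalIntegral.integral_mul_deriv_eq_deriv_mul d1 d2
    c1.intervalIntegrable (by apply Continuous.intervalIntegrable; fun_prop)
  have e1 : ∫ x in a..b, Real.cos (t * x ^ 3 + s * x) =
      ∫ x in a..b, (3 * t * x ^ 2 + s)⁻¹ * (Real.cos (t * x ^ 3 + s * x) * (3 * t * x ^ 2 + s)) := by
    apply intervalIntegral.integral_congr
    intro x hx
    have := hne x hx
    simp only
    rw [mul_left_comm, inv_mul_cancel₀ this, mul_one]
  have e2 : ∫ x in a..b, -(6 * t * x) / (3 * t * x ^ 2 + s) ^ 2 =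
      (3 * t * b ^ 2 + s)⁻¹ - (3 * t * a ^ 2 + s)⁻¹ :=
    intervalIntegral.integral_eq_sub_of_hasDerivAt d1 c1.intervalIntegrable
  have e3 : |∫ x in a..b, -(6 * t * x) / (3 * t * x ^ 2 + s) ^ 2 * Real.sin (t * x ^ 3 + s * x)| ≤
      ∫ x in a..b, (6 * t * x) / (3 * t * x ^ 2 + s) ^ 2 := by
    rw [← Real.norm_eq_abs]
    apply intervalIntegral.norm_integral_le_of_norm_le hab
    · refine Filter.Eventually.of_forall fun x hx => ?_
      have hx0 : 0 ≤ x := ha.trans hx.1.le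
      rw [norm_mul, Real.norm_eq_abs, Real.norm_eq_abs, abs_div, abs_neg,
        abs_of_nonneg (by positivity : 0 ≤ 6 * t * x), abs_of_nonneg (sq_nonneg _)]
      exact mul_le_of_le_one_right (by positivity) (Real.abs_sin_le_one _)
    · have := c1.neg.intervalIntegrable (μ := volume)
      refine this.congr ?_
      intro x _
      simp [neg_div]
  have e4 : ∫ x in a..b, (6 * t * x) / (3 * t * x ^ 2 + s) ^ 2 =
      (3 * t * a ^ 2 + s)⁻¹ - (3 * t * b ^ 2 + s)⁻¹ := by
    have : ∫ x in a..b, (6 * t * x) / (3 * t * x ^ 2 + s) ^ 2 =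
      - ∫ x in a..b, -(6 * t * x) / (3 * t * x ^ 2 + s) ^ 2 := by
      rw [← intervalIntegral.integral_neg]
      congr 1; ext x; ring
    rw [this, e2]; ring
  rw [e1, key]
  rw [e4] at e3
  have ia := abs_le.1 (hinv a Set.left_mem_uIcc)
  have ib := abs_le.1 (hinv b Set.right_mem_uIcc)
  have f1 : |(3 * t * b ^ 2 + s)⁻¹ * Real.sin (t * b ^ 3 + s * b)| ≤ 1 / l := by
    rw [abs_mul]
    exact (mul_le_of_le_one_right (abs_nonneg _) (Real.abs_sin_le_one _)).trans (hinv b Set.right_mem_uIcc)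
  have f2 : |(3 * t * a ^ 2 + s)⁻¹ * Real.sin (t * a ^ 3 + s * a)| ≤ 1 / l := by
    rw [abs_mul]
    exact (mul_le_of_le_one_right (abs_nonneg _) (Real.abs_sin_le_one _)).trans (hinv a Set.left_mem_uIcc)
  have f3 := abs_le.1 f1
  have f4 := abs_le.1 f2
  have f5 := abs_le.1 e3
  have : 4 / l = 4 * (1 / l) := by ring
  rw [this, abs_le]
  constructor <;> linarith [f5.1, f5.2, f3.1, f3.2, f4.1, f4.2, ia.1, ia.2, ib.1, ib.2]

/-- Outside the set where the derivative of the phase is smaller than `l` in absolute value, `vdc1`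
applies; that set is contained in an interval whose length is the difference of the square roots. -/
lemma vdc2 (t s M l : ℝ) (ht : 0 < t) (hM : 0 ≤ M) (hl : 0 < l) :
    |∫ x in (0:ℝ)..M, Real.cos (t * x ^ 3 + s * x)| ≤
      8 / l + (√((-s + l) / (3 * t)) - √((-s - l) / (3 * t))) := by
  set u := √((-s - l) / (3 * t)) with hu
  set v := √((-s + l) / (3 * t)) with hv
  have h3 : 0 < 3 * t := by positivity
  have huv : u ≤ v := Real.sqrt_le_sqrt (by gcongr; linarith)
  have hu0 : 0 ≤ u := Real.sqrt_nonneg _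
  have ci : ∀ p q : ℝ, IntervalIntegrable (fun x : ℝ => Real.cos (t * x ^ 3 + s * x)) volume p q := by
    intro p q; apply Continuous.intervalIntegrable; fun_prop
  have hsplit : ∫ x in (0:ℝ)..M, Real.cos (t * x ^ 3 + s * x) =
      (∫ x in (0:ℝ)..(min u M), Real.cos (t * x ^ 3 + s * x)) +
      (∫ x in (min u M)..(min v M), Real.cos (t * x ^ 3 + s * x)) +
      (∫ x in (min v M)..M, Real.cos (t * x ^ 3 + s * x)) := by
    rw [intervalIntegral.integral_add_adjacent_intervals (ci _ _) (ci _ _),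
      intervalIntegral.integral_add_adjacent_intervals (ci _ _) (ci _ _)]
  have b1 : |∫ x in (0:ℝ)..(min u M), Real.cos (t * x ^ 3 + s * x)| ≤ 4 / l := by
    by_cases hneg : (-s - l) / (3 * t) ≤ 0
    · have : u = 0 := Real.sqrt_eq_zero_of_nonpos hneg
      rw [this, min_eq_left hM]; simp; positivity
    · push Not at hneg
      apply vdc1 t s _ _ l ht.le le_rfl (le_min hu0 hM) hl
      intro x hx
      have hxu : x ≤ u := hx.2.trans (min_le_left _ _)
      have : x ^ 2 ≤ (-s - l) / (3 * t) := by
        rw [← Real.sq_sqrt hneg.le]; exact pow_le_pow_left₀ hx.1 hxu 2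
      rw [le_div_iff₀ h3] at this
      rw [abs_of_nonpos (by linarith)]; linarith
  have b3 : |∫ x in (min v M)..M, Real.cos (t * x ^ 3 + s * x)| ≤ 4 / l := by
    rcases le_total M v with hMv | hMv
    · rw [min_eq_right hMv]; simp; positivity
    · rw [min_eq_left hMv]
      apply vdc1 t s _ _ l ht.le (hu0.trans huv) hMv hl
      intro x hx
      have : (-s + l) / (3 * t) ≤ x ^ 2 := Real.sqrt_le_left (hu0.trans (huv.trans hx.1)) |>.1 hx.1
      rw [div_le_iff₀ h3] at this
      rw [abs_of_nonneg (by linarith)]; linarith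
  have b2 : |∫ x in (min u M)..(min v M), Real.cos (t * x ^ 3 + s * x)| ≤ v - u := by
    have := intervalIntegral.norm_integral_le_of_norm_le_const (a := min u M) (b := min v M)
      (f := fun x : ℝ => Real.cos (t * x ^ 3 + s * x)) (C := 1)
      (fun x _ => by rw [Real.norm_eq_abs]; exact Real.abs_cos_le_one _)
    rw [Real.norm_eq_abs, one_mul] at this
    refine this.trans ?_
    rw [abs_of_nonneg (by simp only [sub_nonneg]; exact min_le_min_right _ huv)]
    rcases le_total u M with h1 | h1 <;> rcases le_total v M with h2 | h2 <;>
      simp only [min_eq_left, min_eq_right, h1, h2] <;> linarith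
  rw [hsplit]
  have := abs_add_three (∫ x in (0:ℝ)..(min u M), Real.cos (t * x ^ 3 + s * x))
    (∫ x in (min u M)..(min v M), Real.cos (t * x ^ 3 + s * x))
    (∫ x in (min v M)..M, Real.cos (t * x ^ 3 + s * x))
  have e : 8 / l = 4 / l + 4 / l := by ring
  linarith

lemma sqrt_sub_sqrt_le (p q : ℝ) (h : p ≤ q) : √q - √p ≤ √(q - p) := by
  rcases le_total p 0 with hp | hp
  · rw [Real.sqrt_eq_zero_of_nonpos hp, sub_zero]; exact Real.sqrt_le_sqrt (by linarith)
  · have hq := hp.trans h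
    rw [sub_le_iff_le_add, Real.sqrt_le_left (by positivity), add_sq,
      Real.sq_sqrt (by linarith), Real.sq_sqrt hp]
    have : 0 ≤ 2 * √(q - p) * √p := by positivity
    linarith

/-- Decay of order `-1/3` in the coefficient `k³` of the cubic term, uniform in `s`: `vdc2` with
`l = k`. -/
lemma airy_third (k s M : ℝ) (hk : 0 < k) (hM : 0 ≤ M) :
    |∫ x in (0:ℝ)..M, Real.cos (k ^ 3 * x ^ 3 + s * x)| ≤ 9 / k := by
  refine (vdc2 (k ^ 3) s M k (by positivity) hM hk).trans ?_
  have h1 := sqrt_sub_sqrt_le ((-s - k) / (3 * k ^ 3)) ((-s + k) / (3 * k ^ 3))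
    (by gcongr; linarith)
  have h2 : √((-s + k) / (3 * k ^ 3) - (-s - k) / (3 * k ^ 3)) ≤ 1 / k := by
    rw [Real.sqrt_le_left (by positivity)]
    have : (-s + k) / (3 * k ^ 3) - (-s - k) / (3 * k ^ 3) = (2 / 3) * (1 / k) ^ 2 := by
      field_simp; ring
    rw [this]
    nlinarith [sq_nonneg (1 / k)]
  have : 9 / k = 8 / k + 1 / k := by ring
  linarith

/-- Decay of order `-1/4` in `t|s|`. For `|s|³ < 16 t` this is weaker than the `-1/3` decay in `t`;
otherwise `vdc1` applies for `s > 0`, and `vdc2` with `l = q` for `s < 0`. -/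
lemma airy_quarter (t q s M : ℝ) (ht : 0 < t) (hq : 0 < q) (hM : 0 ≤ M)
    (hqs : q ^ 4 = t * |s|) :
    |∫ x in (0:ℝ)..M, Real.cos (t * x ^ 3 + s * x)| ≤ 18 / q := by
  have hs : 0 < |s| := by
    have : 0 < t * |s| := hqs ▸ (by positivity)
    exact pos_of_mul_pos_right this ht.le
  by_cases hcase : |s| ^ 3 < 16 * t
  · obtain ⟨k, hk, hkt⟩ : ∃ k : ℝ, 0 < k ∧ k ^ 3 = t :=
      ⟨t ^ ((1:ℝ) / 3), by positivity, by
        rw [← Real.rpow_natCast, ← Real.rpow_mul ht.le]; norm_num⟩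
    subst hkt
    refine (airy_third k s M hk hM).trans ?_
    have : q ≤ 2 * k := by
      have h12 : q ^ 12 ≤ (2 * k) ^ 12 := by
        have : q ^ 12 = (k ^ 3) ^ 3 * |s| ^ 3 := by
          rw [show q ^ 12 = (q ^ 4) ^ 3 by ring, hqs]; ring
        rw [this]
        calc (k ^ 3) ^ 3 * |s| ^ 3 ≤ (k ^ 3) ^ 3 * (16 * k ^ 3) := by gcongr
          _ ≤ (2 * k) ^ 12 := by
            have : (0:ℝ) ≤ k ^ 12 := by positivity
            nlinarith
      exact le_of_pow_le_pow_left₀ (by norm_num) (by positivity) h12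
    rw [div_le_div_iff₀ hk hq]; linarith
  · push Not at hcase
    have hq2 : q ≤ |s| / 2 := by
      have h4 : q ^ 4 ≤ (|s| / 2) ^ 4 := by
        rw [hqs, div_pow]
        have := mul_le_mul_of_nonneg_right hcase hs.le
        nlinarith
      exact le_of_pow_le_pow_left₀ (by norm_num) (by positivity) h4
    rcases le_total 0 s with h0 | h0
    · rw [abs_of_nonneg h0] at *
      refine (vdc1 t s 0 M s ht.le le_rfl hM hs ?_).trans ?_
      · intro x _
        rw [abs_of_nonneg (by positivity)]
        have : 0 ≤ 3 * t * x ^ 2 := by positivity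
        linarith
      · rw [div_le_div_iff₀ hs hq]; linarith
    · rw [abs_of_nonpos h0] at *
      refine (vdc2 t s M q ht hM hq).trans ?_
      set u := √((-s - q) / (3 * t)) with hu
      set v := √((-s + q) / (3 * t)) with hv
      set w := √((-s) / (3 * t)) with hw
      have hwv : w ≤ v := Real.sqrt_le_sqrt (by gcongr; linarith)
      have huv : u ≤ v := Real.sqrt_le_sqrt (by gcongr; linarith)
      have hw0 : 0 < w := Real.sqrt_pos.2 (by positivity)
      have hu0 : 0 ≤ u := Real.sqrt_nonneg _
      have hu2 : u ^ 2 = (-s - q) / (3 * t) := Real.sq_sqrt (div_nonneg (by linarith) (by positivity))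
      have hv2 : v ^ 2 = (-s + q) / (3 * t) := Real.sq_sqrt (div_nonneg (by linarith) (by positivity))
      have hw2 : w ^ 2 = (-s) / (3 * t) := Real.sq_sqrt (by positivity)
      have k1 : (v - u) * w ≤ 2 * q / (3 * t) := by
        have e : v ^ 2 - u ^ 2 = 2 * q / (3 * t) := by rw [hu2, hv2]; ring
        nlinarith
      have k2 : q ^ 2 ≤ 3 * t * w := by
        have : (q ^ 2) ^ 2 ≤ (3 * t * w) ^ 2 := by
          have e : (3 * t * w) ^ 2 = 3 * (t * -s) := by
            rw [mul_pow, hw2]; field_simp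
          rw [e, ← pow_mul, hqs]
          nlinarith [mul_pos ht hs]
        exact le_of_pow_le_pow_left₀ (by norm_num) (by positivity) this
      have k3 : v - u ≤ 2 / q := by
        rw [le_div_iff₀ hq]
        have h1 : (v - u) * w * (3 * t) ≤ 2 * q := by
          rwa [le_div_iff₀ (by positivity)] at k1
        have h2 : (v - u) * q ^ 2 ≤ (v - u) * (3 * t * w) :=
          mul_le_mul_of_nonneg_left k2 (by linarith)
        have h3 : ((v - u) * q) * q ≤ 2 * q := by nlinarith
        exact le_of_mul_le_mul_right h3 hq
      have : 18 / q = 8 / q + 2 / q + 8 / q := by ring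
      have : 0 < 8 / q := by positivity
      linarith

/-- A tent cutoff is an average of sharp cutoffs. -/
lemma tent_le (t s N D : ℝ) (hN : 0 < N)
    (h : ∀ M ∈ Set.Icc 0 N, |∫ x in (0:ℝ)..M, Real.cos (t * x ^ 3 + s * x)| ≤ D) :
    |∫ x in (0:ℝ)..N, (1 - x / N) * Real.cos (t * x ^ 3 + s * x)| ≤ D := by
  have cc : Continuous (fun x : ℝ => Real.cos (t * x ^ 3 + s * x)) := by fun_prop
  have d1 : ∀ x ∈ Set.uIcc 0 N, HasDerivAt (fun x : ℝ => 1 - x / N) (-(1 / N)) x := by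
    intro x _
    exact ((hasDerivAt_id' x).div_const N).const_sub 1
  have d2 : ∀ x ∈ Set.uIcc 0 N, HasDerivAt
      (fun M : ℝ => ∫ x in (0:ℝ)..M, Real.cos (t * x ^ 3 + s * x))
      (Real.cos (t * x ^ 3 + s * x)) x := by
    intro x _
    exact intervalIntegral.integral_hasDerivAt_right (cc.intervalIntegrable _ _)
      (cc.stronglyMeasurableAtFilter _ _) cc.continuousAt
  have key := intervalIntegral.integral_mul_deriv_eq_deriv_mul d1 d2
    (by simp) (cc.intervalIntegrable _ _)
  rw [key, intervalIntegral.integral_const_mul, div_self hN.ne', sub_self, zero_mul,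
    intervalIntegral.integral_same, mul_zero, sub_zero, zero_sub, neg_mul, neg_neg]
  have := intervalIntegral.norm_integral_le_of_norm_le_const (a := 0) (b := N)
      (f := fun M : ℝ => ∫ x in (0:ℝ)..M, Real.cos (t * x ^ 3 + s * x)) (C := D)
      (fun x hx => by
        rw [Real.norm_eq_abs]
        rw [Set.uIoc_of_le hN.le] at hx
        exact h x ⟨hx.1.le, hx.2⟩)
  rw [Real.norm_eq_abs, sub_zero, abs_of_pos hN] at this
  rw [abs_mul, abs_of_pos (by positivity : 0 < 1 / N)]
  calc 1 / N * _ ≤ 1 / N * (D * N) := by gcongr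
    _ = D := by field_simp

/-- Two integrations by parts in the non-stationary regime. -/
lemma tent_nonstat (t s N : ℝ) (hN : 0 < N) (hs : s ≠ 0) (h : 6 * |t| * N ^ 2 ≤ |s|) :
    |∫ x in (0:ℝ)..N, (1 - x / N) * Real.cos (t * x ^ 3 + s * x)| ≤ 100 / (N * s ^ 2) := by
  have hs' : 0 < |s| := abs_pos.2 hs
  set p := |s| with hp
  have hu : Set.uIcc 0 N = Set.Icc 0 N := Set.uIcc_of_le hN.le
  have hlow : ∀ x ∈ Set.uIcc 0 N, p / 2 ≤ |3 * t * x ^ 2 + s| := by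
    intro x hx
    rw [hu] at hx
    have h1 : |3 * t * x ^ 2| ≤ p / 2 := by
      rw [abs_mul, abs_mul, abs_of_nonneg (sq_nonneg x), abs_of_pos (by norm_num : (0:ℝ) < 3)]
      have : x ^ 2 ≤ N ^ 2 := pow_le_pow_left₀ hx.1 hx.2 2
      have := mul_le_mul_of_nonneg_left this (abs_nonneg t)
      linarith
    have h2 := abs_sub_abs_le_abs_sub s (-(3 * t * x ^ 2))
    rw [abs_neg, sub_neg_eq_add, add_comm s] at h2
    linarith
  have hne : ∀ x ∈ Set.uIcc 0 N, 3 * t * x ^ 2 + s ≠ 0 := by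
    intro x hx h0
    have := hlow x hx
    rw [h0, abs_zero] at this; linarith
  have hq : ∀ x ∈ Set.uIcc 0 N, |(3 * t * x ^ 2 + s)⁻¹| ≤ 2 / p := by
    intro x hx
    rw [abs_inv, show 2 / p = (p / 2)⁻¹ by rw [inv_div]]
    exact inv_anti₀ (by positivity) (hlow x hx)
  have dq : ∀ x ∈ Set.uIcc 0 N, HasDerivAt (fun x : ℝ => (3 * t * x ^ 2 + s)⁻¹)
      (-(6 * t * x) / (3 * t * x ^ 2 + s) ^ 2) x := fun x hx =>
    (hasDerivAt_quad t s x).inv (hne x hx)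
  set Q : ℝ → ℝ := fun x => (3 * t * x ^ 2 + s)⁻¹ with hQ
  have dq' : ∀ x ∈ Set.uIcc 0 N, HasDerivAt Q (-(6 * t * x) * Q x ^ 2) x := by
    intro x hx
    refine (dq x hx).congr_deriv ?_
    simp only [hQ, inv_pow, div_eq_mul_inv]
  -- `P` is the boundary term produced by two integrations by parts
  set P : ℝ → ℝ := fun x => (1 - x / N) * Q x * Real.sin (t * x ^ 3 + s * x) +
    (-(Q x ^ 2) / N - 6 * t * (x - x ^ 2 / N) * Q x ^ 3) * Real.cos (t * x ^ 3 + s * x) with hP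
  set R : ℝ → ℝ := fun x => 12 * t * x / N * Q x ^ 3 - 6 * t * (1 - 2 * x / N) * Q x ^ 3 +
    108 * t ^ 2 * x * (x - x ^ 2 / N) * Q x ^ 4 with hR
  have dP : ∀ x ∈ Set.uIcc 0 N, HasDerivAt P ((1 - x / N) * Real.cos (t * x ^ 3 + s * x) +
      R x * Real.cos (t * x ^ 3 + s * x)) x := by
    intro x hx
    have hQx : Q x * (3 * t * x ^ 2 + s) = 1 := inv_mul_cancel₀ (hne x hx)
    have hphi := hasDerivAt_cubic t s x
    have h1 : HasDerivAt (fun x : ℝ => 1 - x / N) (-(1 / N)) x :=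
      ((hasDerivAt_id' x).div_const N).const_sub 1
    have h2 : HasDerivAt (fun x : ℝ => x - x ^ 2 / N) (1 - 2 * x / N) x := by
      refine ((hasDerivAt_id' x).sub ((hasDerivAt_pow 2 x).div_const N)).congr_deriv ?_
      push_cast; ring
    have A := (h1.mul (dq' x hx)).mul hphi.sin
    have B := ((((dq' x hx).pow 2).neg.div_const N).sub
      ((h2.const_mul (6 * t)).mul ((dq' x hx).pow 3))).mul hphi.cos
    refine (A.add B).congr_deriv ?_
    simp only [hR, Pi.pow_apply, Pi.mul_apply, Pi.sub_apply, Pi.neg_apply]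
    push_cast
    set S := Real.sin (t * x ^ 3 + s * x)
    set C := Real.cos (t * x ^ 3 + s * x)
    set q := Q x
    set f := 3 * t * x ^ 2 + s
    linear_combination ((1 - x / N) * C + q / N * S + 6 * t * (x - x ^ 2 / N) * q ^ 2 * S) * hQx
  have cQ : ContinuousOn Q (Set.uIcc 0 N) := fun x hx =>
    (dq x hx).continuousAt.continuousWithinAt
  have cR : ContinuousOn R (Set.uIcc 0 N) := by
    simp only [hR]
    fun_prop
  have cc : ContinuousOn (fun x : ℝ => Real.cos (t * x ^ 3 + s * x)) (Set.uIcc 0 N) := by fun_prop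
  have ii1 : IntervalIntegrable (fun x => (1 - x / N) * Real.cos (t * x ^ 3 + s * x)) volume 0 N := by
    apply Continuous.intervalIntegrable; fun_prop
  have ii2 : IntervalIntegrable (fun x => R x * Real.cos (t * x ^ 3 + s * x)) volume 0 N :=
    (cR.mul cc).intervalIntegrable
  have key := intervalIntegral.integral_eq_sub_of_hasDerivAt dP (ii1.add ii2)
  rw [intervalIntegral.integral_add ii1 ii2] at key
  have hD : ∀ x ∈ Set.uIoc 0 N, ‖R x * Real.cos (t * x ^ 3 + s * x)‖ ≤ 72 / (N ^ 2 * p ^ 2) := by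
    intro x hx
    have hx' := Set.uIoc_subset_uIcc hx
    have hx2 : x ∈ Set.Icc 0 N := hu ▸ hx'
    have hxN : x / N ≤ 1 := (div_le_one hN).2 hx2.2
    have hx0 : 0 ≤ x / N := div_nonneg hx2.1 hN.le
    have hQx := hq x hx'
    have ht : |t| ≤ p / (6 * N ^ 2) := by rw [le_div_iff₀ (by positivity)]; linarith
    have hQ3 : |Q x| ^ 3 ≤ (2 / p) ^ 3 := pow_le_pow_left₀ (abs_nonneg _) hQx 3
    have hQ4 : |Q x| ^ 4 ≤ (2 / p) ^ 4 := pow_le_pow_left₀ (abs_nonneg _) hQx 4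
    rw [Real.norm_eq_abs, abs_mul]
    refine (mul_le_of_le_one_right (abs_nonneg _) (Real.abs_cos_le_one _)).trans ?_
    have t1 : |12 * t * x / N * Q x ^ 3| ≤ 16 / (N ^ 2 * p ^ 2) := by
      rw [mul_div_assoc, abs_mul, abs_mul, abs_mul, abs_pow, abs_of_nonneg hx0, abs_of_pos (by norm_num : (0:ℝ) < 12)]
      calc 12 * |t| * (x / N) * |Q x| ^ 3 ≤ 12 * (p / (6 * N ^ 2)) * 1 * (2 / p) ^ 3 := by gcongr
        _ = 16 / (N ^ 2 * p ^ 2) := by field_simp; norm_num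
    have t2 : |6 * t * (1 - 2 * x / N) * Q x ^ 3| ≤ 8 / (N ^ 2 * p ^ 2) := by
      have : |1 - 2 * x / N| ≤ 1 := by
        rw [mul_div_assoc, abs_le]; constructor <;> linarith
      rw [abs_mul, abs_mul, abs_mul, abs_pow, abs_of_pos (by norm_num : (0:ℝ) < 6)]
      calc 6 * |t| * |1 - 2 * x / N| * |Q x| ^ 3 ≤ 6 * (p / (6 * N ^ 2)) * 1 * (2 / p) ^ 3 := by gcongr
        _ = 8 / (N ^ 2 * p ^ 2) := by field_simp; norm_num
    have t3 : |108 * t ^ 2 * x * (x - x ^ 2 / N) * Q x ^ 4| ≤ 48 / (N ^ 2 * p ^ 2) := by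
      have hb : |x - x ^ 2 / N| ≤ N := by
        rw [show x - x ^ 2 / N = x * (1 - x / N) by ring, abs_mul, abs_of_nonneg hx2.1,
          abs_of_nonneg (by linarith : 0 ≤ 1 - x / N)]
        nlinarith [hx2.1, hx2.2]
      rw [abs_mul, abs_mul, abs_mul, abs_mul, abs_pow, abs_pow, abs_of_nonneg hx2.1,
        abs_of_pos (by norm_num : (0:ℝ) < 108)]
      calc 108 * |t| ^ 2 * x * |x - x ^ 2 / N| * |Q x| ^ 4
          ≤ 108 * (p / (6 * N ^ 2)) ^ 2 * N * N * (2 / p) ^ 4 := by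
            have := hx2.1
            have := hx2.2
            gcongr
        _ = 48 / (N ^ 2 * p ^ 2) := by field_simp; norm_num
    have := abs_add_three (12 * t * x / N * Q x ^ 3) (-(6 * t * (1 - 2 * x / N) * Q x ^ 3))
      (108 * t ^ 2 * x * (x - x ^ 2 / N) * Q x ^ 4)
    rw [abs_neg, ← sub_eq_add_neg] at this
    have e : 72 / (N ^ 2 * p ^ 2) = 16 / (N ^ 2 * p ^ 2) + 8 / (N ^ 2 * p ^ 2) + 48 / (N ^ 2 * p ^ 2) := by ring
    simp only [hR]
    linarith
  have hintg := intervalIntegral.norm_integral_le_of_norm_le_const hD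
  rw [Real.norm_eq_abs, sub_zero, abs_of_pos hN] at hintg
  have hbd : ∀ x ∈ Set.uIcc 0 N, ∀ y : ℝ, |-(Q x ^ 2) / N * Real.cos y| ≤ 4 / (N * p ^ 2) := by
    intro x hx y
    rw [abs_mul, abs_div, abs_neg, abs_pow, abs_of_pos hN]
    refine (mul_le_of_le_one_right (by positivity) (Real.abs_cos_le_one _)).trans ?_
    calc |Q x| ^ 2 / N ≤ (2 / p) ^ 2 / N := by gcongr; exact hq x hx
      _ = 4 / (N * p ^ 2) := by field_simp; norm_num
  have hPN : P N = -(Q N ^ 2) / N * Real.cos (t * N ^ 3 + s * N) := by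
    simp only [hP]; field_simp; ring
  have hP0 : P 0 = -(Q 0 ^ 2) / N * Real.cos (t * 0 ^ 3 + s * 0) := by
    simp only [hP]; simp
  have bN := hbd N Set.right_mem_uIcc (t * N ^ 3 + s * N)
  have b0 := hbd 0 Set.left_mem_uIcc (t * 0 ^ 3 + s * 0)
  rw [← hPN] at bN
  rw [← hP0] at b0
  have e1 : 72 / (N ^ 2 * p ^ 2) * N = 72 * (1 / (N * p ^ 2)) := by field_simp
  have e2 : 4 / (N * p ^ 2) = 4 * (1 / (N * p ^ 2)) := by ring
  have e3 : 100 / (N * s ^ 2) = 100 * (1 / (N * p ^ 2)) := by rw [hp, sq_abs]; ring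
  rw [e1] at hintg
  rw [e2] at bN b0
  rw [e3]
  have hpos : 0 < 1 / (N * p ^ 2) := by positivity
  rw [abs_le] at *
  constructor <;> linarith [hintg.1, hintg.2, bN.1, bN.2, b0.1, b0.2]

end ZK

/-! ### Tent-Airy integrals and the majorant of the frequency-`N` kernel -/

namespace ZK

/-- Half of the Fourier transform of the tent `(1 - |a| / N)₊` times the chirp `e^{i t a³}`. -/
def tentAiry (N t s : ℝ) : ℝ := ∫ x in (0:ℝ)..N, (1 - x / N) * Real.cos (t * x ^ 3 + s * x)

lemma tentAiry_neg (N t s : ℝ) : tentAiry N (-t) (-s) = tentAiry N t s := by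
  unfold tentAiry
  congr 1; ext x
  rw [show -t * x ^ 3 + -s * x = -(t * x ^ 3 + s * x) by ring, Real.cos_neg]

lemma tentAiry_triv (N t s : ℝ) (hN : 0 < N) : |tentAiry N t s| ≤ N := by
  have := intervalIntegral.norm_integral_le_of_norm_le_const (a := 0) (b := N)
      (f := fun x : ℝ => (1 - x / N) * Real.cos (t * x ^ 3 + s * x)) (C := 1)
      (fun x hx => by
        rw [Set.uIoc_of_le hN.le] at hx
        have h1 : x / N ≤ 1 := (div_le_one hN).2 hx.2
        have h0 : 0 ≤ x / N := div_nonneg hx.1.le hN.le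
        rw [norm_mul, Real.norm_eq_abs, Real.norm_eq_abs]
        refine mul_le_one₀ ?_ (abs_nonneg _) (Real.abs_cos_le_one _)
        rw [abs_le]; constructor <;> linarith)
  rwa [Real.norm_eq_abs, sub_zero, abs_of_pos hN, one_mul] at this

lemma tentAiry_third (N t s : ℝ) (hN : 0 < N) (ht : 0 < t) :
    |tentAiry N t s| ≤ 9 * t ^ (-(1:ℝ) / 3) := by
  have hk : (t ^ ((1:ℝ) / 3)) ^ 3 = t := by
    rw [← Real.rpow_natCast, ← Real.rpow_mul ht.le]; norm_num
  have e : 9 * t ^ (-(1:ℝ) / 3) = 9 / t ^ ((1:ℝ) / 3) := by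
    rw [neg_div, Real.rpow_neg ht.le]; rfl
  rw [e]
  refine tent_le t s N _ hN fun M hM => ?_
  have := airy_third (t ^ ((1:ℝ) / 3)) s M (by positivity) hM.1
  rwa [hk] at this

lemma tentAiry_quarter (N t s : ℝ) (hN : 0 < N) (ht : 0 < t) (hs : s ≠ 0) :
    |tentAiry N t s| ≤ 18 * (t * |s|) ^ (-(1:ℝ) / 4) := by
  have hs' : 0 < |s| := abs_pos.2 hs
  have hts : 0 < t * |s| := by positivity
  have e : 18 * (t * |s|) ^ (-(1:ℝ) / 4) = 18 / (t * |s|) ^ ((1:ℝ) / 4) := by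
    rw [neg_div, Real.rpow_neg hts.le]; rfl
  rw [e]
  refine tent_le t s N _ hN fun M hM => ?_
  refine airy_quarter t _ s M ht (by positivity) hM.1 ?_
  rw [← Real.rpow_natCast, ← Real.rpow_mul hts.le]; norm_num

/-- Majorant of the frequency-`N` kernel, uniform in time and in the second variable. -/
def majH (N X : ℝ) : ℝ :=
  (Set.Icc (-(24 * N ^ 2)) (24 * N ^ 2)).indicator
    (fun X => 972 * N ^ ((7:ℝ) / 6) * |X| ^ (-(5:ℝ) / 6)) X +
  100 * min (N ^ 2) ((X ^ 2)⁻¹)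

/-- In the regime `6|t|N² ≤ |X|` the second phase is non-stationary. Otherwise the `-1/3` decay in
`t` and the `-1/4` decay in `t|s₂|` are combined, and `t > |X|/(6N²)` removes the dependence on `t`. -/
lemma tentAiry_mul_le_aux (N t s₁ s₂ X : ℝ) (hN : 0 < N) (ht : |t| ≤ 4) (hX : X ≠ 0)
    (h2 : |X| ≤ |s₂|) : |tentAiry N t s₁ * tentAiry N t s₂| ≤ majH N X := by
  -- Both factors are invariant under `(t, s₁, s₂) ↦ (-t, -s₁, -s₂)`.
  wlog htp : 0 ≤ t generalizing t s₁ s₂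
  · have := this (-t) (-s₁) (-s₂) (by rwa [abs_neg]) (by rwa [abs_neg]) (by linarith)
    rwa [tentAiry_neg, tentAiry_neg] at this
  have hX' : 0 < |X| := abs_pos.2 hX
  have hs2 : 0 < |s₂| := hX'.trans_le h2
  rw [abs_of_nonneg htp] at ht
  rw [abs_mul]
  have hind : 0 ≤ (Set.Icc (-(24 * N ^ 2)) (24 * N ^ 2)).indicator
    (fun X => 972 * N ^ ((7:ℝ) / 6) * |X| ^ (-(5:ℝ) / 6)) X :=
    Set.indicator_nonneg (fun _ _ => by positivity) _
  by_cases hc : 6 * t * N ^ 2 ≤ |X|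
  · have a2 : |tentAiry N t s₂| ≤ 100 / (N * X ^ 2) := by
      refine (tent_nonstat t s₂ N hN (abs_pos.1 hs2) ?_).trans ?_
      · rw [abs_of_nonneg htp]; linarith
      · have : X ^ 2 ≤ s₂ ^ 2 := sq_le_sq.2 h2
        gcongr
    have hle1 : |tentAiry N t s₁| * |tentAiry N t s₂| ≤ 100 * (X ^ 2)⁻¹ := by
      calc _ ≤ N * (100 / (N * X ^ 2)) := by
            gcongr; exact tentAiry_triv N t s₁ hN
        _ = _ := by field_simp
    have hle2 : |tentAiry N t s₁| * |tentAiry N t s₂| ≤ 100 * N ^ 2 := by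
      calc _ ≤ N * N := by
            gcongr
            · exact tentAiry_triv N t s₁ hN
            · exact tentAiry_triv N t s₂ hN
        _ ≤ _ := by nlinarith
    have : |tentAiry N t s₁| * |tentAiry N t s₂| ≤ 100 * min (N ^ 2) ((X ^ 2)⁻¹) := by
      rw [mul_min_of_nonneg _ _ (by norm_num)]
      exact le_min hle2 hle1
    unfold majH; linarith
  · push Not at hc
    have ht0 : 0 < t := by
      by_contra h
      have : t = 0 := le_antisymm (not_lt.1 h) htp
      rw [this] at hc; simp at hc; linarith
    have hXN : |X| ≤ 24 * N ^ 2 := by nlinarith [sq_nonneg N]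
    have hmem : X ∈ Set.Icc (-(24 * N ^ 2)) (24 * N ^ 2) := abs_le.1 hXN
    have hmin : 0 ≤ 100 * min (N ^ 2) ((X ^ 2)⁻¹) := by positivity
    have a1 := tentAiry_third N t s₁ hN ht0
    have a2 := tentAiry_quarter N t s₂ hN ht0 (abs_pos.1 hs2)
    have a3 : (t * |s₂|) ^ (-(1:ℝ) / 4) ≤ (t * |X|) ^ (-(1:ℝ) / 4) :=
      Real.rpow_le_rpow_of_nonpos (by positivity) (by gcongr) (by norm_num)
    -- Here `t > |X| / (6 N²)`, and `7/12 = 1/3 + 1/4` is the total power of `t`.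
    have a4 : t ^ (-(7:ℝ) / 12) ≤ 6 * (|X| ^ (-(7:ℝ) / 12) * N ^ ((7:ℝ) / 6)) := by
      have h1 : |X| / (6 * N ^ 2) ≤ t := by
        rw [div_le_iff₀ (by positivity)]; linarith
      calc t ^ (-(7:ℝ) / 12) ≤ (|X| / (6 * N ^ 2)) ^ (-(7:ℝ) / 12) :=
            Real.rpow_le_rpow_of_nonpos (by positivity) h1 (by norm_num)
        _ = 6 ^ ((7:ℝ) / 12) * (|X| ^ (-(7:ℝ) / 12) * N ^ ((7:ℝ) / 6)) := by
            rw [Real.div_rpow hX'.le (by positivity), Real.mul_rpow (by norm_num) (by positivity),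
              ← Real.rpow_natCast N 2, ← Real.rpow_mul hN.le, div_eq_mul_inv, mul_inv,
              ← Real.rpow_neg (by norm_num), ← Real.rpow_neg hN.le]
            norm_num
            ring
        _ ≤ _ := by
            gcongr
            calc (6:ℝ) ^ ((7:ℝ) / 12) ≤ 6 ^ (1:ℝ) :=
                  Real.rpow_le_rpow_of_exponent_le (by norm_num) (by norm_num)
              _ = 6 := Real.rpow_one _
    unfold majH
    rw [Set.indicator_of_mem hmem]
    refine le_add_of_le_of_nonneg ?_ hmin
    calc |tentAiry N t s₁| * |tentAiry N t s₂|
        ≤ (9 * t ^ (-(1:ℝ) / 3)) * (18 * (t * |X|) ^ (-(1:ℝ) / 4)) := by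
          gcongr; exact a2.trans (by gcongr)
      _ = 162 * t ^ (-(7:ℝ) / 12) * |X| ^ (-(1:ℝ) / 4) := by
          rw [Real.mul_rpow ht0.le hX'.le]
          rw [show -(7:ℝ) / 12 = -(1:ℝ) / 3 + -(1:ℝ) / 4 by norm_num, Real.rpow_add ht0]
          ring
      _ ≤ 162 * (6 * (|X| ^ (-(7:ℝ) / 12) * N ^ ((7:ℝ) / 6))) * |X| ^ (-(1:ℝ) / 4) := by gcongr
      _ = _ := by
          rw [show -(5:ℝ) / 6 = -(7:ℝ) / 12 + -(1:ℝ) / 4 by norm_num, Real.rpow_add hX']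
          ring

/-- One of `|s₁|`, `|s₂|` is at least `|X|`, and the roles of the two factors are symmetric. -/
lemma tentAiry_mul_le (N t s₁ s₂ X : ℝ) (hN : 0 < N) (ht : |t| ≤ 4) (hX : X ≠ 0)
    (h : s₁ + s₂ = 2 * X) : |tentAiry N t s₁ * tentAiry N t s₂| ≤ majH N X := by
  rcases le_total |X| |s₂| with h2 | h2
  · exact tentAiry_mul_le_aux N t s₁ s₂ X hN ht hX h2
  · rw [mul_comm]
    refine tentAiry_mul_le_aux N t s₂ s₁ X hN ht hX ?_
    have h3 := abs_add_le s₁ s₂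
    rw [h, abs_mul, abs_two] at h3
    linarith

lemma majH_nonneg (N X : ℝ) (hN : 0 < N) : 0 ≤ majH N X := by
  unfold majH
  have : 0 ≤ (Set.Icc (-(24 * N ^ 2)) (24 * N ^ 2)).indicator
    (fun X => 972 * N ^ ((7:ℝ) / 6) * |X| ^ (-(5:ℝ) / 6)) X :=
    Set.indicator_nonneg (fun _ _ => by positivity) _
  have : 0 ≤ 100 * min (N ^ 2) ((X ^ 2)⁻¹) := by positivity
  positivity

lemma measurable_majH (N : ℝ) : Measurable (majH N) := by
  unfold majH
  refine Measurable.add (Measurable.indicator (by fun_prop) measurableSet_Icc) ?_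
  fun_prop

lemma lintegral_even (f : ℝ → ℝ≥0∞) (hf : ∀ x, f (-x) = f x) :
    ∫⁻ x, f x = 2 * ∫⁻ x in Set.Ioi (0:ℝ), f x := by
  have h1 : ∫⁻ x in Set.Iio (0:ℝ), f x = ∫⁻ x in Set.Ioi (0:ℝ), f x := by
    have e := (Measure.measurePreserving_neg (volume : Measure ℝ)).setLIntegral_comp_preimage_emb
      (MeasurableEquiv.neg ℝ).measurableEmbedding f (Set.Iio 0)
    rw [← e]
    have : (Neg.neg ⁻¹' Set.Iio (0:ℝ)) = Set.Ioi 0 := by ext x; simp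
    rw [this]
    simp only [hf]
  rw [← lintegral_add_compl f (measurableSet_Ioi : MeasurableSet (Set.Ioi (0:ℝ)))]
  rw [Set.compl_Ioi, setLIntegral_congr (Iio_ae_eq_Iic (a := (0:ℝ))).symm, h1, two_mul]

/-- The two parts of the majorant have integrals `O(N^{7/6} (N²)^{1/6}) = O(N^{3/2})` and `O(N)`. -/
lemma lintegral_majH (N : ℝ) (hN : 1 ≤ N) :
    ∫⁻ X, ENNReal.ofReal (majH N X) ≤ ENNReal.ofReal (50000 * N ^ ((3:ℝ) / 2)) := by
  have hN0 : 0 < N := by linarith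
  have heven : ∀ X, majH N (-X) = majH N X := by
    intro X
    unfold majH
    simp only [Set.indicator, Set.mem_Icc, abs_neg, neg_sq]
    congr 2
    ext1
    constructor <;> rintro ⟨a, b⟩ <;> constructor <;> linarith
  rw [lintegral_even _ (fun x => by rw [heven])]
  have hbound : ∀ X ∈ Set.Ioi (0:ℝ), ENNReal.ofReal (majH N X) ≤
      (Set.Ioc 0 (24 * N ^ 2)).indicator
        (fun X => ENNReal.ofReal (972 * N ^ ((7:ℝ) / 6) * X ^ (-(5:ℝ) / 6))) X +
      ((Set.Ioc 0 N⁻¹).indicator (fun _ => ENNReal.ofReal (100 * N ^ 2)) X +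
       (Set.Ioi N⁻¹).indicator (fun X => ENNReal.ofReal (100 * X ^ (-(2:ℝ)))) X) := by
    intro X hX
    have hX' : 0 < X := hX
    unfold majH
    refine ENNReal.ofReal_add_le.trans ?_
    refine add_le_add ?_ ?_
    · by_cases h : X ≤ 24 * N ^ 2
      · have hm1 : X ∈ Set.Icc (-(24 * N ^ 2)) (24 * N ^ 2) := ⟨by nlinarith, h⟩
        have hm2 : X ∈ Set.Ioc 0 (24 * N ^ 2) := ⟨hX', h⟩
        rw [Set.indicator_of_mem hm1, Set.indicator_of_mem hm2, abs_of_pos hX']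
      · rw [Set.indicator_of_notMem (fun h' => h h'.2)]; simp
    -- The minimum of `N²` and `X⁻²` changes regime at `X = 1/N`.
    · by_cases h : X ≤ N⁻¹
      · have hm1 : X ∈ Set.Ioc 0 N⁻¹ := ⟨hX', h⟩
        rw [Set.indicator_of_mem hm1]
        refine le_add_right (ENNReal.ofReal_le_ofReal ?_)
        gcongr; exact min_le_left _ _
      · push Not at h
        rw [Set.indicator_of_mem (show X ∈ Set.Ioi N⁻¹ from h) ]
        refine le_add_left (ENNReal.ofReal_le_ofReal ?_)
        rw [Real.rpow_neg hX'.le, Real.rpow_two]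
        gcongr; exact min_le_right _ _
  have m1 : Measurable ((Set.Ioc 0 (24 * N ^ 2)).indicator
        (fun X : ℝ => ENNReal.ofReal (972 * N ^ ((7:ℝ) / 6) * X ^ (-(5:ℝ) / 6)))) :=
    Measurable.indicator (by fun_prop) measurableSet_Ioc
  have m2 : Measurable ((Set.Ioc 0 N⁻¹).indicator (fun _ : ℝ => ENNReal.ofReal (100 * N ^ 2))) :=
    Measurable.indicator (by fun_prop) measurableSet_Ioc
  have i1 : ∫⁻ X in Set.Ioi 0, (Set.Ioc 0 (24 * N ^ 2)).indicator
        (fun X : ℝ => ENNReal.ofReal (972 * N ^ ((7:ℝ) / 6) * X ^ (-(5:ℝ) / 6))) X ≤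
      ENNReal.ofReal (11664 * N ^ ((3:ℝ)/2)) := by
    rw [lintegral_indicator measurableSet_Ioc, Measure.restrict_restrict measurableSet_Ioc,
      Set.inter_eq_left.2 (fun x hx => hx.1)]
    have hintg : IntervalIntegrable (fun X : ℝ => X ^ (-(5:ℝ) / 6)) volume 0 (24 * N ^ 2) :=
      intervalIntegral.intervalIntegrable_rpow' (by norm_num)
    rw [intervalIntegrable_iff_integrableOn_Ioc_of_le (by positivity)] at hintg
    rw [← ofReal_integral_eq_lintegral_ofReal (hintg.const_mul _)
      ((ae_restrict_iff' measurableSet_Ioc).2 (Filter.Eventually.of_forall fun x hx => by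
        have := hx.1
        simp only [Pi.zero_apply]
        positivity))]
    apply ENNReal.ofReal_le_ofReal
    rw [integral_const_mul, ← intervalIntegral.integral_of_le (by positivity),
      integral_rpow (Or.inl (by norm_num))]
    norm_num
    have e1 : (24 * N ^ 2) ^ ((1:ℝ) / 6) = 24 ^ ((1:ℝ) / 6) * N ^ ((1:ℝ) / 3) := by
      rw [Real.mul_rpow (by norm_num) (by positivity), ← Real.rpow_natCast N 2,
        ← Real.rpow_mul hN0.le]; norm_num
    have e2 : (24:ℝ) ^ ((1:ℝ) / 6) ≤ 2 := by
      have : (24:ℝ) ^ ((1:ℝ) / 6) ≤ 64 ^ ((1:ℝ) / 6) :=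
        Real.rpow_le_rpow (by norm_num) (by norm_num) (by norm_num)
      refine this.trans (le_of_eq ?_)
      rw [show (64:ℝ) = 2 ^ (6:ℝ) by norm_num, ← Real.rpow_mul (by norm_num)]; norm_num
    rw [e1, show (3:ℝ) / 2 = 7 / 6 + 1 / 3 by norm_num, Real.rpow_add hN0]
    have : 0 ≤ N ^ ((7:ℝ) / 6) * N ^ ((1:ℝ) / 3) := by positivity
    nlinarith
  have hNN : N ≤ N ^ ((3:ℝ) / 2) := by
    calc N = N ^ (1:ℝ) := (Real.rpow_one N).symm
      _ ≤ _ := Real.rpow_le_rpow_of_exponent_le hN (by norm_num)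
  have i2 : ∫⁻ X in Set.Ioi 0, (Set.Ioc 0 N⁻¹).indicator (fun _ : ℝ => ENNReal.ofReal (100 * N ^ 2)) X
      ≤ ENNReal.ofReal (100 * N ^ ((3:ℝ)/2)) := by
    rw [lintegral_indicator measurableSet_Ioc, Measure.restrict_restrict measurableSet_Ioc,
      Set.inter_eq_left.2 (fun x hx => hx.1), setLIntegral_const, Real.volume_Ioc, sub_zero,
      ← ENNReal.ofReal_mul (by positivity)]
    apply ENNReal.ofReal_le_ofReal
    have : 100 * N ^ 2 * N⁻¹ = 100 * N := by field_simp
    rw [this]; linarith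
  have i3 : ∫⁻ X in Set.Ioi 0, (Set.Ioi N⁻¹).indicator (fun X : ℝ => ENNReal.ofReal (100 * X ^ (-(2:ℝ)))) X
      ≤ ENNReal.ofReal (100 * N ^ ((3:ℝ)/2)) := by
    have hNi : 0 < N⁻¹ := by positivity
    have hsub : Set.Ioi N⁻¹ ⊆ Set.Ioi 0 := Set.Ioi_subset_Ioi hNi.le
    rw [lintegral_indicator measurableSet_Ioi, Measure.restrict_restrict measurableSet_Ioi,
      Set.inter_eq_left.2 hsub]
    have hintg : IntegrableOn (fun X : ℝ => X ^ (-(2:ℝ))) (Set.Ioi N⁻¹) :=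
      integrableOn_Ioi_rpow_of_lt (by norm_num) hNi
    rw [← ofReal_integral_eq_lintegral_ofReal (hintg.const_mul _)
      ((ae_restrict_iff' measurableSet_Ioi).2 (Filter.Eventually.of_forall fun x hx => by
        have : 0 < x := hNi.trans hx
        simp only [Pi.zero_apply]
        positivity))]
    apply ENNReal.ofReal_le_ofReal
    rw [integral_const_mul, integral_Ioi_rpow_of_lt (by norm_num) hNi]
    norm_num
    rw [Real.rpow_neg_one, inv_inv]; exact hNN
  calc 2 * ∫⁻ X in Set.Ioi 0, ENNReal.ofReal (majH N X)
      ≤ 2 * (ENNReal.ofReal (11664 * N ^ ((3:ℝ)/2)) + (ENNReal.ofReal (100 * N ^ ((3:ℝ)/2)) +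
          ENNReal.ofReal (100 * N ^ ((3:ℝ)/2)))) := by
        gcongr
        refine (setLIntegral_mono' measurableSet_Ioi hbound).trans ?_
        rw [lintegral_add_left m1, lintegral_add_left m2]
        gcongr
    _ ≤ _ := by
        have : (0:ℝ) ≤ N ^ ((3:ℝ)/2) := by positivity
        rw [← ENNReal.ofReal_add (by positivity) (by positivity),
          ← ENNReal.ofReal_add (by positivity) (by positivity),
          show (2:ℝ≥0∞) = ENNReal.ofReal 2 by simp, ← ENNReal.ofReal_mul (by norm_num)]
        apply ENNReal.ofReal_le_ofReal
        nlinarith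

end ZK

/-! ### `TT*` and the Schur test -/

namespace ZK

/-- The unimodular number `e^{iθ}`. -/
def ee (θ : ℝ) : ℂ := Complex.exp ((θ : ℂ) * Complex.I)

lemma norm_ee (θ : ℝ) : ‖ee θ‖ = 1 := Complex.norm_exp_ofReal_mul_I θ

lemma ee_add (a b : ℝ) : ee (a + b) = ee a * ee b := by
  unfold ee; rw [← Complex.exp_add]; push_cast; ring_nf

lemma conj_ee (a : ℝ) : (starRingEnd ℂ) (ee a) = ee (-a) := by
  unfold ee; rw [← Complex.exp_conj]; simp

lemma continuous_ee : Continuous ee := by unfold ee; fun_prop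

lemma measurable_ee : Measurable ee := continuous_ee.measurable

lemma lintegral_comp_affine (f : ℝ → ℝ≥0∞) (hf : Measurable f) (k b : ℝ) (hk : k ≠ 0) :
    ∫⁻ x, f x = ENNReal.ofReal |k| * ∫⁻ x, f (k * x + b) := by
  conv_lhs => rw [← lintegral_add_right_eq_self f b]
  conv_lhs => rw [← Real.smul_map_volume_mul_left hk]
  rw [lintegral_smul_measure, lintegral_map (by fun_prop) (by fun_prop)]
  rfl

/-- The linear change of variables that separates the symbol:
`ξ(ξ² + η²) = 4(a³ + b³)` when `ξ = a + b` and `η = √3 (a - b)`. -/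
lemma lintegral_rotate (F : ℝ → ℝ → ℝ≥0∞) (hF : Measurable (Function.uncurry F)) :
    ∫⁻ ξ, ∫⁻ η, F ξ η =
      ENNReal.ofReal (2 * √3) * ∫⁻ a, ∫⁻ b, F (a + b) (√3 * (a - b)) := by
  have h3 : (0:ℝ) < √3 := by positivity
  calc ∫⁻ ξ, ∫⁻ η, F ξ η
      = ∫⁻ ξ, ENNReal.ofReal (2 * √3) * ∫⁻ a, F ξ (2 * √3 * a + -(√3 * ξ)) := by
        congr 1; ext ξ
        have := lintegral_comp_affine (F ξ) (hF.comp (by fun_prop : Measurable fun η => (ξ, η)))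
          (2 * √3) (-(√3 * ξ)) (by positivity)
        rwa [abs_of_pos (by positivity)] at this
    _ = ENNReal.ofReal (2 * √3) * ∫⁻ ξ, ∫⁻ a, F ξ (2 * √3 * a + -(√3 * ξ)) := by
        rw [lintegral_const_mul' _ _ ENNReal.ofReal_ne_top]
    _ = ENNReal.ofReal (2 * √3) * ∫⁻ a, ∫⁻ ξ, F ξ (2 * √3 * a + -(√3 * ξ)) := by
        rw [lintegral_lintegral_swap]
        exact (hF.comp (by fun_prop :
          Measurable fun z : ℝ × ℝ => (z.1, 2 * √3 * z.2 + -(√3 * z.1)))).aemeasurable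
    _ = _ := by
        congr 1; congr 1; ext a
        rw [← lintegral_add_left_eq_self (fun ξ => F ξ (2 * √3 * a + -(√3 * ξ))) a]
        congr 1; ext b; congr 1; ring

/-- `TT*` expansion of the weighted square norm of `z ↦ ∫ c(x) e(x,z) dx`. -/
lemma tt_star {α β : Type*} [MeasurableSpace α] [MeasurableSpace β] (l : Measure α)
    (ν : Measure β) [SFinite l] [SFinite ν] (c : α → ℂ) (hc : Integrable c l)
    (e : α → β → ℂ) (he : Measurable (Function.uncurry e)) (he1 : ∀ x z, ‖e x z‖ ≤ 1)
    (w : β → ℝ) (hw0 : ∀ᵐ z ∂ν, 0 ≤ w z) (hw : Integrable w ν) (K : α → α → ℝ≥0∞)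
    (hK : ∀ x, ∀ᵐ x' ∂l, ‖∫ z, (w z : ℂ) * (e x z * (starRingEnd ℂ) (e x' z)) ∂ν‖ₑ ≤ K x x') :
    ∫⁻ z, ENNReal.ofReal (w z) * ‖∫ x, c x * e x z ∂l‖ₑ ^ 2 ∂ν ≤
      ∫⁻ x, ∫⁻ x', ‖c x‖ₑ * ‖c x'‖ₑ * K x x' ∂l ∂l := by
  set C : β → ℂ := fun z => ∫ x, c x * e x z ∂l with hC
  have hCm : AEStronglyMeasurable C ν := by
    have : AEStronglyMeasurable (fun q : β × α => c q.2 * e q.2 q.1) (ν.prod l) :=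
      (hc.1.comp_snd).mul (he.comp measurable_swap).aestronglyMeasurable
    exact this.integral_prod_right'
  have hCb : ∀ z, ‖C z‖ ≤ ∫ x, ‖c x‖ ∂l := fun z => by
    refine norm_integral_le_of_norm_le hc.norm (Filter.Eventually.of_forall fun x => ?_)
    rw [norm_mul]
    exact mul_le_of_le_one_right (norm_nonneg _) (he1 x z)
  have hint3 : Integrable (fun q : β × (α × α) => (w q.1 : ℂ) *
      ((c q.2.1 * e q.2.1 q.1) * (starRingEnd ℂ) (c q.2.2 * e q.2.2 q.1))) (ν.prod (l.prod l)) := by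
    have hb : Integrable (fun q : β × (α × α) => (w q.1) * (‖c q.2.1‖ * ‖c q.2.2‖))
        (ν.prod (l.prod l)) := hw.mul_prod (hc.norm.mul_prod hc.norm)
    refine hb.norm.mono' ?_ (Filter.Eventually.of_forall fun q => ?_)
    · have m1 : AEStronglyMeasurable (fun q : β × (α × α) => (w q.1 : ℂ)) (ν.prod (l.prod l)) :=
        (Complex.continuous_ofReal.comp_aestronglyMeasurable hw.1).comp_fst
      have m2 : AEStronglyMeasurable (fun q : β × (α × α) => c q.2.1) (ν.prod (l.prod l)) :=
        (hc.1.comp_fst (ν := l)).comp_snd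
      have m3 : AEStronglyMeasurable (fun q : β × (α × α) => c q.2.2) (ν.prod (l.prod l)) :=
        (hc.1.comp_snd (μ := l)).comp_snd
      have m4 : AEStronglyMeasurable (fun q : β × (α × α) => e q.2.1 q.1) (ν.prod (l.prod l)) :=
        (he.comp (by fun_prop : Measurable fun q : β × (α × α) => (q.2.1, q.1))).aestronglyMeasurable
      have m5 : AEStronglyMeasurable (fun q : β × (α × α) => e q.2.2 q.1) (ν.prod (l.prod l)) :=
        (he.comp (by fun_prop : Measurable fun q : β × (α × α) => (q.2.2, q.1))).aestronglyMeasurable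
      exact m1.mul ((m2.mul m4).mul (Complex.continuous_conj.comp_aestronglyMeasurable (m3.mul m5)))
    · simp only [norm_mul, RCLike.norm_conj, Complex.norm_real, norm_norm]
      gcongr
      · exact mul_le_of_le_one_right (norm_nonneg _) (he1 _ _)
      · exact mul_le_of_le_one_right (norm_nonneg _) (he1 _ _)
  have key : ∀ z, (w z : ℂ) * (C z * (starRingEnd ℂ) (C z)) =
      ∫ q : α × α, (w z : ℂ) * ((c q.1 * e q.1 z) * (starRingEnd ℂ) (c q.2 * e q.2 z)) ∂(l.prod l) := by
    intro z
    rw [integral_const_mul, integral_prod_mul (fun x => c x * e x z)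
      (fun x => (starRingEnd ℂ) (c x * e x z)), integral_conj]
  have hwC : Integrable (fun z => w z * ‖C z‖ ^ 2) ν := by
    refine hw.mul_bdd (c := (∫ x, ‖c x‖ ∂l) ^ 2) (hCm.norm.pow 2)
      (Filter.Eventually.of_forall fun z => ?_)
    rw [norm_pow, norm_norm]
    have := hCb z
    gcongr
  have e1 : ∫⁻ z, ENNReal.ofReal (w z) * ‖C z‖ₑ ^ 2 ∂ν =
      ENNReal.ofReal (∫ z, w z * ‖C z‖ ^ 2 ∂ν) := by
    rw [ofReal_integral_eq_lintegral_ofReal hwC]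
    · refine lintegral_congr_ae ?_
      filter_upwards [hw0] with z hz
      rw [ENNReal.ofReal_mul hz, ENNReal.ofReal_pow (norm_nonneg _), ofReal_norm]
    · filter_upwards [hw0] with z hz
      exact mul_nonneg hz (sq_nonneg _)
  have e2 : ((∫ z, w z * ‖C z‖ ^ 2 ∂ν : ℝ) : ℂ) =
      ∫ q : α × α, ∫ z, (w z : ℂ) * ((c q.1 * e q.1 z) * (starRingEnd ℂ) (c q.2 * e q.2 z)) ∂ν
        ∂(l.prod l) := by
    rw [← integral_integral_swap hint3, ← integral_complex_ofReal]
    congr 1; ext z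
    rw [← key, Complex.mul_conj, Complex.normSq_eq_norm_sq]; push_cast; rfl
  rw [e1]
  calc ENNReal.ofReal (∫ z, w z * ‖C z‖ ^ 2 ∂ν)
      ≤ ‖((∫ z, w z * ‖C z‖ ^ 2 ∂ν : ℝ) : ℂ)‖ₑ := by
        rw [← ofReal_norm, Complex.norm_real]
        exact ENNReal.ofReal_le_ofReal (le_abs_self _)
    _ ≤ ∫⁻ q : α × α, ‖∫ z, (w z : ℂ) * ((c q.1 * e q.1 z) *
          (starRingEnd ℂ) (c q.2 * e q.2 z)) ∂ν‖ₑ ∂(l.prod l) := by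
        rw [e2]; exact enorm_integral_le_lintegral_enorm _
    _ ≤ ∫⁻ x, ∫⁻ x', ‖∫ z, (w z : ℂ) * ((c x * e x z) *
          (starRingEnd ℂ) (c x' * e x' z)) ∂ν‖ₑ ∂l ∂l :=
        lintegral_prod_le _
    _ ≤ _ := by
        refine lintegral_mono fun x => lintegral_mono_ae ?_
        filter_upwards [hK x] with x' hx'
        have : (∫ z, (w z : ℂ) * ((c x * e x z) * (starRingEnd ℂ) (c x' * e x' z)) ∂ν) =
            (c x * (starRingEnd ℂ) (c x')) *
              ∫ z, (w z : ℂ) * (e x z * (starRingEnd ℂ) (e x' z)) ∂ν := by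
          rw [← integral_const_mul]
          congr 1; ext z; rw [map_mul]; ring
        rw [this, enorm_mul, enorm_mul]
        gcongr
        rw [RCLike.enorm_conj]

lemma enn_two_mul_le (a b : ℝ≥0∞) : 2 * (a * b) ≤ a ^ 2 + b ^ 2 := by
  rcases eq_or_ne a ⊤ with rfl | ha
  · simp
  rcases eq_or_ne b ⊤ with rfl | hb
  · simp
  lift a to ℝ≥0 using ha
  lift b to ℝ≥0 using hb
  norm_cast
  have := two_mul_le_add_sq a b
  rwa [mul_assoc] at this

/-- Schur test for a convolution kernel. -/
lemma schur_conv (f κ : ℝ → ℝ≥0∞) (hf : Measurable f) (hκ : Measurable κ)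
    (he : ∀ x, κ (-x) = κ x) :
    ∫⁻ x, ∫⁻ x', f x * f x' * κ (x - x') ≤ (∫⁻ x, κ x) * ∫⁻ x, f x ^ 2 := by
  have h1 : ∫⁻ x, ∫⁻ x', f x ^ 2 * κ (x - x') = (∫⁻ x, κ x) * ∫⁻ x, f x ^ 2 := by
    rw [mul_comm, ← lintegral_mul_const _ (by fun_prop)]
    congr 1; ext x
    rw [lintegral_const_mul _ (by fun_prop), lintegral_sub_left_eq_self κ x]
  have h2 : ∫⁻ x, ∫⁻ x', f x' ^ 2 * κ (x - x') = (∫⁻ x, κ x) * ∫⁻ x, f x ^ 2 := by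
    rw [← h1, lintegral_lintegral_swap (by fun_prop)]
    congr 1; ext x; congr 1; ext y
    rw [← he, neg_sub]
  have h3 : 2 * ∫⁻ x, ∫⁻ x', f x * f x' * κ (x - x') ≤ 2 * ((∫⁻ x, κ x) * ∫⁻ x, f x ^ 2) := by
    rw [two_mul ((∫⁻ x, κ x) * ∫⁻ x, f x ^ 2)]
    nth_rewrite 1 [← h1]
    rw [← h2, ← lintegral_add_left (by fun_prop), ← lintegral_const_mul _ (by fun_prop)]
    refine lintegral_mono fun x => ?_
    rw [← lintegral_add_left (by fun_prop), ← lintegral_const_mul _ (by fun_prop)]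
    refine lintegral_mono fun x' => ?_
    rw [← add_mul, ← mul_assoc]
    gcongr
    exact enn_two_mul_le _ _
  exact (ENNReal.mul_le_mul_iff_right (by norm_num) (by norm_num)).1 h3

end ZK

/-! ### The maximal estimate -/

namespace ZK

/-- The Fourier weight `1 + |ξ|^{7/9} + |η|^{7/9}` of the operator `1 + D₁^{7/9} + D₂^{7/9}`. -/
def Wt (ξ η : ℝ) : ℝ := 1 + |ξ| ^ ((7:ℝ) / 9) + |η| ^ ((7:ℝ) / 9)

lemma Wt_ge_one (ξ η : ℝ) : 1 ≤ Wt ξ η := by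
  unfold Wt
  have : 0 ≤ |ξ| ^ ((7:ℝ) / 9) := by positivity
  have : 0 ≤ |η| ^ ((7:ℝ) / 9) := by positivity
  linarith

lemma Wt_pos (ξ η : ℝ) : 0 < Wt ξ η := lt_of_lt_of_le one_pos (Wt_ge_one ξ η)

lemma continuous_Wt : Continuous (Function.uncurry Wt) := by
  unfold Wt Function.uncurry
  have h : (0:ℝ) ≤ 7 / 9 := by norm_num
  exact ((continuous_const.add (continuous_fst.abs.rpow_const fun _ => Or.inr h))).add
    (continuous_snd.abs.rpow_const fun _ => Or.inr h)

lemma continuous_tent (N : ℝ) : Continuous (fun a : ℝ => (1 - |a| / N)) := by fun_prop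

/-- The imaginary part vanishes by oddness, so only twice the cosine integral over `[0, N]` remains. -/
lemma tent_integral (N t s : ℝ) (hN : 0 < N) :
    ∫ a in Set.Icc (-N) N, ((1 - |a| / N : ℝ) : ℂ) * ee (t * a ^ 3 + s * a) =
      ((2 * tentAiry N t s : ℝ) : ℂ) := by
  rw [integral_Icc_eq_integral_Ioc, ← intervalIntegral.integral_of_le (by linarith)]
  have hc : Continuous (fun a : ℝ => ((1 - |a| / N : ℝ) : ℂ) * ee (t * a ^ 3 + s * a)) := by
    unfold ee; fun_prop
  rw [← intervalIntegral.integral_add_adjacent_intervals (b := 0)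
    (hc.intervalIntegrable _ _) (hc.intervalIntegrable _ _)]
  have h1 : ∫ a in (-N)..0, ((1 - |a| / N : ℝ) : ℂ) * ee (t * a ^ 3 + s * a) =
      ∫ a in (0:ℝ)..N, ((1 - |a| / N : ℝ) : ℂ) * ee (-(t * a ^ 3 + s * a)) := by
    have := intervalIntegral.integral_comp_neg (a := 0) (b := N)
      (fun a : ℝ => ((1 - |a| / N : ℝ) : ℂ) * ee (t * a ^ 3 + s * a))
    rw [neg_zero] at this
    rw [← this]
    congr 1; ext a
    rw [abs_neg]; congr 2; ring
  rw [h1, ← intervalIntegral.integral_add]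
  · unfold tentAiry
    rw [← intervalIntegral.integral_const_mul, ← intervalIntegral.integral_ofReal]
    refine intervalIntegral.integral_congr fun a ha => ?_
    rw [Set.uIcc_of_le hN.le] at ha
    rw [abs_of_nonneg ha.1]
    have : ee (-(t * a ^ 3 + s * a)) + ee (t * a ^ 3 + s * a) =
        ((2 * Real.cos (t * a ^ 3 + s * a) : ℝ) : ℂ) := by
      unfold ee
      push_cast
      rw [Complex.cos]
      ring_nf
    rw [← mul_add, this]; push_cast; ring
  · apply Continuous.intervalIntegrable
    unfold ee; fun_prop
  · exact hc.intervalIntegrable _ _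

/-- The square maximal estimate at frequency `N`, in the coordinates in which the cubic symbol
separates; the selectors `t` and `y` linearise the suprema. -/
lemma max_freq (N : ℝ) (hN : 1 ≤ N) (c : ℝ → ℂ) (hcm : Measurable c) (hc : Integrable c)
    (t y : ℝ → ℝ) (ht : Measurable t) (hy : Measurable y) (ht01 : ∀ x, t x ∈ Set.Icc (0:ℝ) 1) :
    ∫⁻ z, ENNReal.ofReal ((1 - |z.1| / N) * (1 - |z.2| / N)) *
      ‖∫ x, c x * ee (4 * t x * (z.1 ^ 3 + z.2 ^ 3) + (2 * Real.pi * (x + √3 * y x)) * z.1 +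
        (2 * Real.pi * (x - √3 * y x)) * z.2)‖ₑ ^ 2
      ∂((volume.restrict (Set.Icc (-N) N)).prod (volume.restrict (Set.Icc (-N) N))) ≤
      ENNReal.ofReal (200000 * N ^ ((3:ℝ) / 2)) * ∫⁻ x, ‖c x‖ₑ ^ 2 := by
  have hN0 : 0 < N := by linarith
  have hpi : (0:ℝ) < 2 * Real.pi := by positivity
  refine (tt_star volume _ c hc (fun x (z : ℝ × ℝ) =>
    ee (4 * t x * (z.1 ^ 3 + z.2 ^ 3) + (2 * Real.pi * (x + √3 * y x)) * z.1 +
        (2 * Real.pi * (x - √3 * y x)) * z.2)) ?_ ?_ (fun z => (1 - |z.1| / N) * (1 - |z.2| / N))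
    ?_ ?_ (fun x x' => 4 * ENNReal.ofReal (majH N (2 * Real.pi * (x - x')))) ?_).trans ?_
  · unfold Function.uncurry
    exact measurable_ee.comp (by fun_prop)
  · intro x z; exact (norm_ee _).le
  · rw [Measure.prod_restrict]
    rw [ae_restrict_iff' (measurableSet_Icc.prod measurableSet_Icc)]
    refine Filter.Eventually.of_forall fun z hz => ?_
    have h1 : |z.1| ≤ N := abs_le.2 hz.1
    have h2 : |z.2| ≤ N := abs_le.2 hz.2
    have h1' : |z.1| / N ≤ 1 := (div_le_one hN0).2 h1
    have h2' : |z.2| / N ≤ 1 := (div_le_one hN0).2 h2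
    exact mul_nonneg (by linarith) (by linarith)
  · exact Integrable.mul_prod (f := fun a : ℝ => 1 - |a| / N) (g := fun a : ℝ => 1 - |a| / N)
      ((continuous_tent N).integrableOn_Icc) ((continuous_tent N).integrableOn_Icc)
  -- The kernel of `TT*` splits as a product of two tent-Airy integrals. The sum of their linear
  -- coefficients is independent of `y`, which makes the majorant a function of `x - x'`.
  · intro x
    filter_upwards [Measure.ae_ne volume x] with x' hx'
    have e1 : ∫ z : ℝ × ℝ, (((1 - |z.1| / N) * (1 - |z.2| / N) : ℝ) : ℂ) *
        (ee (4 * t x * (z.1 ^ 3 + z.2 ^ 3) + (2 * Real.pi * (x + √3 * y x)) * z.1 +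
          (2 * Real.pi * (x - √3 * y x)) * z.2) * (starRingEnd ℂ)
         (ee (4 * t x' * (z.1 ^ 3 + z.2 ^ 3) + (2 * Real.pi * (x' + √3 * y x')) * z.1 +
          (2 * Real.pi * (x' - √3 * y x')) * z.2)))
        ∂((volume.restrict (Set.Icc (-N) N)).prod (volume.restrict (Set.Icc (-N) N))) =
        ((2 * tentAiry N (4 * (t x - t x')) (2 * Real.pi * ((x + √3 * y x) - (x' + √3 * y x'))) : ℝ) : ℂ)
        * ((2 * tentAiry N (4 * (t x - t x')) (2 * Real.pi * ((x - √3 * y x) - (x' - √3 * y x'))) : ℝ) : ℂ) := by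
      rw [← tent_integral _ _ _ hN0, ← tent_integral _ _ _ hN0, ← integral_prod_mul]
      congr 1; ext z
      rw [conj_ee, ← ee_add, mul_mul_mul_comm, ← ee_add]
      push_cast
      congr 2; ring
    rw [e1, ← Complex.ofReal_mul, ← ofReal_norm, Complex.norm_real]
    have hb := tentAiry_mul_le N (4 * (t x - t x'))
      (2 * Real.pi * ((x + √3 * y x) - (x' + √3 * y x')))
      (2 * Real.pi * ((x - √3 * y x) - (x' - √3 * y x'))) (2 * Real.pi * (x - x')) hN0
      (by
        have h1 := ht01 x
        have h2 := ht01 x'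
        rw [abs_le]; constructor <;> linarith [h1.1, h1.2, h2.1, h2.2])
      (mul_ne_zero hpi.ne' (sub_ne_zero.2 hx'.symm)) (by ring)
    rw [show (4:ℝ≥0∞) = ENNReal.ofReal 4 by simp, ← ENNReal.ofReal_mul (by norm_num)]
    apply ENNReal.ofReal_le_ofReal
    rw [show ∀ u v : ℝ, (2 * u) * (2 * v) = 4 * (u * v) by intros; ring, norm_mul]
    simp only [Real.norm_eq_abs] at *
    rw [abs_of_pos (by norm_num : (0:ℝ) < 4)]
    gcongr
  · refine (schur_conv (fun x => ‖c x‖ₑ) (fun X => 4 * ENNReal.ofReal (majH N (2 * Real.pi * X)))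
      hcm.enorm ?_ ?_).trans ?_
    · exact ((measurable_majH N).comp (by fun_prop)).ennreal_ofReal.const_mul _
    · intro x
      congr 2
      unfold majH
      simp only [Set.indicator, Set.mem_Icc, abs_neg, neg_sq, mul_neg]
      congr 2
      ext1
      constructor <;> rintro ⟨a, b⟩ <;> constructor <;> linarith
    · gcongr
      have hmm : Measurable fun X => ENNReal.ofReal (majH N (2 * Real.pi * X)) :=
        ((measurable_majH N).comp (measurable_const_mul _)).ennreal_ofReal
      rw [lintegral_const_mul _ hmm]
      have h1 := lintegral_majH N hN
      rw [lintegral_comp_affine _ (measurable_majH N).ennreal_ofReal (2 * Real.pi) 0 hpi.ne',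
        abs_of_pos hpi] at h1
      simp only [add_zero] at h1
      have h2 : ∫⁻ X, ENNReal.ofReal (majH N (2 * Real.pi * X)) ≤
          ENNReal.ofReal (50000 * N ^ ((3:ℝ) / 2)) := by
        refine le_trans ?_ h1
        refine le_mul_of_one_le_left (zero_le) ?_
        rw [ENNReal.one_le_ofReal]; linarith [Real.pi_gt_three]
      calc 4 * ∫⁻ X, ENNReal.ofReal (majH N (2 * Real.pi * X))
          ≤ 4 * ENNReal.ofReal (50000 * N ^ ((3:ℝ) / 2)) := by gcongr
        _ = _ := by
          rw [show (4:ℝ≥0∞) = ENNReal.ofReal 4 by simp, ← ENNReal.ofReal_mul (by norm_num)]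
          congr 1; ring

/-- The weight `W⁻²` is dominated by a superposition of tensor products of tents. -/
lemma weight_le_tents (a b : ℝ) :
    ENNReal.ofReal ((Wt (a + b) (√3 * (a - b)))⁻¹ ^ 2) ≤
      30 * ∫⁻ N in Set.Ioi (1:ℝ), ENNReal.ofReal (N ^ (-(23:ℝ) / 9)) *
        (Set.Icc (-N) N ×ˢ Set.Icc (-N) N).indicator
          (fun z : ℝ × ℝ => ENNReal.ofReal ((1 - |z.1| / N) * (1 - |z.2| / N))) (a, b) := by
  -- `M` is the size of the frequency: `W ≥ M^{7/9}`, and only the tents with `N ≥ 2M`, which are at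
  -- least `1/4` at `(a, b)`, are needed.
  set M := max 1 (max |a| |b|) with hM
  have hM1 : 1 ≤ M := le_max_left _ _
  have hM0 : 0 < M := by linarith
  have haM : |a| ≤ M := (le_max_left _ _).trans (le_max_right _ _)
  have hbM : |b| ≤ M := (le_max_right _ _).trans (le_max_right _ _)
  have h3 : (1:ℝ) ≤ √3 := by rw [Real.one_le_sqrt]; norm_num
  have hab : |a - b| ≤ |√3 * (a - b)| := by
    rw [abs_mul, abs_of_nonneg (Real.sqrt_nonneg 3)]
    exact le_mul_of_one_le_left (abs_nonneg _) h3
  -- The weight controls both coordinates, since `√3 ≥ 1`.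
  have hmax : max |a| |b| ≤ max |a + b| |√3 * (a - b)| := by
    refine max_le ?_ ?_
    · have : |2 * a| ≤ |a + b| + |a - b| := by
        rw [show 2 * a = (a + b) + (a - b) by ring]; exact abs_add_le _ _
      rw [abs_mul, abs_two] at this
      have h1 := le_max_left |a + b| |√3 * (a - b)|
      have h2 := le_max_right |a + b| |√3 * (a - b)|
      linarith
    · have : |2 * b| ≤ |a + b| + |a - b| := by
        rw [show 2 * b = (a + b) - (a - b) by ring]; exact abs_sub _ _
      rw [abs_mul, abs_two] at this
      have h1 := le_max_left |a + b| |√3 * (a - b)|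
      have h2 := le_max_right |a + b| |√3 * (a - b)|
      linarith
  have hW : M ^ ((7:ℝ) / 9) ≤ Wt (a + b) (√3 * (a - b)) := by
    unfold Wt
    have p1 : 0 ≤ |a + b| ^ ((7:ℝ) / 9) := by positivity
    have p2 : 0 ≤ |√3 * (a - b)| ^ ((7:ℝ) / 9) := by positivity
    rcases max_cases 1 (max |a| |b|) with ⟨h, _⟩ | ⟨h, _⟩
    · rw [hM, h, Real.one_rpow]; linarith
    · rw [hM, h]
      refine (Real.rpow_le_rpow (by positivity) hmax (by norm_num)).trans ?_
      rcases max_cases |a + b| |√3 * (a - b)| with ⟨h, _⟩ | ⟨h, _⟩ <;> rw [h] <;> linarith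
  have hlow : ENNReal.ofReal (1 / 4 * ((2 * M) ^ (-(14:ℝ) / 9) * (9 / 14))) ≤
      ∫⁻ N in Set.Ioi (1:ℝ), ENNReal.ofReal (N ^ (-(23:ℝ) / 9)) *
        (Set.Icc (-N) N ×ˢ Set.Icc (-N) N).indicator
          (fun z : ℝ × ℝ => ENNReal.ofReal ((1 - |z.1| / N) * (1 - |z.2| / N))) (a, b) := by
    have hsub : Set.Ioi (2 * M) ⊆ Set.Ioi (1:ℝ) := Set.Ioi_subset_Ioi (by linarith)
    refine le_trans ?_ (lintegral_mono_set hsub)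
    have hintg : IntegrableOn (fun N : ℝ => N ^ (-(23:ℝ) / 9)) (Set.Ioi (2 * M)) :=
      integrableOn_Ioi_rpow_of_lt (by norm_num) (by linarith)
    have hval : ∫ N in Set.Ioi (2 * M), 1 / 4 * N ^ (-(23:ℝ) / 9) =
        1 / 4 * ((2 * M) ^ (-(14:ℝ) / 9) * (9 / 14)) := by
      rw [integral_const_mul, integral_Ioi_rpow_of_lt (by norm_num) (by linarith)]
      norm_num
      ring
    rw [← hval, ofReal_integral_eq_lintegral_ofReal (hintg.const_mul _)
      ((ae_restrict_iff' measurableSet_Ioi).2 (Filter.Eventually.of_forall fun x hx => by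
        have : 0 < x := lt_trans (by linarith) hx
        simp only [Pi.zero_apply]
        positivity))]
    refine setLIntegral_mono' measurableSet_Ioi fun N hN => ?_
    have hN' : 2 * M < N := hN
    have hN0 : 0 < N := by linarith
    have hm : (a, b) ∈ Set.Icc (-N) N ×ˢ Set.Icc (-N) N :=
      ⟨abs_le.1 (by simpa using by linarith), abs_le.1 (by simpa using by linarith)⟩
    rw [Set.indicator_of_mem hm, ← ENNReal.ofReal_mul (by positivity), mul_comm]
    apply ENNReal.ofReal_le_ofReal
    have ha2 : |a| / N ≤ 1 / 2 := by rw [div_le_iff₀ hN0]; linarith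
    have hb2 : |b| / N ≤ 1 / 2 := by rw [div_le_iff₀ hN0]; linarith
    have : 1 / 4 ≤ (1 - |a| / N) * (1 - |b| / N) := by nlinarith
    gcongr
  refine le_trans ?_ (mul_le_mul_right hlow 30)
  rw [show (30:ℝ≥0∞) = ENNReal.ofReal 30 by simp, ← ENNReal.ofReal_mul (by norm_num)]
  apply ENNReal.ofReal_le_ofReal
  have hMp : 0 < M ^ ((7:ℝ) / 9) := by positivity
  calc (Wt (a + b) (√3 * (a - b)))⁻¹ ^ 2 ≤ (M ^ ((7:ℝ) / 9))⁻¹ ^ 2 := by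
        have := Wt_pos (a + b) (√3 * (a - b))
        gcongr
    _ = M ^ (-(14:ℝ) / 9) := by
        rw [← Real.rpow_neg hM0.le, ← Real.rpow_natCast, ← Real.rpow_mul hM0.le]; norm_num
    _ ≤ _ := by
        rw [Real.mul_rpow (by norm_num) hM0.le]
        have h2 : (1:ℝ) / 4 ≤ 2 ^ (-(14:ℝ) / 9) := by
          rw [show (1:ℝ) / 4 = 2 ^ (-(2:ℝ)) by norm_num]
          exact Real.rpow_le_rpow_of_exponent_le (by norm_num) (by norm_num)
        have : 0 < M ^ (-(14:ℝ) / 9) := by positivity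
        nlinarith

/-- Maximal estimate: the operator `f ↦ U(t(x)) W⁻¹ f (x, y(x))` is bounded from `L²(ℝ²)` to
`L²(ℝ)`, in its dual form. -/
lemma max_dual (c : ℝ → ℂ) (hcm : Measurable c) (hc : Integrable c)
    (t y : ℝ → ℝ) (ht : Measurable t) (hy : Measurable y) (ht01 : ∀ x, t x ∈ Set.Icc (0:ℝ) 1) :
    ∫⁻ ξ, ∫⁻ η, ENNReal.ofReal ((Wt ξ η)⁻¹ ^ 2) *
      ‖∫ x, c x * ee (t x * (ξ * (ξ ^ 2 + η ^ 2)) + 2 * Real.pi * (x * ξ + y x * η))‖ₑ ^ 2 ≤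
      ENNReal.ofReal (10 ^ 10) * ∫⁻ x, ‖c x‖ₑ ^ 2 := by
  set A : ℝ × ℝ → ℂ := fun z => ∫ x, c x * ee (4 * t x * (z.1 ^ 3 + z.2 ^ 3) +
    (2 * Real.pi * (x + √3 * y x)) * z.1 + (2 * Real.pi * (x - √3 * y x)) * z.2) with hA
  have hAm : Measurable A := by
    have : StronglyMeasurable (fun q : (ℝ × ℝ) × ℝ => c q.2 * ee (4 * t q.2 * (q.1.1 ^ 3 + q.1.2 ^ 3) +
      (2 * Real.pi * (q.2 + √3 * y q.2)) * q.1.1 + (2 * Real.pi * (q.2 - √3 * y q.2)) * q.1.2)) := by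
      apply Measurable.stronglyMeasurable
      exact (hcm.comp measurable_snd).mul (measurable_ee.comp (by fun_prop))
    exact this.integral_prod_right'.measurable
  have hBm : Measurable (fun q : ℝ × ℝ => ∫ x, c x *
      ee (t x * (q.1 * (q.1 ^ 2 + q.2 ^ 2)) + 2 * Real.pi * (x * q.1 + y x * q.2))) := by
    have : StronglyMeasurable (fun q : (ℝ × ℝ) × ℝ => c q.2 *
      ee (t q.2 * (q.1.1 * (q.1.1 ^ 2 + q.1.2 ^ 2)) +
        2 * Real.pi * (q.2 * q.1.1 + y q.2 * q.1.2))) := by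
      apply Measurable.stronglyMeasurable
      exact (hcm.comp measurable_snd).mul (measurable_ee.comp (by fun_prop))
    exact this.integral_prod_right'.measurable
  have hWm : Measurable (fun q : ℝ × ℝ => Wt q.1 q.2) := continuous_Wt.measurable
  have h33 : √3 ^ 2 = 3 := Real.sq_sqrt (by norm_num)
  have hm1 : Measurable (fun q : ℝ × ℝ => ENNReal.ofReal ((Wt q.1 q.2)⁻¹ ^ 2)) :=
    ((hWm.inv).pow_const 2).ennreal_ofReal
  have hm2 : Measurable (fun q : ℝ × ℝ => ENNReal.ofReal ((Wt q.1 q.2)⁻¹ ^ 2) * ‖∫ x, c x *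
      ee (t x * (q.1 * (q.1 ^ 2 + q.2 ^ 2)) + 2 * Real.pi * (x * q.1 + y x * q.2))‖ₑ ^ 2) :=
    hm1.mul (hBm.enorm.pow_const 2)
  rw [lintegral_rotate (fun ξ η => ENNReal.ofReal ((Wt ξ η)⁻¹ ^ 2) *
      ‖∫ x, c x * ee (t x * (ξ * (ξ ^ 2 + η ^ 2)) + 2 * Real.pi * (x * ξ + y x * η))‖ₑ ^ 2)
      hm2]
  have e1 : ∀ a b : ℝ, (∫ x, c x * ee (t x * ((a + b) * ((a + b) ^ 2 + (√3 * (a - b)) ^ 2)) +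
      2 * Real.pi * (x * (a + b) + y x * (√3 * (a - b))))) = A (a, b) := by
    intro a b
    simp only [hA]
    congr 1; ext x; congr 2
    rw [mul_pow, h33]; ring
  simp only [e1]
  set ind : ℝ → ℝ × ℝ → ℝ≥0∞ := fun N => (Set.Icc (-N) N ×ˢ Set.Icc (-N) N).indicator
          (fun z : ℝ × ℝ => ENNReal.ofReal ((1 - |z.1| / N) * (1 - |z.2| / N))) with hind
  have hindm : Measurable (Function.uncurry ind) := by
    have hs : MeasurableSet {q : ℝ × (ℝ × ℝ) | q.2 ∈ Set.Icc (-q.1) q.1 ×ˢ Set.Icc (-q.1) q.1} := by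
      simp only [Set.mem_prod, Set.mem_Icc]
      measurability
    have : Function.uncurry ind = {q : ℝ × (ℝ × ℝ) | q.2 ∈ Set.Icc (-q.1) q.1 ×ˢ Set.Icc (-q.1) q.1}.indicator
        (fun q => ENNReal.ofReal ((1 - |q.2.1| / q.1) * (1 - |q.2.2| / q.1))) := by
      ext q
      simp [Function.uncurry, hind, Set.indicator]
    rw [this]
    exact Measurable.indicator (by fun_prop) hs
  have hJ : ∀ N ∈ Set.Ioi (1:ℝ), ∫⁻ z : ℝ × ℝ, ind N z * ‖A z‖ₑ ^ 2 ≤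
      ENNReal.ofReal (200000 * N ^ ((3:ℝ) / 2)) * ∫⁻ x, ‖c x‖ₑ ^ 2 := by
    intro N hN
    refine le_trans (le_of_eq ?_) (max_freq N (le_of_lt hN) c hcm hc t y ht hy ht01)
    rw [Measure.prod_restrict, ← Measure.volume_eq_prod,
      ← lintegral_indicator (measurableSet_Icc.prod measurableSet_Icc)]
    congr 1; ext z
    simp only [hind, Set.indicator]
    split_ifs <;> simp [hA]
  have hswap : ∫⁻ a, ∫⁻ b, ENNReal.ofReal ((Wt (a + b) (√3 * (a - b)))⁻¹ ^ 2) * ‖A (a, b)‖ₑ ^ 2 ≤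
      30 * ∫⁻ N in Set.Ioi (1:ℝ), ENNReal.ofReal (N ^ (-(23:ℝ) / 9)) *
        ∫⁻ z : ℝ × ℝ, ind N z * ‖A z‖ₑ ^ 2 := by
    have hm3 : Measurable (fun q : (ℝ × ℝ) × ℝ =>
        ENNReal.ofReal (q.2 ^ (-(23:ℝ) / 9)) * ind q.2 q.1 * ‖A q.1‖ₑ ^ 2) := by
      refine Measurable.mul (Measurable.mul (by fun_prop)
        (hindm.comp (by fun_prop : Measurable fun q : (ℝ × ℝ) × ℝ => (q.2, q.1)))) ?_
      exact ((hAm.comp measurable_fst).enorm.pow_const 2)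
    calc _ ≤ ∫⁻ a, ∫⁻ b, 30 * ∫⁻ N in Set.Ioi (1:ℝ),
          ENNReal.ofReal (N ^ (-(23:ℝ) / 9)) * ind N (a, b) * ‖A (a, b)‖ₑ ^ 2 := by
          refine lintegral_mono fun a => lintegral_mono fun b => ?_
          rw [lintegral_mul_const', ← mul_assoc]
          · exact mul_le_mul_left (weight_le_tents a b) _
          · exact ENNReal.pow_ne_top enorm_ne_top
      _ = ∫⁻ z : ℝ × ℝ, 30 * ∫⁻ N in Set.Ioi (1:ℝ),
          ENNReal.ofReal (N ^ (-(23:ℝ) / 9)) * ind N z * ‖A z‖ₑ ^ 2 := by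
          rw [Measure.volume_eq_prod, lintegral_prod]
          exact (hm3.lintegral_prod_right'.const_mul _).aemeasurable
      _ = 30 * ∫⁻ N in Set.Ioi (1:ℝ), ∫⁻ z : ℝ × ℝ,
          ENNReal.ofReal (N ^ (-(23:ℝ) / 9)) * ind N z * ‖A z‖ₑ ^ 2 := by
          rw [lintegral_const_mul _ hm3.lintegral_prod_right', lintegral_lintegral_swap hm3.aemeasurable]
      _ = _ := by
          congr 1; congr 1; ext N
          simp only [mul_assoc]
          rw [lintegral_const_mul' _ _ ENNReal.ofReal_ne_top]
  have hintg : IntegrableOn (fun N : ℝ => N ^ (-(19:ℝ) / 18)) (Set.Ioi 1) :=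
    integrableOn_Ioi_rpow_of_lt (by norm_num) (by norm_num)
  have hfin : ∫⁻ N in Set.Ioi (1:ℝ), ENNReal.ofReal (N ^ (-(23:ℝ) / 9)) *
        ∫⁻ z : ℝ × ℝ, ind N z * ‖A z‖ₑ ^ 2 ≤
      ENNReal.ofReal (200000 * 18) * ∫⁻ x, ‖c x‖ₑ ^ 2 := by
    calc _ ≤ ∫⁻ N in Set.Ioi (1:ℝ), ENNReal.ofReal (200000 * N ^ (-(19:ℝ) / 18)) *
          ∫⁻ x, ‖c x‖ₑ ^ 2 := by
          refine setLIntegral_mono' measurableSet_Ioi fun N hN => ?_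
          have hN0 : (0:ℝ) < N := lt_trans one_pos hN
          refine (mul_le_mul_right (hJ N hN) _).trans (le_of_eq ?_)
          rw [← mul_assoc, ← ENNReal.ofReal_mul (by positivity)]
          congr 2
          rw [show -(19:ℝ) / 18 = -(23:ℝ) / 9 + 3 / 2 by norm_num, Real.rpow_add hN0]; ring
      _ = _ := by
          rw [lintegral_mul_const _ (by fun_prop)]
          congr 1
          rw [← ofReal_integral_eq_lintegral_ofReal (hintg.const_mul _)
            ((ae_restrict_iff' measurableSet_Ioi).2 (Filter.Eventually.of_forall fun x hx => by
              have : (0:ℝ) < x := lt_trans one_pos hx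
              simp only [Pi.zero_apply]
              positivity)), integral_const_mul, integral_Ioi_rpow_of_lt (by norm_num) (by norm_num)]
          norm_num
  calc _ ≤ ENNReal.ofReal (2 * √3) * (30 * (ENNReal.ofReal (200000 * 18) * ∫⁻ x, ‖c x‖ₑ ^ 2)) := by
        gcongr
        exact hswap.trans (by gcongr)
    _ ≤ _ := by
        rw [← mul_assoc, ← mul_assoc]
        gcongr
        rw [show (30:ℝ≥0∞) = ENNReal.ofReal 30 by simp, ← ENNReal.ofReal_mul (by positivity),
          ← ENNReal.ofReal_mul (by positivity)]
        apply ENNReal.ofReal_le_ofReal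
        have : √3 ≤ 2 := by rw [Real.sqrt_le_left (by norm_num)]; norm_num
        nlinarith

end ZK

/-! ### Contour rotation -/

namespace ZK

/-- The integrand of the oscillatory kernel on `ρ > 0`, in the logarithmic variable `ρ = e^w`. -/
def fk (δ s x η : ℝ) (w : ℂ) : ℂ :=
  Complex.exp (2 * w) / (1 + Complex.exp ((7 / 9 : ℝ) * w) + ((|η| ^ ((7:ℝ) / 9) : ℝ) : ℂ)) *
    Complex.exp (-δ * Complex.exp (2 * w) +
      Complex.I * (s * (Complex.exp (3 * w) + η ^ 2 * Complex.exp w) +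
        2 * Real.pi * x * Complex.exp w))

/-- The denominator of `fk` stays away from zero in the strip `0 ≤ Im w ≤ π/6`, because the argument
of `e^{7w/9}` is at most `π/3` there. -/
lemma fk_den (η u θ : ℝ) (h0 : 0 ≤ θ) (h1 : θ ≤ Real.pi / 6) :
    (1 + Real.exp (7 / 9 * u)) / 2 ≤
      (1 + Complex.exp ((7 / 9 : ℝ) * ((u : ℂ) + θ * Complex.I)) +
        ((|η| ^ ((7:ℝ) / 9) : ℝ) : ℂ)).re := by
  have hc : 1 / 2 ≤ Real.cos (7 / 9 * θ) := by
    rw [← Real.cos_pi_div_three]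
    apply Real.cos_le_cos_of_nonneg_of_le_pi <;> linarith [Real.pi_pos]
  have h3 : 0 ≤ |η| ^ ((7:ℝ) / 9) := by positivity
  have h4 := Real.exp_pos (7 / 9 * u)
  rw [Complex.add_re, Complex.add_re, Complex.exp_re, Complex.ofReal_re, Complex.one_re]
  simp only [Complex.mul_re, Complex.ofReal_re, Complex.add_re, Complex.I_re, Complex.ofReal_im,
    Complex.mul_im, Complex.add_im, Complex.I_im]
  simp only [mul_zero, mul_one, zero_mul, sub_zero, add_zero, zero_add]
  nlinarith

lemma fk_norm_le (δ s x η u θ : ℝ) (h0 : 0 ≤ θ) (h1 : θ ≤ Real.pi / 6) :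
    ‖fk δ s x η ((u : ℂ) + θ * Complex.I)‖ ≤
      2 * Real.exp (2 * u) / (1 + Real.exp (7 / 9 * u)) *
      Real.exp (-(δ * (Real.exp (2 * u) * Real.cos (2 * θ))) -
        s * (Real.exp (3 * u) * Real.sin (3 * θ) + η ^ 2 * (Real.exp u * Real.sin θ)) -
        2 * Real.pi * x * (Real.exp u * Real.sin θ)) := by
  have hd := fk_den η u θ h0 h1
  have h4 := Real.exp_pos (7 / 9 * u)
  unfold fk
  rw [norm_mul, norm_div, Complex.norm_exp, Complex.norm_exp]
  have e1 : (2 * ((u : ℂ) + θ * Complex.I)).re = 2 * u := by simp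
  have e2 : (-(δ:ℂ) * Complex.exp (2 * ((u : ℂ) + θ * Complex.I)) +
      Complex.I * (s * (Complex.exp (3 * ((u : ℂ) + θ * Complex.I)) + η ^ 2 *
        Complex.exp ((u : ℂ) + θ * Complex.I)) +
        2 * Real.pi * x * Complex.exp ((u : ℂ) + θ * Complex.I))).re =
      -(δ * (Real.exp (2 * u) * Real.cos (2 * θ))) -
        s * (Real.exp (3 * u) * Real.sin (3 * θ) + η ^ 2 * (Real.exp u * Real.sin θ)) -
        2 * Real.pi * x * (Real.exp u * Real.sin θ) := by
    have c2 : (2:ℂ) * ((u : ℂ) + θ * Complex.I) = ((2 * u : ℝ) : ℂ) + ((2 * θ : ℝ) : ℂ) * Complex.I := by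
      push_cast; ring
    have c3 : (3:ℂ) * ((u : ℂ) + θ * Complex.I) = ((3 * u : ℝ) : ℂ) + ((3 * θ : ℝ) : ℂ) * Complex.I := by
      push_cast; ring
    have c4 : ∀ a b : ℝ, Complex.exp ((a : ℂ) + (b : ℂ) * Complex.I) =
        ((Real.exp a * Real.cos b : ℝ) : ℂ) + ((Real.exp a * Real.sin b : ℝ) : ℂ) * Complex.I := by
      intro a b
      rw [Complex.exp_add, Complex.exp_mul_I, ← Complex.ofReal_exp, ← Complex.ofReal_cos,
        ← Complex.ofReal_sin]
      push_cast; ring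
    rw [c2, c3, c4, c4, c4]
    have c5 : ∀ a b c d e f : ℝ, (-(δ:ℂ) * ((a : ℂ) + (b : ℂ) * Complex.I) +
        Complex.I * (s * (((c : ℂ) + (d : ℂ) * Complex.I) + η ^ 2 * ((e : ℂ) + (f : ℂ) * Complex.I)) +
        2 * Real.pi * x * ((e : ℂ) + (f : ℂ) * Complex.I))).re =
        -(δ * a) - s * (d + η ^ 2 * f) - 2 * Real.pi * x * f := by
      intro a b c d e f
      have : (-(δ:ℂ) * ((a : ℂ) + (b : ℂ) * Complex.I) +
        Complex.I * (s * (((c : ℂ) + (d : ℂ) * Complex.I) + η ^ 2 * ((e : ℂ) + (f : ℂ) * Complex.I)) +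
        2 * Real.pi * x * ((e : ℂ) + (f : ℂ) * Complex.I))) =
        ((-(δ * a) - s * (d + η ^ 2 * f) - 2 * Real.pi * x * f : ℝ) : ℂ) +
        ((-(δ * b) + s * (c + η ^ 2 * e) + 2 * Real.pi * x * e : ℝ) : ℂ) * Complex.I := by
        push_cast
        linear_combination (s * d + s * η ^ 2 * f + 2 * Real.pi * x * f) * Complex.I_mul_I
      rw [this, Complex.add_re, Complex.ofReal_re, Complex.re_ofReal_mul, Complex.I_re]
      ring
    rw [c5]
  rw [e1, e2]
  refine mul_le_mul_of_nonneg_right ?_ (Real.exp_pos _).le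
  have hn := hd.trans (Complex.re_le_norm _)
  refine (div_le_div_of_nonneg_left (Real.exp_pos _).le (by positivity) hn).trans (le_of_eq ?_)
  field_simp

lemma fk_diff (δ s x η : ℝ) (w : ℂ) (h0 : 0 ≤ w.im) (h1 : w.im ≤ Real.pi / 6) :
    DifferentiableAt ℂ (fk δ s x η) w := by
  have hd := fk_den η w.re w.im h0 h1
  rw [Complex.re_add_im] at hd
  have h4 := Real.exp_pos (7 / 9 * w.re)
  have hne : (1 + Complex.exp ((7 / 9 : ℝ) * w) + ((|η| ^ ((7:ℝ) / 9) : ℝ) : ℂ)) ≠ 0 := by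
    intro h
    rw [h, Complex.zero_re] at hd
    linarith
  unfold fk
  fun_prop (disch := exact hne)

/-- Bound uniform in the strip; it makes the vertical sides of the contour vanish in the limit. -/
lemma fk_side (δ s x η u θ : ℝ) (hδ : 0 < δ) (hs : 0 ≤ s) (hx : 0 ≤ x)
    (h0 : 0 ≤ θ) (h1 : θ ≤ Real.pi / 6) :
    ‖fk δ s x η ((u : ℂ) + θ * Complex.I)‖ ≤
      2 * Real.exp (2 * u) * Real.exp (-(δ / 2) * Real.exp (2 * u)) := by
  refine (fk_norm_le δ s x η u θ h0 h1).trans ?_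
  have hp := Real.pi_pos
  have hc : 1 / 2 ≤ Real.cos (2 * θ) := by
    rw [← Real.cos_pi_div_three]
    apply Real.cos_le_cos_of_nonneg_of_le_pi <;> linarith
  have hs1 : 0 ≤ Real.sin θ := Real.sin_nonneg_of_nonneg_of_le_pi h0 (by linarith)
  have hs3 : 0 ≤ Real.sin (3 * θ) := Real.sin_nonneg_of_nonneg_of_le_pi (by linarith) (by linarith)
  have t1 : 0 ≤ s * (Real.exp (3 * u) * Real.sin (3 * θ) + η ^ 2 * (Real.exp u * Real.sin θ)) := by
    positivity
  have t2 : 0 ≤ 2 * Real.pi * x * (Real.exp u * Real.sin θ) := by positivity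
  gcongr
  · refine div_le_self (by positivity) ?_
    linarith [Real.exp_pos (7 / 9 * u)]
  · have : Real.exp (2 * u) * (1 / 2) ≤ Real.exp (2 * u) * Real.cos (2 * θ) := by gcongr
    nlinarith

lemma exp_image : Real.exp '' Set.univ = Set.Ioi 0 := by
  rw [Set.image_univ, Real.range_exp]

lemma integrable_side (b : ℝ) (hb : 0 < b) :
    Integrable fun u : ℝ => 2 * Real.exp (2 * u) * Real.exp (-b * Real.exp (2 * u)) := by
  have h := (integrable_mul_exp_neg_mul_sq hb).integrableOn (s := Set.Ioi 0)
  rw [← exp_image, integrableOn_image_iff_integrableOn_abs_deriv_smul MeasurableSet.univ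
    (fun x _ => (Real.hasDerivAt_exp x).hasDerivWithinAt) Real.exp_injective.injOn,
    integrableOn_univ] at h
  refine (h.const_mul 2).congr (Filter.Eventually.of_forall fun u => ?_)
  have : Real.exp (2 * u) = Real.exp u ^ 2 := by rw [← Real.exp_nat_mul]; norm_num
  simp only [smul_eq_mul, abs_of_pos (Real.exp_pos u)]
  rw [this]; ring

lemma side_tendsto (b : ℝ) (hb : 0 < b) (l : Filter ℝ) (h : Filter.Tendsto (fun u : ℝ => Real.exp (2 * u)) l (nhds 0) ∨
    Filter.Tendsto (fun u : ℝ => Real.exp (2 * u)) l Filter.atTop) :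
    Filter.Tendsto (fun u : ℝ => 2 * Real.exp (2 * u) * Real.exp (-b * Real.exp (2 * u))) l (nhds 0) := by
  rcases h with h | h
  · have : Filter.Tendsto (fun v : ℝ => 2 * v * Real.exp (-b * v)) (nhds 0) (nhds (2 * 0 * Real.exp (-b * 0))) := by
      apply Continuous.tendsto; fun_prop
    rw [mul_zero, zero_mul] at this
    exact this.comp h
  · have h1 := (tendsto_rpow_mul_exp_neg_mul_atTop_nhds_zero 1 b hb).comp h
    have h2 := h1.const_mul 2
    rw [mul_zero] at h2
    refine h2.congr fun u => ?_
    simp only [Function.comp, Real.rpow_one]; ring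

lemma continuous_fk_line (δ s x η θ : ℝ) (h0 : 0 ≤ θ) (h1 : θ ≤ Real.pi / 6) :
    Continuous fun u : ℝ => fk δ s x η ((u : ℂ) + θ * Complex.I) := by
  rw [continuous_iff_continuousAt]
  intro u
  have h := (fk_diff δ s x η ((u : ℂ) + θ * Complex.I) (by simpa using h0)
    (by simpa using h1)).continuousAt
  exact ContinuousAt.comp (f := fun u : ℝ => (u : ℂ) + θ * Complex.I) h (by fun_prop)

lemma integrable_fk_line (δ s x η θ : ℝ) (hδ : 0 < δ) (hs : 0 ≤ s) (hx : 0 ≤ x)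
    (h0 : 0 ≤ θ) (h1 : θ ≤ Real.pi / 6) :
    Integrable fun u : ℝ => fk δ s x η ((u : ℂ) + θ * Complex.I) :=
  (integrable_side (δ / 2) (by positivity)).mono'
    (continuous_fk_line δ s x η θ h0 h1).aestronglyMeasurable
    (Filter.Eventually.of_forall fun u => fk_side δ s x η u θ hδ hs hx h0 h1)

/-- Rotating the contour by `π/6` turns all oscillation into decay when `s, x ≥ 0`. -/
lemma fk_rotate (δ s x η : ℝ) (hδ : 0 < δ) (hs : 0 ≤ s) (hx : 0 ≤ x) :
    ‖∫ u : ℝ, fk δ s x η u‖ₑ ≤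
      ∫⁻ u : ℝ, ENNReal.ofReal (2 * Real.exp (2 * u) / (1 + Real.exp (7 / 9 * u)) *
        Real.exp (-(s * (Real.exp (3 * u) + η ^ 2 * (Real.exp u / 2))) -
          Real.pi * x * Real.exp u)) := by
  have hp := Real.pi_pos
  have hp6 : (0:ℝ) ≤ Real.pi / 6 := by positivity
  have i0 := integrable_fk_line δ s x η 0 hδ hs hx le_rfl hp6
  have i1 := integrable_fk_line δ s x η (Real.pi / 6) hδ hs hx hp6 le_rfl
  have t0 := intervalIntegral_tendsto_integral i0 Filter.tendsto_neg_atTop_atBot Filter.tendsto_id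
  have t1 := intervalIntegral_tendsto_integral i1 Filter.tendsto_neg_atTop_atBot Filter.tendsto_id
  set S : ℝ → ℝ := fun u => 2 * Real.exp (2 * u) * Real.exp (-(δ / 2) * Real.exp (2 * u)) with hS
  have s1 : Filter.Tendsto S Filter.atTop (nhds 0) :=
    side_tendsto (δ / 2) (by positivity) _ (Or.inr (Real.tendsto_exp_atTop.comp
      (Filter.tendsto_id.const_mul_atTop (by norm_num : (0:ℝ) < 2))))
  have s2 : Filter.Tendsto (fun u => S (-u)) Filter.atTop (nhds 0) := by
    have : Filter.Tendsto S Filter.atBot (nhds 0) :=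
      side_tendsto (δ / 2) (by positivity) _ (Or.inl (Real.tendsto_exp_atBot.comp
        (Filter.tendsto_id.const_mul_atBot (by norm_num : (0:ℝ) < 2))))
    exact this.comp Filter.tendsto_neg_atTop_atBot
  have hside : ∀ v : ℝ, ‖∫ y in (0:ℝ)..(Real.pi / 6), fk δ s x η ((v:ℂ) + y * Complex.I)‖ ≤
      S v * (Real.pi / 6) := by
    intro v
    have := intervalIntegral.norm_integral_le_of_norm_le_const (a := 0) (b := Real.pi / 6)
      (f := fun y : ℝ => fk δ s x η ((v:ℂ) + y * Complex.I)) (C := S v) (fun y hy => by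
        rw [Set.uIoc_of_le hp6] at hy
        exact fk_side δ s x η v y hδ hs hx hy.1.le hy.2)
    rwa [sub_zero, abs_of_nonneg hp6] at this
  -- Cauchy's theorem on the rectangle `[-R, R] × [0, π/6]`.
  have hrect : ∀ R : ℝ, ‖(∫ u in (-R)..R, fk δ s x η ((u:ℂ) + (0:ℝ) * Complex.I)) -
      ∫ u in (-R)..R, fk δ s x η ((u:ℂ) + (Real.pi / 6 : ℝ) * Complex.I)‖ ≤
      (S R + S (-R)) * (Real.pi / 6) := by
    intro R
    have h := Complex.integral_boundary_rect_eq_zero_of_differentiableOn (fk δ s x η)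
      (((-R : ℝ) : ℂ)) ((R : ℂ) + (Real.pi / 6 : ℝ) * Complex.I) (by
        intro w hw
        refine (fk_diff δ s x η w ?_ ?_).differentiableWithinAt
        · have := hw.2
          simp [Set.uIcc_of_le hp6] at this
          exact this.1
        · have := hw.2
          simp [Set.uIcc_of_le hp6] at this
          exact this.2)
    have r1 : ((R : ℂ) + (Real.pi / 6 : ℝ) * Complex.I).re = R := by simp
    have r2 : ((R : ℂ) + (Real.pi / 6 : ℝ) * Complex.I).im = Real.pi / 6 := by simp
    rw [r1, r2, Complex.ofReal_re, Complex.ofReal_im] at h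
    set A := ∫ u in (-R)..R, fk δ s x η ((u:ℂ) + (0:ℝ) * Complex.I)
    set B := ∫ u in (-R)..R, fk δ s x η ((u:ℂ) + (Real.pi / 6 : ℝ) * Complex.I)
    have h2 := hside R
    have h3 := hside (-R)
    set D := ∫ y in (0:ℝ)..(Real.pi / 6), fk δ s x η ((R:ℂ) + y * Complex.I)
    set E := ∫ y in (0:ℝ)..(Real.pi / 6), fk δ s x η (((-R:ℝ):ℂ) + y * Complex.I)
    have : A - B = Complex.I • E - Complex.I • D := by linear_combination h
    rw [this]
    refine (norm_sub_le _ _).trans ?_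
    rw [norm_smul, norm_smul, Complex.norm_I, one_mul, one_mul]
    linarith
  have heq : ∫ u : ℝ, fk δ s x η ((u:ℂ) + (0:ℝ) * Complex.I) =
      ∫ u : ℝ, fk δ s x η ((u:ℂ) + (Real.pi / 6 : ℝ) * Complex.I) := by
    have hlim := (t0.sub t1).norm
    have hz : Filter.Tendsto (fun R => (S R + S (-R)) * (Real.pi / 6)) Filter.atTop (nhds 0) := by
      simpa using (s1.add s2).mul_const (Real.pi / 6)
    have := le_of_tendsto_of_tendsto' hlim hz hrect
    exact sub_eq_zero.1 (norm_eq_zero.1 (le_antisymm this (norm_nonneg _)))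
  have h00 : ∫ u : ℝ, fk δ s x η u = ∫ u : ℝ, fk δ s x η ((u:ℂ) + (0:ℝ) * Complex.I) := by simp
  rw [h00, heq]
  refine (enorm_integral_le_lintegral_enorm _).trans (lintegral_mono fun u => ?_)
  rw [← ofReal_norm]
  apply ENNReal.ofReal_le_ofReal
  refine (fk_norm_le δ s x η u (Real.pi / 6) hp6 le_rfl).trans ?_
  rw [show 3 * (Real.pi / 6) = Real.pi / 2 by ring, show 2 * (Real.pi / 6) = Real.pi / 3 by ring,
    Real.sin_pi_div_two, Real.sin_pi_div_six, Real.cos_pi_div_three]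
  refine mul_le_mul_of_nonneg_left (Real.exp_le_exp.2 ?_) (by positivity)
  have : 0 < δ * (Real.exp (2 * u) * (1 / 2)) := by positivity
  have e1 : 2 * Real.pi * x * (Real.exp u * (1 / 2)) = Real.pi * x * Real.exp u := by ring
  have e2 : Real.exp u * (1 / 2) = Real.exp u / 2 := by ring
  rw [e1, e2, mul_one]
  linarith

end ZK

/-! ### Square integrability of the retarded kernel -/

namespace ZK

/-- The regularised kernel `∫ ξ W(ξ,η)⁻¹ e^{-δξ²} e^{isξ(ξ²+η²) + 2πixξ} dξ`. -/
def kd (δ s x η : ℝ) : ℂ :=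
  ∫ ξ : ℝ, ((ξ / Wt ξ η * Real.exp (-δ * ξ ^ 2) : ℝ) : ℂ) *
    ee (s * (ξ * (ξ ^ 2 + η ^ 2)) + 2 * Real.pi * (x * ξ))

lemma Wt_neg_left (ξ η : ℝ) : Wt (-ξ) η = Wt ξ η := by unfold Wt; rw [abs_neg]

lemma kd_integrand_measurable (δ : ℝ) : Measurable (fun q : (ℝ × ℝ × ℝ) × ℝ =>
    ((q.2 / Wt q.2 q.1.2.2 * Real.exp (-δ * q.2 ^ 2) : ℝ) : ℂ) *
    ee (q.1.1 * (q.2 * (q.2 ^ 2 + q.1.2.2 ^ 2)) + 2 * Real.pi * (q.1.2.1 * q.2))) := by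
  have h1 : Measurable (fun q : (ℝ × ℝ × ℝ) × ℝ => Wt q.2 q.1.2.2) :=
    continuous_Wt.measurable.comp
      (by fun_prop : Measurable fun q : (ℝ × ℝ × ℝ) × ℝ => (q.2, q.1.2.2))
  exact (Complex.measurable_ofReal.comp ((measurable_snd.div h1).mul (by fun_prop))).mul
    (measurable_ee.comp (by fun_prop))

lemma measurable_kd (δ : ℝ) : Measurable (fun q : ℝ × ℝ × ℝ => kd δ q.1 q.2.1 q.2.2) :=
  (kd_integrand_measurable δ).stronglyMeasurable.integral_prod_right'.measurable

lemma continuous_kd_integrand (δ s x η : ℝ) : Continuous (fun ξ : ℝ =>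
    ((ξ / Wt ξ η * Real.exp (-δ * ξ ^ 2) : ℝ) : ℂ) *
    ee (s * (ξ * (ξ ^ 2 + η ^ 2)) + 2 * Real.pi * (x * ξ))) := by
  have h1 : Continuous (fun ξ : ℝ => Wt ξ η) :=
    continuous_Wt.comp (by fun_prop : Continuous fun ξ : ℝ => (ξ, η))
  refine (Complex.continuous_ofReal.comp ((continuous_id.div h1 fun ξ => (Wt_pos ξ η).ne').mul
    (by fun_prop))).mul (continuous_ee.comp (by fun_prop))

lemma norm_kd_integrand_le (δ s x η ξ : ℝ) :
    ‖((ξ / Wt ξ η * Real.exp (-δ * ξ ^ 2) : ℝ) : ℂ) *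
      ee (s * (ξ * (ξ ^ 2 + η ^ 2)) + 2 * Real.pi * (x * ξ))‖ ≤ ‖ξ * Real.exp (-δ * ξ ^ 2)‖ := by
  rw [norm_mul, norm_ee, mul_one, Complex.norm_real, norm_mul, norm_mul, norm_div,
    Real.norm_of_nonneg (Wt_pos ξ η).le]
  gcongr
  exact div_le_self (norm_nonneg _) (Wt_ge_one ξ η)

lemma integrable_kd_integrand (δ s x η : ℝ) (hδ : 0 < δ) : Integrable (fun ξ : ℝ =>
    ((ξ / Wt ξ η * Real.exp (-δ * ξ ^ 2) : ℝ) : ℂ) *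
    ee (s * (ξ * (ξ ^ 2 + η ^ 2)) + 2 * Real.pi * (x * ξ))) :=
  (integrable_mul_exp_neg_mul_sq hδ).norm.mono' (continuous_kd_integrand δ s x η).aestronglyMeasurable
    (Filter.Eventually.of_forall fun ξ => norm_kd_integrand_le δ s x η ξ)

/-- The substitution `ξ = e^u` on the positive half-line. -/
lemma kd_half (δ s x η : ℝ) :
    ∫ ξ in Set.Ioi (0:ℝ), ((ξ / Wt ξ η * Real.exp (-δ * ξ ^ 2) : ℝ) : ℂ) *
      ee (s * (ξ * (ξ ^ 2 + η ^ 2)) + 2 * Real.pi * (x * ξ)) = ∫ u : ℝ, fk δ s x η u := by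
  rw [← exp_image, integral_image_eq_integral_abs_deriv_smul MeasurableSet.univ
    (fun x _ => (Real.hasDerivAt_exp x).hasDerivWithinAt) Real.exp_injective.injOn,
    Measure.restrict_univ]
  congr 1; ext u
  have hp := Real.exp_pos u
  have e2 : Complex.exp (2 * (u:ℂ)) = ((Real.exp u ^ 2 : ℝ) : ℂ) := by
    rw [← Real.exp_nat_mul]; push_cast; rfl
  have e3 : Complex.exp (3 * (u:ℂ)) = ((Real.exp u ^ 3 : ℝ) : ℂ) := by
    rw [← Real.exp_nat_mul]; push_cast; rfl
  have er : Complex.exp (((7 / 9 : ℝ) : ℂ) * (u:ℂ)) = ((Real.exp u ^ ((7:ℝ) / 9) : ℝ) : ℂ) := by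
    rw [← Real.exp_mul, mul_comm]; push_cast; rfl
  have e1 : Complex.exp (u:ℂ) = ((Real.exp u : ℝ) : ℂ) := by push_cast; rfl
  unfold fk
  rw [e2, e3, er, e1]
  unfold Wt ee
  rw [abs_of_pos hp, Complex.real_smul, Complex.exp_add, Complex.ofReal_mul, Complex.ofReal_exp (-δ * _)]
  push_cast
  ring_nf

/-- The amplitude of the kernel is odd in `ξ`, and so is the phase. -/
lemma kd_neg (δ s x η : ℝ) : kd δ (-s) (-x) η = - kd δ s x η := by
  unfold kd
  rw [← integral_neg_eq_self, ← integral_neg]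
  congr 1; ext ξ
  rw [Wt_neg_left]
  have : -s * (-ξ * ((-ξ) ^ 2 + η ^ 2)) + 2 * Real.pi * (-x * -ξ) =
    s * (ξ * (ξ ^ 2 + η ^ 2)) + 2 * Real.pi * (x * ξ) := by ring
  rw [this, neg_sq]
  push_cast; ring

/-- The negative half-line contributes minus the complex conjugate of the positive one. -/
lemma kd_le (δ s x η : ℝ) (hδ : 0 < δ) : ‖kd δ s x η‖ₑ ≤ 2 * ‖∫ u : ℝ, fk δ s x η u‖ₑ := by
  have hi := integrable_kd_integrand δ s x η hδ
  have h : kd δ s x η = (∫ u : ℝ, fk δ s x η u) - (starRingEnd ℂ) (∫ u : ℝ, fk δ s x η u) := by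
    rw [← kd_half, ← integral_conj]
    unfold kd
    have hneg := integral_comp_neg_Ioi (0:ℝ) (fun ξ : ℝ =>
      ((ξ / Wt ξ η * Real.exp (-δ * ξ ^ 2) : ℝ) : ℂ) *
      ee (s * (ξ * (ξ ^ 2 + η ^ 2)) + 2 * Real.pi * (x * ξ)))
    rw [neg_zero] at hneg
    rw [← intervalIntegral.integral_Iic_add_Ioi (b := 0) hi.integrableOn hi.integrableOn,
      ← hneg, add_comm, sub_eq_add_neg, ← integral_neg]
    congr 1
    congr 1; ext ξ
    rw [map_mul, conj_ee, Complex.conj_ofReal, Wt_neg_left, neg_sq]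
    have : s * (-ξ * (ξ ^ 2 + η ^ 2)) + 2 * Real.pi * (x * -ξ) =
      -(s * (ξ * (ξ ^ 2 + η ^ 2)) + 2 * Real.pi * (x * ξ)) := by ring
    rw [this]
    push_cast; ring
  rw [h, two_mul]
  refine (enorm_sub_le).trans ?_
  rw [RCLike.enorm_conj]

lemma lintegral_exp_change (f : ℝ → ℝ≥0∞) :
    ∫⁻ ρ in Set.Ioi (0:ℝ), f ρ = ∫⁻ u : ℝ, ENNReal.ofReal (Real.exp u) * f (Real.exp u) := by
  rw [← exp_image, lintegral_image_eq_lintegral_abs_deriv_mul MeasurableSet.univ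
    (fun x _ => (Real.hasDerivAt_exp x).hasDerivWithinAt) Real.exp_injective.injOn,
    Measure.restrict_univ]
  simp only [abs_of_pos (Real.exp_pos _)]

/-- The bound of `fk_rotate` in the original variable `ρ = e^u`. -/
lemma fk_rotate' (δ s x η : ℝ) (hδ : 0 < δ) (hs : 0 ≤ s) (hx : 0 ≤ x) :
    ‖∫ u : ℝ, fk δ s x η u‖ₑ ≤
      ∫⁻ ρ in Set.Ioi (0:ℝ), ENNReal.ofReal (2 * ρ / (1 + ρ ^ ((7:ℝ) / 9)) *
        Real.exp (-(s * (ρ ^ 3 + η ^ 2 * (ρ / 2))) - Real.pi * x * ρ)) := by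
  refine (fk_rotate δ s x η hδ hs hx).trans (le_of_eq ?_)
  rw [lintegral_exp_change]
  congr 1; ext u
  rw [← ENNReal.ofReal_mul (Real.exp_pos u).le, ← Real.exp_mul, ← Real.exp_nat_mul]
  congr 1
  rw [show Real.exp (2 * u) = Real.exp u * Real.exp u by rw [← Real.exp_add]; ring_nf,
    show u * (7 / 9) = 7 / 9 * u by ring]
  push_cast
  ring

/-- Cauchy–Schwarz for `ℝ≥0∞`-valued functions. -/
lemma cs_sq {α : Type*} [MeasurableSpace α] (μ : Measure α) (f g : α → ℝ≥0∞)
    (hf : AEMeasurable f μ) (hg : AEMeasurable g μ) :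
    (∫⁻ a, f a * g a ∂μ) ^ 2 ≤ (∫⁻ a, f a ^ 2 ∂μ) * ∫⁻ a, g a ^ 2 ∂μ := by
  have h := ENNReal.lintegral_mul_le_Lp_mul_Lq μ (p := 2) (q := 2)
    (by constructor <;> norm_num) hf hg
  calc (∫⁻ a, f a * g a ∂μ) ^ 2 ≤ ((∫⁻ a, f a ^ (2:ℝ) ∂μ) ^ ((1:ℝ) / 2) *
        (∫⁻ a, g a ^ (2:ℝ) ∂μ) ^ ((1:ℝ) / 2)) ^ 2 := by gcongr; exact h
    _ = _ := by
      rw [mul_pow, ← ENNReal.rpow_natCast, ← ENNReal.rpow_natCast, ← ENNReal.rpow_mul,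
        ← ENNReal.rpow_mul]
      norm_num

/-- Cauchy–Schwarz in `ρ`, splitting the exponential `e^{-πxρ}` evenly and inserting `ρ^{∓1/4}`; the
first factor integrates to `x^{-1/2}`, which is integrable at `x = 0`. -/
lemma kd_sq_le (δ s x η : ℝ) (hδ : 0 < δ) (hs : 0 ≤ s) (hx : 0 < x) :
    ‖kd δ s x η‖ₑ ^ 2 ≤ ∫⁻ ρ in Set.Ioi (0:ℝ),
      ENNReal.ofReal (16 * ρ ^ ((5:ℝ) / 2) / (1 + ρ ^ ((7:ℝ) / 9)) ^ 2) *
      (ENNReal.ofReal (x ^ (-(1:ℝ) / 2) * Real.exp (-(Real.pi * ρ * x))) *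
        ENNReal.ofReal (Real.exp (-(2 * (ρ ^ 3 + η ^ 2 * (ρ / 2)) * s)))) := by
  have hp := Real.pi_pos
  have h1 := (kd_le δ s x η hδ).trans (mul_le_mul_right (fk_rotate' δ s x η hδ hs hx.le) 2)
  have hcs := cs_sq (volume.restrict (Set.Ioi (0:ℝ)))
    (fun ρ => ENNReal.ofReal (ρ ^ (-(1:ℝ) / 4) * Real.exp (-(Real.pi * x * ρ / 2))))
    (fun ρ => ENNReal.ofReal (ρ ^ ((1:ℝ) / 4) * (2 * ρ / (1 + ρ ^ ((7:ℝ) / 9))) *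
        Real.exp (-(s * (ρ ^ 3 + η ^ 2 * (ρ / 2))) - Real.pi * x * ρ / 2)))
    (by fun_prop) (by fun_prop)
  have e1 : ∫⁻ ρ in Set.Ioi (0:ℝ), ENNReal.ofReal (2 * ρ / (1 + ρ ^ ((7:ℝ) / 9)) *
        Real.exp (-(s * (ρ ^ 3 + η ^ 2 * (ρ / 2))) - Real.pi * x * ρ)) =
      ∫⁻ ρ in Set.Ioi (0:ℝ), ENNReal.ofReal (ρ ^ (-(1:ℝ) / 4) * Real.exp (-(Real.pi * x * ρ / 2))) *
        ENNReal.ofReal (ρ ^ ((1:ℝ) / 4) * (2 * ρ / (1 + ρ ^ ((7:ℝ) / 9))) *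
        Real.exp (-(s * (ρ ^ 3 + η ^ 2 * (ρ / 2))) - Real.pi * x * ρ / 2)) := by
    refine setLIntegral_congr_fun measurableSet_Ioi fun ρ hρ => ?_
    have hρ' : 0 < ρ := hρ
    rw [← ENNReal.ofReal_mul (by positivity)]
    congr 1
    have a1 : ρ ^ (-(1:ℝ) / 4) * ρ ^ ((1:ℝ) / 4) = 1 := by
      rw [← Real.rpow_add hρ']; norm_num
    have a2 : Real.exp (-(s * (ρ ^ 3 + η ^ 2 * (ρ / 2))) - Real.pi * x * ρ) =
      Real.exp (-(Real.pi * x * ρ / 2)) *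
        Real.exp (-(s * (ρ ^ 3 + η ^ 2 * (ρ / 2))) - Real.pi * x * ρ / 2) := by
      rw [← Real.exp_add]; ring_nf
    rw [a2]
    linear_combination -(2 * ρ / (1 + ρ ^ ((7:ℝ) / 9)) * (Real.exp (-(Real.pi * x * ρ / 2)) *
        Real.exp (-(s * (ρ ^ 3 + η ^ 2 * (ρ / 2))) - Real.pi * x * ρ / 2))) * a1
  have e2 : ∫⁻ ρ in Set.Ioi (0:ℝ),
      ENNReal.ofReal (ρ ^ (-(1:ℝ) / 4) * Real.exp (-(Real.pi * x * ρ / 2))) ^ 2 =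
      ENNReal.ofReal (x ^ (-(1:ℝ) / 2)) := by
    have hval : ∫ ρ in Set.Ioi (0:ℝ), ρ ^ ((1:ℝ) / 2 - 1) * Real.exp (-((Real.pi * x) * ρ)) =
        x ^ (-(1:ℝ) / 2) := by
      rw [Real.integral_rpow_mul_exp_neg_mul_Ioi (by norm_num) (by positivity),
        Real.Gamma_one_half_eq, one_div, Real.inv_rpow (by positivity),
        Real.mul_rpow hp.le hx.le, Real.sqrt_eq_rpow, neg_div, Real.rpow_neg hx.le]
      have : Real.pi ^ ((1:ℝ) / 2) ≠ 0 := by positivity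
      field_simp
    have hintg : IntegrableOn (fun ρ : ℝ => ρ ^ ((1:ℝ) / 2 - 1) * Real.exp (-((Real.pi * x) * ρ)))
        (Set.Ioi 0) := by
      by_contra h
      rw [integral_undef h] at hval
      have : 0 < x ^ (-(1:ℝ) / 2) := by positivity
      linarith
    rw [← hval, ofReal_integral_eq_lintegral_ofReal hintg
      ((ae_restrict_iff' measurableSet_Ioi).2 (Filter.Eventually.of_forall fun ρ hρ => by
        have : 0 < ρ := hρ
        simp only [Pi.zero_apply]
        positivity))]
    refine setLIntegral_congr_fun measurableSet_Ioi fun ρ hρ => ?_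
    have hρ' : 0 < ρ := hρ
    rw [← ENNReal.ofReal_pow (by positivity)]
    congr 1
    rw [mul_pow, ← Real.exp_nat_mul, ← Real.rpow_natCast, ← Real.rpow_mul hρ'.le]
    norm_num
    left; ring
  rw [e1] at h1
  calc ‖kd δ s x η‖ₑ ^ 2 ≤ (2 * ∫⁻ ρ in Set.Ioi (0:ℝ), ENNReal.ofReal (ρ ^ (-(1:ℝ) / 4) * Real.exp (-(Real.pi * x * ρ / 2))) *
        ENNReal.ofReal (ρ ^ ((1:ℝ) / 4) * (2 * ρ / (1 + ρ ^ ((7:ℝ) / 9))) *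
        Real.exp (-(s * (ρ ^ 3 + η ^ 2 * (ρ / 2))) - Real.pi * x * ρ / 2))) ^ 2 := by gcongr
    _ ≤ 4 * (ENNReal.ofReal (x ^ (-(1:ℝ) / 2)) * ∫⁻ ρ in Set.Ioi (0:ℝ),
        ENNReal.ofReal (ρ ^ ((1:ℝ) / 4) * (2 * ρ / (1 + ρ ^ ((7:ℝ) / 9))) *
        Real.exp (-(s * (ρ ^ 3 + η ^ 2 * (ρ / 2))) - Real.pi * x * ρ / 2)) ^ 2) := by
        rw [mul_pow, ← e2, show (2:ℝ≥0∞) ^ 2 = 4 by norm_num]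
        gcongr
    _ = _ := by
        rw [← lintegral_const_mul' _ _ ENNReal.ofReal_ne_top, ← lintegral_const_mul' _ _ (by norm_num)]
        refine setLIntegral_congr_fun measurableSet_Ioi fun ρ hρ => ?_
        have hρ' : 0 < ρ := hρ
        rw [show (4:ℝ≥0∞) = ENNReal.ofReal 4 by simp, ← ENNReal.ofReal_pow (by positivity),
          ← ENNReal.ofReal_mul (by positivity), ← ENNReal.ofReal_mul (by positivity),
          ← ENNReal.ofReal_mul (by positivity), ← ENNReal.ofReal_mul (by positivity)]
        congr 1
        have a1 : (ρ ^ ((1:ℝ) / 4)) ^ 2 * ρ ^ 2 = ρ ^ ((5:ℝ) / 2) := by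
          rw [← Real.rpow_natCast, ← Real.rpow_natCast ρ, ← Real.rpow_mul hρ'.le,
            ← Real.rpow_add hρ']; norm_num
        have a2 : Real.exp (-(s * (ρ ^ 3 + η ^ 2 * (ρ / 2))) - Real.pi * x * ρ / 2) ^ 2 =
            Real.exp (-(Real.pi * ρ * x)) * Real.exp (-(2 * (ρ ^ 3 + η ^ 2 * (ρ / 2)) * s)) := by
          rw [← Real.exp_nat_mul, ← Real.exp_add]; push_cast; ring_nf
        rw [← a1, mul_pow, a2]
        have hD : (1 + ρ ^ ((7:ℝ) / 9)) ≠ 0 := by positivity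
        generalize 1 + ρ ^ ((7:ℝ) / 9) = D at hD
        field_simp
        ring

lemma lintegral_exp_decay (b : ℝ) (hb : 0 < b) :
    ∫⁻ s in Set.Ioi (0:ℝ), ENNReal.ofReal (Real.exp (-(b * s))) = ENNReal.ofReal b⁻¹ := by
  have h : IntegrableOn (fun s : ℝ => Real.exp (-b * s)) (Set.Ioi 0) :=
    exp_neg_integrableOn_Ioi 0 hb
  have hv : ∫ s in Set.Ioi (0:ℝ), Real.exp (-b * s) = b⁻¹ := by
    have := integral_exp_mul_Ioi (a := -b) (by linarith) 0
    rw [this]; simp [neg_div, one_div]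
  rw [← hv, ofReal_integral_eq_lintegral_ofReal h
    (Filter.Eventually.of_forall fun s => (Real.exp_pos _).le)]
  simp only [neg_mul]

lemma lintegral_cauchy (ρ : ℝ) (hρ : 0 < ρ) :
    ∫⁻ η : ℝ, ENNReal.ofReal ((2 * (ρ ^ 3 + η ^ 2 * (ρ / 2)))⁻¹) =
      ENNReal.ofReal (√2 * Real.pi / 2 * (ρ ^ 2)⁻¹) := by
  have h2 : (0:ℝ) < √2 := by positivity
  have h22 : √2 ^ 2 = 2 := Real.sq_sqrt (by norm_num)
  rw [lintegral_comp_affine _ (by fun_prop) (√2 * ρ) 0 (by positivity), abs_of_pos (by positivity)]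
  have : ∀ v : ℝ, ENNReal.ofReal ((2 * (ρ ^ 3 + (√2 * ρ * v + 0) ^ 2 * (ρ / 2)))⁻¹) =
      ENNReal.ofReal ((2 * ρ ^ 3)⁻¹) * ENNReal.ofReal ((1 + v ^ 2)⁻¹) := by
    intro v
    rw [← ENNReal.ofReal_mul (by positivity), ← mul_inv]
    congr 2
    rw [add_zero, mul_pow, mul_pow, h22]; ring
  simp only [this]
  rw [lintegral_const_mul _ (by fun_prop), ← ofReal_integral_eq_lintegral_ofReal
    integrable_inv_one_add_sq (Filter.Eventually.of_forall fun v => by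
      simp only [Pi.zero_apply]; positivity), integral_univ_inv_one_add_sq,
    ← ENNReal.ofReal_mul (by positivity), ← ENNReal.ofReal_mul (by positivity)]
  congr 1
  field_simp

lemma lintegral_rpow_exp (ρ : ℝ) (hρ : 0 < ρ) :
    ∫⁻ x in Set.Ioi (0:ℝ), ENNReal.ofReal (x ^ (-(1:ℝ) / 2) * Real.exp (-(Real.pi * ρ * x))) =
      ENNReal.ofReal (ρ ^ (-(1:ℝ) / 2)) := by
  have hp := Real.pi_pos
  have hval : ∫ x in Set.Ioi (0:ℝ), x ^ ((1:ℝ) / 2 - 1) * Real.exp (-((Real.pi * ρ) * x)) =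
      ρ ^ (-(1:ℝ) / 2) := by
    rw [Real.integral_rpow_mul_exp_neg_mul_Ioi (by norm_num) (by positivity),
      Real.Gamma_one_half_eq, one_div, Real.inv_rpow (by positivity),
      Real.mul_rpow hp.le hρ.le, Real.sqrt_eq_rpow, neg_div, Real.rpow_neg hρ.le]
    have : Real.pi ^ ((1:ℝ) / 2) ≠ 0 := by positivity
    field_simp
  have hintg : IntegrableOn (fun x : ℝ => x ^ ((1:ℝ) / 2 - 1) * Real.exp (-((Real.pi * ρ) * x)))
      (Set.Ioi 0) := by
    by_contra h
    rw [integral_undef h] at hval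
    have : 0 < ρ ^ (-(1:ℝ) / 2) := by positivity
    linarith
  rw [← hval, ofReal_integral_eq_lintegral_ofReal hintg
    ((ae_restrict_iff' measurableSet_Ioi).2 (Filter.Eventually.of_forall fun x hx => by
      have : 0 < x := hx
      simp only [Pi.zero_apply]
      positivity))]
  norm_num

lemma lintegral_weight : ∫⁻ ρ in Set.Ioi (0:ℝ), ENNReal.ofReal (((1 + ρ ^ ((7:ℝ) / 9)) ^ 2)⁻¹) ≤ 3 := by
  rw [← Set.Ioc_union_Ioi_eq_Ioi (zero_le_one (α := ℝ)), lintegral_union measurableSet_Ioi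
    (Set.disjoint_left.2 fun x h1 h2 => not_lt.2 h1.2 h2)]
  have h1 : ∫⁻ ρ in Set.Ioc (0:ℝ) 1, ENNReal.ofReal (((1 + ρ ^ ((7:ℝ) / 9)) ^ 2)⁻¹) ≤ 1 := by
    calc _ ≤ ∫⁻ ρ in Set.Ioc (0:ℝ) 1, 1 := by
          refine setLIntegral_mono' measurableSet_Ioc fun ρ hρ => ?_
          rw [ENNReal.ofReal_le_one]
          apply inv_le_one_of_one_le₀
          have := hρ.1
          have h0 : 0 ≤ ρ ^ ((7:ℝ) / 9) := by positivity
          nlinarith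
      _ = 1 := by simp
  have hintg : IntegrableOn (fun N : ℝ => N ^ (-(14:ℝ) / 9)) (Set.Ioi 1) :=
    integrableOn_Ioi_rpow_of_lt (by norm_num) (by norm_num)
  have h2 : ∫⁻ ρ in Set.Ioi (1:ℝ), ENNReal.ofReal (((1 + ρ ^ ((7:ℝ) / 9)) ^ 2)⁻¹) ≤ 2 := by
    calc _ ≤ ∫⁻ ρ in Set.Ioi (1:ℝ), ENNReal.ofReal (ρ ^ (-(14:ℝ) / 9)) := by
          refine setLIntegral_mono' measurableSet_Ioi fun ρ hρ => ?_
          have hρ0 : (0:ℝ) < ρ := lt_trans one_pos hρ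
          apply ENNReal.ofReal_le_ofReal
          have e : ρ ^ (-(14:ℝ) / 9) = ((ρ ^ ((7:ℝ) / 9)) ^ 2)⁻¹ := by
            rw [← Real.rpow_natCast, ← Real.rpow_mul hρ0.le, ← Real.rpow_neg hρ0.le]; norm_num
          rw [e]
          have h0 : 0 < ρ ^ ((7:ℝ) / 9) := by positivity
          gcongr
          linarith
      _ ≤ 2 := by
          rw [← ofReal_integral_eq_lintegral_ofReal hintg
            ((ae_restrict_iff' measurableSet_Ioi).2 (Filter.Eventually.of_forall fun x hx => by
              have : (0:ℝ) < x := lt_trans one_pos hx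
              simp only [Pi.zero_apply]
              positivity)), integral_Ioi_rpow_of_lt (by norm_num) (by norm_num)]
          rw [show (2:ℝ≥0∞) = ENNReal.ofReal 2 by simp]
          apply ENNReal.ofReal_le_ofReal
          norm_num
  calc _ ≤ (1:ℝ≥0∞) + 2 := add_le_add h1 h2
    _ = 3 := by norm_num

/-- Square integrability of the retarded kernel, uniformly in the regularisation. -/
lemma kd_l2 (δ : ℝ) (hδ : 0 < δ) :
    ∫⁻ x in Set.Ioi (0:ℝ), ∫⁻ η, ∫⁻ s in Set.Ioi (0:ℝ), ‖kd δ s x η‖ₑ ^ 2 ≤ ENNReal.ofReal 1000 := by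
  set G : ℝ → ℝ≥0∞ := fun ρ => ENNReal.ofReal (16 * ρ ^ ((5:ℝ) / 2) / (1 + ρ ^ ((7:ℝ) / 9)) ^ 2) with hG
  set A : ℝ → ℝ → ℝ≥0∞ := fun x ρ =>
    ENNReal.ofReal (x ^ (-(1:ℝ) / 2) * Real.exp (-(Real.pi * ρ * x))) with hA
  set B : ℝ → ℝ → ℝ → ℝ≥0∞ := fun η s ρ =>
    ENNReal.ofReal (Real.exp (-(2 * (ρ ^ 3 + η ^ 2 * (ρ / 2)) * s))) with hB
  -- The `s`-integral of the exponential.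
  have hs : ∀ x ∈ Set.Ioi (0:ℝ), ∀ η, ∫⁻ s in Set.Ioi (0:ℝ), ‖kd δ s x η‖ₑ ^ 2 ≤
      ∫⁻ ρ in Set.Ioi (0:ℝ), G ρ * (A x ρ * ENNReal.ofReal ((2 * (ρ ^ 3 + η ^ 2 * (ρ / 2)))⁻¹)) := by
    intro x hx η
    calc _ ≤ ∫⁻ s in Set.Ioi (0:ℝ), ∫⁻ ρ in Set.Ioi (0:ℝ), G ρ * (A x ρ * B η s ρ) :=
          setLIntegral_mono' measurableSet_Ioi fun s hs => kd_sq_le δ s x η hδ (le_of_lt hs) hx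
      _ = ∫⁻ ρ in Set.Ioi (0:ℝ), ∫⁻ s in Set.Ioi (0:ℝ), G ρ * (A x ρ * B η s ρ) := by
          apply lintegral_lintegral_swap
          simp only [hG, hA, hB]
          fun_prop
      _ = _ := by
          refine setLIntegral_congr_fun measurableSet_Ioi fun ρ hρ => ?_
          have hρ' : 0 < ρ := hρ
          rw [lintegral_const_mul' _ _ ENNReal.ofReal_ne_top,
            lintegral_const_mul' _ _ ENNReal.ofReal_ne_top,
            lintegral_exp_decay _ (by positivity)]
  -- The `η`-integral is a Cauchy integral.
  have hη : ∀ x ∈ Set.Ioi (0:ℝ), ∫⁻ η, ∫⁻ s in Set.Ioi (0:ℝ), ‖kd δ s x η‖ₑ ^ 2 ≤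
      ∫⁻ ρ in Set.Ioi (0:ℝ), G ρ * (A x ρ * ENNReal.ofReal (√2 * Real.pi / 2 * (ρ ^ 2)⁻¹)) := by
    intro x hx
    calc _ ≤ ∫⁻ η, ∫⁻ ρ in Set.Ioi (0:ℝ),
          G ρ * (A x ρ * ENNReal.ofReal ((2 * (ρ ^ 3 + η ^ 2 * (ρ / 2)))⁻¹)) :=
          lintegral_mono fun η => hs x hx η
      _ = ∫⁻ ρ in Set.Ioi (0:ℝ), ∫⁻ η,
          G ρ * (A x ρ * ENNReal.ofReal ((2 * (ρ ^ 3 + η ^ 2 * (ρ / 2)))⁻¹)) := by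
          apply lintegral_lintegral_swap
          simp only [hG, hA]
          fun_prop
      _ = _ := by
          refine setLIntegral_congr_fun measurableSet_Ioi fun ρ hρ => ?_
          rw [lintegral_const_mul' _ _ ENNReal.ofReal_ne_top,
            lintegral_const_mul' _ _ ENNReal.ofReal_ne_top, lintegral_cauchy ρ hρ]
  calc _ ≤ ∫⁻ x in Set.Ioi (0:ℝ), ∫⁻ ρ in Set.Ioi (0:ℝ),
        G ρ * (A x ρ * ENNReal.ofReal (√2 * Real.pi / 2 * (ρ ^ 2)⁻¹)) :=
        setLIntegral_mono' measurableSet_Ioi hη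
    _ = ∫⁻ ρ in Set.Ioi (0:ℝ), ∫⁻ x in Set.Ioi (0:ℝ),
        G ρ * (A x ρ * ENNReal.ofReal (√2 * Real.pi / 2 * (ρ ^ 2)⁻¹)) := by
        apply lintegral_lintegral_swap
        simp only [hG, hA]
        fun_prop
    _ = ∫⁻ ρ in Set.Ioi (0:ℝ), ENNReal.ofReal (8 * √2 * Real.pi) *
          ENNReal.ofReal (((1 + ρ ^ ((7:ℝ) / 9)) ^ 2)⁻¹) := by
        refine setLIntegral_congr_fun measurableSet_Ioi fun ρ hρ => ?_
        have hρ' : 0 < ρ := hρ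
        have hp := Real.pi_pos
        rw [lintegral_const_mul' _ _ ENNReal.ofReal_ne_top,
            lintegral_mul_const' _ _ ENNReal.ofReal_ne_top, lintegral_rpow_exp ρ hρ,
            ← ENNReal.ofReal_mul (by positivity), ← ENNReal.ofReal_mul (by positivity),
            ← ENNReal.ofReal_mul (by positivity)]
        congr 1
        -- All powers of `ρ` from the three integrations cancel, which leaves the weight alone.
        have a1 : ρ ^ ((5:ℝ) / 2) * ρ ^ (-(1:ℝ) / 2) = ρ ^ 2 := by
          rw [← Real.rpow_add hρ', ← Real.rpow_natCast]; norm_num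
        have : 16 * ρ ^ ((5:ℝ) / 2) / (1 + ρ ^ ((7:ℝ) / 9)) ^ 2 *
          (ρ ^ (-(1:ℝ) / 2) * (√2 * Real.pi / 2 * (ρ ^ 2)⁻¹)) =
          8 * √2 * Real.pi * (ρ ^ ((5:ℝ) / 2) * ρ ^ (-(1:ℝ) / 2) * (ρ ^ 2)⁻¹) *
            ((1 + ρ ^ ((7:ℝ) / 9)) ^ 2)⁻¹ := by ring
        rw [this, a1, mul_inv_cancel₀ (by positivity), mul_one]
    _ ≤ ENNReal.ofReal (8 * √2 * Real.pi) * 3 := by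
        rw [lintegral_const_mul' _ _ ENNReal.ofReal_ne_top]
        gcongr
        exact lintegral_weight
    _ ≤ _ := by
        have hp := Real.pi_pos
        rw [show (3:ℝ≥0∞) = ENNReal.ofReal 3 by simp, ← ENNReal.ofReal_mul (by positivity)]
        apply ENNReal.ofReal_le_ofReal
        have h2 : √2 ≤ 2 := by rw [Real.sqrt_le_left (by norm_num)]; norm_num
        have := Real.pi_lt_four
        nlinarith [Real.sqrt_nonneg 2]

/-- A crude bound, depending on `δ`, that justifies the applications of Fubini's theorem. -/
lemma kd_decay (δ s x η : ℝ) (hδ : 0 < δ) :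
    ‖kd δ s x η‖ ≤ (1 + |η| ^ ((7:ℝ) / 9))⁻¹ * ∫ ξ : ℝ, ‖ξ * Real.exp (-δ * ξ ^ 2)‖ := by
  rw [← integral_const_mul]
  refine norm_integral_le_of_norm_le ((integrable_mul_exp_neg_mul_sq hδ).norm.const_mul _)
    (Filter.Eventually.of_forall fun ξ => ?_)
  rw [norm_mul, norm_ee, mul_one, Complex.norm_real, norm_mul, norm_mul, norm_div,
    Real.norm_of_nonneg (Wt_pos ξ η).le, ← mul_assoc]
  refine mul_le_mul_of_nonneg_right ?_ (norm_nonneg _)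
  rw [div_eq_inv_mul]
  have h0 : 0 ≤ |η| ^ ((7:ℝ) / 9) := by positivity
  have h1 : 0 ≤ |ξ| ^ ((7:ℝ) / 9) := by positivity
  gcongr
  unfold Wt; linarith

end ZK

/-! ### Plancherel on the line -/

namespace ZK

open FourierTransform in
lemma fourier_ee (f : ℝ → ℂ) (ξ : ℝ) : 𝓕 f ξ = ∫ x, f x * ee (-(2 * Real.pi * (x * ξ))) := by
  rw [Real.fourier_real_eq_integral_exp_smul]
  congr 1; ext x
  rw [smul_eq_mul, mul_comm, ee]; congr 3; push_cast; ring

open FourierTransform in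
lemma fourierInv_ee (f : ℝ → ℂ) (ξ : ℝ) : 𝓕⁻ f ξ = ∫ x, f x * ee (2 * Real.pi * (x * ξ)) := by
  rw [Real.fourierInv_eq_fourier_neg, fourier_ee]
  congr 1; ext x; congr 2; ring

open FourierTransform in
/-- Plancherel for functions in `L¹ ∩ L²`: the `L²` Fourier transform is the Fourier integral. -/
lemma plancherel (f : ℝ → ℂ) (h1 : Integrable f) (h2 : MemLp f 2) :
    ∫⁻ ξ, ‖∫ x, f x * ee (-(2 * Real.pi * (x * ξ)))‖ₑ ^ 2 = ∫⁻ x, ‖f x‖ₑ ^ 2 := by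
  set F : Lp ℂ 2 (volume : Measure ℝ) := 𝓕 (h2.toLp f) with hF
  have hc : Continuous (𝓕 f) :=
    VectorFourier.fourierIntegral_continuous Real.continuous_fourierChar continuous_inner h1
  have key : ∀ᵐ x, F x - 𝓕 f x = 0 := by
    apply ae_eq_zero_of_integral_contDiff_smul_eq_zero
    · exact ((Lp.memLp F).locallyIntegrable (by norm_num)).sub hc.locallyIntegrable
    · intro g hg hgs
      have hgs' : HasCompactSupport (fun x => (g x : ℂ)) := hgs.comp_left (g := fun r : ℝ => (r:ℂ)) rfl
      have hgd : ContDiff ℝ ((⊤ : ℕ∞) : WithTop ℕ∞) (fun x => (g x : ℂ)) := Complex.ofRealCLM.contDiff.comp hg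
      set φ : SchwartzMap ℝ ℂ := hgs'.toSchwartzMap hgd with hφ
      have hφx : ∀ x, φ x = (g x : ℂ) := fun x => rfl
      have d1 := congrArg (fun u => u φ) (Lp.fourier_toTemperedDistribution_eq (h2.toLp f))
      simp only [TemperedDistribution.fourier_apply, Lp.toTemperedDistribution_apply] at d1
      rw [← hF] at d1
      have d2 : ∫ x, (𝓕 φ) x • (h2.toLp f) x = ∫ x, φ x • 𝓕 f x := by
        calc ∫ x, (𝓕 φ) x • (h2.toLp f) x = ∫ x, (𝓕 (φ : ℝ → ℂ)) x • f x := by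
              apply integral_congr_ae
              filter_upwards [h2.coeFn_toLp] with x hx
              rw [hx, SchwartzMap.fourier_coe]
          _ = _ := by
              have := VectorFourier.integral_fourierIntegral_smul_eq_flip (L := innerₗ ℝ)
                (f := (φ : ℝ → ℂ)) (g := f)
                Real.continuous_fourierChar continuous_inner (SchwartzMap.integrable (μ := volume) φ) h1
              rw [flip_innerₗ] at this
              exact this
      rw [d2] at d1
      have i1 : Integrable (fun x => φ x • F x) := by
        have := (φ.memLp 2 volume).integrable_mul (Lp.memLp F)
        exact this
      have i2 : Integrable (fun x => φ x • 𝓕 f x) := by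
        exact ((φ.continuous.smul hc).integrable_of_hasCompactSupport
          (HasCompactSupport.smul_right (f := (φ : ℝ → ℂ)) hgs'))
      calc _ = ∫ x, (φ x • F x - φ x • 𝓕 f x) := by
            congr 1; ext x; rw [← smul_sub, hφx]; simp
        _ = 0 := by rw [integral_sub i1 i2, d1, sub_self]
  have e1 : eLpNorm F 2 volume = eLpNorm f 2 volume := by
    have := congrArg ENNReal.ofReal (Lp.norm_fourier_eq (h2.toLp f))
    rw [← hF, Lp.norm_def, Lp.norm_def, ENNReal.ofReal_toReal (Lp.eLpNorm_ne_top _),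
      ENNReal.ofReal_toReal (Lp.eLpNorm_ne_top _), eLpNorm_congr_ae h2.coeFn_toLp] at this
    exact this
  have sq : ∀ u : ℝ → ℂ, eLpNorm u 2 volume ^ 2 = ∫⁻ x, ‖u x‖ₑ ^ 2 := by
    intro u
    have := eLpNorm_nnreal_pow_eq_lintegral (f := u) (μ := volume) (p := 2) (by norm_num)
    simpa only [NNReal.coe_ofNat, ENNReal.coe_ofNat, ENNReal.rpow_ofNat] using this
  rw [← sq f, ← e1, sq]
  apply lintegral_congr_ae
  filter_upwards [key] with x hx
  rw [sub_eq_zero.1 hx, fourier_ee]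

end ZK

/-! ### Local smoothing -/

namespace ZK

/-- Lebesgue measure in `(τ, η)` on the strip `[0,T] × ℝ`. -/
abbrev nu (T : ℝ) : Measure (ℝ × ℝ) :=
  ((volume : Measure ℝ).restrict (Set.Icc 0 T)).prod (volume : Measure ℝ)

/-- A square integrable majorant in `η` of the multiplier `1 / Wt`. -/
def bw (η : ℝ) : ℝ := (1 + |η| ^ ((7:ℝ) / 9))⁻¹

lemma bw_pos (η : ℝ) : 0 < bw η := by unfold bw; positivity

lemma continuous_bw : Continuous bw := by
  unfold bw
  refine Continuous.inv₀ ?_ fun η => by positivity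
  exact continuous_const.add (continuous_abs.rpow_const fun _ => Or.inr (by norm_num))

lemma lintegral_bw_sq : ∫⁻ η, ‖bw η‖ₑ ^ 2 ≤ 6 := by
  rw [lintegral_even _ (fun x => by simp [bw])]
  calc _ = 2 * ∫⁻ ρ in Set.Ioi (0:ℝ), ENNReal.ofReal (((1 + ρ ^ ((7:ℝ) / 9)) ^ 2)⁻¹) := by
        congr 1
        refine setLIntegral_congr_fun measurableSet_Ioi fun η hη => ?_
        have h : (0:ℝ) < η := hη
        rw [Real.enorm_of_nonneg (bw_pos η).le, ← ENNReal.ofReal_pow (bw_pos η).le, bw,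
          abs_of_pos h, inv_pow]
    _ ≤ 2 * 3 := by gcongr; exact lintegral_weight
    _ = 6 := by norm_num

lemma memLp_two_iff {α E : Type*} [MeasurableSpace α] [NormedAddCommGroup E] {μ : Measure α}
    {f : α → E} (hf : AEStronglyMeasurable f μ) :
    MemLp f 2 μ ↔ ∫⁻ x, ‖f x‖ₑ ^ 2 ∂μ < ∞ := by
  have h := eLpNorm_nnreal_pow_eq_lintegral (f := f) (μ := μ) (p := 2) (by norm_num)
  simp only [NNReal.coe_ofNat, ENNReal.coe_ofNat, ENNReal.rpow_ofNat] at h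
  rw [← h, MemLp, and_iff_right hf]
  simp

lemma memLp_bw (T : ℝ) : MemLp (fun p : ℝ × ℝ => bw p.2) 2 (nu T) := by
  refine (memLp_two_iff (f := fun p : ℝ × ℝ => bw p.2)
    (continuous_bw.comp continuous_snd).aestronglyMeasurable).2 ?_
  rw [lintegral_prod _ (by
    have := continuous_bw
    fun_prop)]
  simp only [lintegral_const]
  refine ENNReal.mul_lt_top (lt_of_le_of_lt lintegral_bw_sq (by norm_num)) ?_
  simp

/-- Bessel's inequality in `τ` combined with the change of variable `σ = ξ(ξ²+η²)`: the local
smoothing gain of one derivative in `ξ`. -/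
lemma smoothing_fixed (T η : ℝ) (f : ℝ → ℂ) (hf : Measurable f) :
    ∫⁻ ξ : ℝ, ENNReal.ofReal (ξ ^ 2) *
      ‖∫ τ in Set.Icc 0 T, ee (-(τ * (ξ * (ξ ^ 2 + η ^ 2)))) * f τ‖ₑ ^ 2 ≤
      ENNReal.ofReal (2 * Real.pi) * ∫⁻ τ in Set.Icc 0 T, ‖f τ‖ₑ ^ 2 := by
  have hp := Real.pi_pos
  -- For sources that are not square integrable the right-hand side is infinite.
  by_cases hfin : ∫⁻ τ in Set.Icc 0 T, ‖f τ‖ₑ ^ 2 = ∞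
  · rw [hfin, ENNReal.mul_top (by positivity)]; exact le_top
  have hL2 : MemLp f 2 (volume.restrict (Set.Icc 0 T)) :=
    (memLp_two_iff hf.aestronglyMeasurable).2 (lt_top_iff_ne_top.2 hfin)
  have hL1 : IntegrableOn f (Set.Icc 0 T) := hL2.integrable (by norm_num)
  set F : ℝ → ℂ := (Set.Icc 0 T).indicator f with hF
  have hF1 : Integrable F := (integrable_indicator_iff measurableSet_Icc).2 hL1
  have hF2 : MemLp F 2 := (memLp_indicator_iff_restrict measurableSet_Icc).2 hL2
  set Φ : ℝ → ℂ := fun σ => ∫ τ, F τ * ee (-(τ * σ)) with hΦ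
  have hΦm : Measurable Φ := by
    have : StronglyMeasurable (fun q : ℝ × ℝ => F q.2 * ee (-(q.2 * q.1))) := by
      apply Measurable.stronglyMeasurable
      have h1 : Measurable F := hf.indicator measurableSet_Icc
      exact (h1.comp measurable_snd).mul (measurable_ee.comp (by fun_prop))
    exact this.integral_prod_right'.measurable
  have e0 : ∀ σ, ∫ τ in Set.Icc 0 T, ee (-(τ * σ)) * f τ = Φ σ := by
    intro σ
    rw [hΦ, ← integral_indicator measurableSet_Icc]
    congr 1; ext τ
    simp only [hF, Set.indicator]
    split_ifs <;> ring
  simp_rw [e0]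
  have hder : ∀ ξ ∈ (Set.univ : Set ℝ), HasDerivWithinAt (fun ξ : ℝ => ξ * (ξ ^ 2 + η ^ 2))
      (3 * ξ ^ 2 + η ^ 2) Set.univ ξ := by
    intro ξ _
    have : HasDerivAt (fun ξ : ℝ => ξ * (ξ ^ 2 + η ^ 2)) (1 * (ξ ^ 2 + η ^ 2) + ξ * (2 * ξ)) ξ := by
      have h := ((hasDerivAt_id' ξ).fun_mul (((hasDerivAt_pow 2 ξ)).add_const (η ^ 2)))
      simpa using h
    rw [show 3 * ξ ^ 2 + η ^ 2 = 1 * (ξ ^ 2 + η ^ 2) + ξ * (2 * ξ) by ring]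
    exact this.hasDerivWithinAt
  have hinj : Set.InjOn (fun ξ : ℝ => ξ * (ξ ^ 2 + η ^ 2)) Set.univ := by
    intro a _ b _ hab
    simp only at hab
    by_contra hne
    have h1 : (a - b) * (a ^ 2 + a * b + b ^ 2 + η ^ 2) = 0 := by linear_combination hab
    have h2 : a ^ 2 + a * b + b ^ 2 + η ^ 2 = 0 := by
      rcases mul_eq_zero.1 h1 with h | h
      · exact absurd (sub_eq_zero.1 h) hne
      · exact h
    have ha : a = 0 := by nlinarith [sq_nonneg (a + 2 * b), sq_nonneg η, sq_nonneg a]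
    have hb : b = 0 := by nlinarith [sq_nonneg (b + 2 * a), sq_nonneg η, sq_nonneg b]
    exact hne (ha.trans hb.symm)
  have hcv := lintegral_image_eq_lintegral_abs_deriv_mul MeasurableSet.univ hder hinj
    (fun σ => ‖Φ σ‖ₑ ^ 2)
  calc ∫⁻ ξ : ℝ, ENNReal.ofReal (ξ ^ 2) * ‖Φ (ξ * (ξ ^ 2 + η ^ 2))‖ₑ ^ 2
      ≤ ∫⁻ ξ in Set.univ, ENNReal.ofReal |3 * ξ ^ 2 + η ^ 2| * ‖Φ (ξ * (ξ ^ 2 + η ^ 2))‖ₑ ^ 2 := by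
        rw [Measure.restrict_univ]
        gcongr with ξ
        rw [abs_of_nonneg (by positivity)]
        nlinarith [sq_nonneg ξ, sq_nonneg η]
    _ ≤ ∫⁻ σ, ‖Φ σ‖ₑ ^ 2 := by rw [← hcv]; exact setLIntegral_le_lintegral _ _
    _ = ENNReal.ofReal (2 * Real.pi) * ∫⁻ v, ‖Φ (2 * Real.pi * v)‖ₑ ^ 2 := by
        have := lintegral_comp_affine (fun σ => ‖Φ σ‖ₑ ^ 2) (by fun_prop) (2 * Real.pi) 0
          (by positivity)
        simpa [abs_of_pos hp] using this
    _ = ENNReal.ofReal (2 * Real.pi) * ∫⁻ τ, ‖F τ‖ₑ ^ 2 := by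
        rw [← plancherel F hF1 hF2]
        congr 1; congr 1; ext v
        simp only [hΦ]
        congr 3; ext τ; congr 2; ring
    _ = _ := by
        rw [← lintegral_indicator measurableSet_Icc]
        congr 1; congr 1; ext τ
        simp only [hF, Set.indicator]
        split_ifs <;> simp

/-- Local smoothing: `smoothing_fixed` integrated in `η`. -/
lemma smoothing (T : ℝ) (h : ℝ × ℝ → ℂ) (hm : Measurable h) :
    ∫⁻ ξ : ℝ, ∫⁻ η : ℝ, ENNReal.ofReal (ξ ^ 2) *
      ‖∫ τ in Set.Icc 0 T, ee (-(τ * (ξ * (ξ ^ 2 + η ^ 2)))) * h (τ, η)‖ₑ ^ 2 ≤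
      ENNReal.ofReal (2 * Real.pi) * ∫⁻ p, ‖h p‖ₑ ^ 2 ∂(nu T) := by
  have hmeas : Measurable (fun q : ℝ × ℝ => ENNReal.ofReal (q.1 ^ 2) *
      ‖∫ τ in Set.Icc 0 T, ee (-(τ * (q.1 * (q.1 ^ 2 + q.2 ^ 2)))) * h (τ, q.2)‖ₑ ^ 2) := by
    have : StronglyMeasurable (fun q : (ℝ × ℝ) × ℝ =>
        ee (-(q.2 * (q.1.1 * (q.1.1 ^ 2 + q.1.2 ^ 2)))) * h (q.2, q.1.2)) := by
      apply Measurable.stronglyMeasurable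
      exact (measurable_ee.comp (by fun_prop)).mul (hm.comp (by fun_prop))
    have h2 := (this.integral_prod_right' (ν := volume.restrict (Set.Icc 0 T))).measurable
    fun_prop
  rw [lintegral_lintegral_swap hmeas.aemeasurable, lintegral_prod_symm _ (by fun_prop),
    ← lintegral_const_mul' _ _ ENNReal.ofReal_ne_top]
  gcongr with η
  exact smoothing_fixed T η (fun τ => h (τ, η)) (hm.comp (by fun_prop))

end ZK

/-! ### The part where `x` and `t - τ` have the same sign -/

namespace ZK

/-- The signed indicator `1_{τ<t} - 1_{x≤0}`, supported where `x` and `t - τ` have the same sign. -/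
def sg (x t τ : ℝ) : ℂ := if 0 < x then (if τ < t then 1 else 0) else (if τ < t then 0 else -1)

/-- The causal cutoff as a cutoff independent of `t - τ` plus a part supported where `x` and `t - τ`
have the same sign. -/
lemma sg_eq (x t τ : ℝ) : (if τ < t then (1:ℂ) else 0) = (if 0 < x then 0 else 1) + sg x t τ := by
  unfold sg; split_ifs <;> norm_num

lemma norm_sg_le (x t τ : ℝ) : ‖sg x t τ‖ ≤ 1 := by
  unfold sg; split_ifs <;> norm_num

lemma measurable_sg : Measurable (fun q : ℝ × ℝ × ℝ => sg q.1 q.2.1 q.2.2) := by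
  unfold sg
  have h1 : MeasurableSet {q : ℝ × ℝ × ℝ | 0 < q.1} := measurableSet_lt (by fun_prop) (by fun_prop)
  have h2 : MeasurableSet {q : ℝ × ℝ × ℝ | q.2.2 < q.2.1} :=
    measurableSet_lt (by fun_prop) (by fun_prop)
  exact Measurable.ite h1 (Measurable.ite h2 measurable_const measurable_const)
    (Measurable.ite h2 measurable_const measurable_const)

@[fun_prop]
lemma measurable_sg' {α : Type*} [MeasurableSpace α] {f g k : α → ℝ} (hf : Measurable f)
    (hg : Measurable g) (hk : Measurable k) : Measurable (fun a => sg (f a) (g a) (k a)) := by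
  have h3 := Measurable.comp measurable_sg (hf.prodMk (hg.prodMk hk))
  exact h3

@[fun_prop]
lemma measurable_kd' {α : Type*} [MeasurableSpace α] {f g k : α → ℝ} (δ : ℝ) (hf : Measurable f)
    (hg : Measurable g) (hk : Measurable k) : Measurable (fun a => kd δ (f a) (g a) (k a)) := by
  have h3 := Measurable.comp (measurable_kd δ) (hf.prodMk (hg.prodMk hk))
  exact h3

@[fun_prop]
lemma measurable_ee' {α : Type*} [MeasurableSpace α] {f : α → ℝ} (hf : Measurable f) :
    Measurable (fun a => ee (f a)) := measurable_ee.comp hf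

/-- On the support of `sg` the kernel is even up to sign in `(s, x)` jointly, so the case
`x, t - τ < 0` reduces to `x, t - τ > 0`. -/
lemma sg_kd_sq (δ T t x : ℝ) (hx : x ≠ 0) :
    ∫⁻ p, ‖sg x t p.1 * kd δ (t - p.1) x p.2‖ₑ ^ 2 ∂(nu T) ≤
      ∫⁻ η, ∫⁻ s in Set.Ioi (0:ℝ), ‖kd δ s |x| η‖ₑ ^ 2 := by
  have hm : Measurable (fun p : ℝ × ℝ => sg x t p.1 * kd δ (t - p.1) x p.2) := by
    fun_prop
  rw [lintegral_prod_symm _ (by fun_prop)]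
  refine lintegral_mono fun η => ?_
  refine (setLIntegral_le_lintegral _ _).trans ?_
  rcases lt_or_gt_of_ne hx with h | h
  · rw [setLIntegral_congr (Ioi_ae_eq_Ici (a := (0:ℝ))), ← lintegral_indicator measurableSet_Ici,
      ← lintegral_sub_right_eq_self
      ((Set.Ici (0:ℝ)).indicator fun s => ‖kd δ s |x| η‖ₑ ^ 2) t]
    gcongr with τ
    unfold sg
    rw [if_neg (not_lt.2 h.le)]
    by_cases hτ : τ < t
    · simp [hτ]
    · have : (τ - t) ∈ Set.Ici (0:ℝ) := by simpa using hτ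
      rw [Set.indicator_of_mem this, if_neg hτ, abs_of_neg h]
      have e := kd_neg δ (τ - t) (-x) η
      rw [neg_neg, neg_sub] at e
      simp [e]
  · rw [← lintegral_indicator measurableSet_Ioi, ← lintegral_sub_left_eq_self
      ((Set.Ioi (0:ℝ)).indicator fun s => ‖kd δ s |x| η‖ₑ ^ 2) t]
    gcongr with τ
    unfold sg
    rw [if_pos h]
    by_cases hτ : τ < t
    · have : (t - τ) ∈ Set.Ioi (0:ℝ) := by simpa using hτ
      rw [Set.indicator_of_mem this, if_pos hτ, abs_of_pos h]
      simp
    · simp [hτ]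

/-- The part of the kernel on which `x` and `t - τ` have the same sign is square integrable. -/
lemma diag_part (δ T : ℝ) (hδ : 0 < δ) (c : ℝ → ℂ) (hcm : Measurable c) (t y : ℝ → ℝ)
    (ht : Measurable t) (hy : Measurable y) (h : ℝ × ℝ → ℂ) (hm : Measurable h) :
    ‖∫ x, c x * ∫ p, sg x (t x) p.1 *
        (ee (2 * Real.pi * (y x * p.2)) * kd δ (t x - p.1) x p.2 * h p) ∂(nu T)‖ₑ ^ 2 ≤
      2000 * (∫⁻ x, ‖c x‖ₑ ^ 2) * ∫⁻ p, ‖h p‖ₑ ^ 2 ∂(nu T) := by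
  set E : ℝ → ℂ := fun x => ∫ p, sg x (t x) p.1 *
        (ee (2 * Real.pi * (y x * p.2)) * kd δ (t x - p.1) x p.2 * h p) ∂(nu T) with hE
  have hjm : Measurable (fun q : ℝ × (ℝ × ℝ) => sg q.1 (t q.1) q.2.1 *
        (ee (2 * Real.pi * (y q.1 * q.2.2)) * kd δ (t q.1 - q.2.1) q.1 q.2.2 * h q.2)) := by
    fun_prop
  have hEm : Measurable E := hjm.stronglyMeasurable.integral_prod_right'.measurable
  have hEb : ∀ x, x ≠ 0 → ‖E x‖ₑ ^ 2 ≤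
      (∫⁻ η, ∫⁻ s in Set.Ioi (0:ℝ), ‖kd δ s |x| η‖ₑ ^ 2) * ∫⁻ p, ‖h p‖ₑ ^ 2 ∂(nu T) := by
    intro x hx
    have hkm : Measurable (fun p : ℝ × ℝ => sg x (t x) p.1 * kd δ (t x - p.1) x p.2) := by
      fun_prop
    calc ‖E x‖ₑ ^ 2 ≤ (∫⁻ p, ‖sg x (t x) p.1 * kd δ (t x - p.1) x p.2‖ₑ * ‖h p‖ₑ ∂(nu T)) ^ 2 := by
          gcongr
          refine (enorm_integral_le_lintegral_enorm _).trans (le_of_eq ?_)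
          congr 1; ext p
          have e1 : ‖ee (2 * Real.pi * (y x * p.2))‖ₑ = 1 := by
            rw [← ofReal_norm, norm_ee]; simp
          rw [enorm_mul, enorm_mul, enorm_mul, e1, one_mul, enorm_mul, mul_assoc]
      _ ≤ _ := cs_sq _ _ _ (by fun_prop) (by fun_prop)
      _ ≤ _ := by gcongr; exact sg_kd_sq δ T (t x) x hx
  calc _ ≤ (∫⁻ x, ‖c x‖ₑ * ‖E x‖ₑ) ^ 2 := by
        gcongr
        refine (enorm_integral_le_lintegral_enorm _).trans (le_of_eq ?_)
        congr 1; ext x; rw [enorm_mul]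
    _ ≤ (∫⁻ x, ‖c x‖ₑ ^ 2) * ∫⁻ x, ‖E x‖ₑ ^ 2 := cs_sq _ _ _ (by fun_prop) (by fun_prop)
    _ ≤ (∫⁻ x, ‖c x‖ₑ ^ 2) * (2000 * ∫⁻ p, ‖h p‖ₑ ^ 2 ∂(nu T)) := by
        gcongr
        have hae : ∀ᵐ x : ℝ, x ≠ 0 := by simp [ae_iff]
        calc _ ≤ ∫⁻ x : ℝ, (∫⁻ η, ∫⁻ s in Set.Ioi (0:ℝ), ‖kd δ s |x| η‖ₑ ^ 2) *
              ∫⁻ p, ‖h p‖ₑ ^ 2 ∂(nu T) := lintegral_mono_ae (hae.mono hEb)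
          _ = (∫⁻ x : ℝ, (∫⁻ η, ∫⁻ s in Set.Ioi (0:ℝ), ‖kd δ s |x| η‖ₑ ^ 2)) *
              ∫⁻ p, ‖h p‖ₑ ^ 2 ∂(nu T) := by
              apply lintegral_mul_const
              have h0 : Measurable (fun q : (ℝ × ℝ) × ℝ => ‖kd δ q.2 |q.1.1| q.1.2‖ₑ ^ 2) := by
                have : Measurable (fun q : (ℝ × ℝ) × ℝ => |q.1.1|) :=
                  continuous_abs.measurable.comp (by fun_prop)
                fun_prop
              exact (h0.lintegral_prod_right' (ν := volume.restrict (Set.Ioi 0))).lintegral_prod_right'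
          _ ≤ _ := by
              gcongr
              rw [lintegral_even _ (fun x => by simp only [abs_neg])]
              calc _ ≤ (2:ℝ≥0∞) * ENNReal.ofReal 1000 := by
                    gcongr
                    refine le_trans (le_of_eq ?_) (kd_l2 δ hδ)
                    refine setLIntegral_congr_fun measurableSet_Ioi fun x hx => ?_
                    rw [abs_of_pos hx]
                _ = 2000 := by
                    rw [show ENNReal.ofReal 1000 = 1000 by simp]; norm_num
    _ = _ := by ring

end ZK

/-! ### Sources concentrated on a line -/

namespace ZK

/-- The real amplitude of the regularised kernel `kd`. -/
def am (δ ξ η : ℝ) : ℝ := ξ / Wt ξ η * Real.exp (-δ * ξ ^ 2)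

@[fun_prop]
lemma measurable_Wt' {α : Type*} [MeasurableSpace α] {f g : α → ℝ} (hf : Measurable f)
    (hg : Measurable g) : Measurable (fun a => Wt (f a) (g a)) := by
  have h3 := Measurable.comp continuous_Wt.measurable (hf.prodMk hg)
  exact h3

@[fun_prop]
lemma measurable_am' {α : Type*} [MeasurableSpace α] {f g : α → ℝ} (δ : ℝ) (hf : Measurable f)
    (hg : Measurable g) : Measurable (fun a => am δ (f a) (g a)) := by
  unfold am; fun_prop

lemma kd_eq (δ s x η : ℝ) : kd δ s x η = ∫ ξ : ℝ, (am δ ξ η : ℂ) *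
    ee (s * (ξ * (ξ ^ 2 + η ^ 2)) + 2 * Real.pi * (x * ξ)) := rfl

lemma norm_am_le (δ ξ η : ℝ) : |am δ ξ η| ≤ bw η * ‖ξ * Real.exp (-δ * ξ ^ 2)‖ := by
  unfold am
  rw [abs_mul, abs_div, abs_of_pos (Wt_pos ξ η), norm_mul, ← mul_assoc, Real.norm_eq_abs,
    Real.norm_eq_abs]
  refine mul_le_mul_of_nonneg_right ?_ (abs_nonneg _)
  rw [div_eq_inv_mul]
  unfold bw
  have h0 : 0 ≤ |η| ^ ((7:ℝ) / 9) := by positivity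
  have h1 : 0 ≤ |ξ| ^ ((7:ℝ) / 9) := by positivity
  gcongr
  unfold Wt; linarith

lemma abs_am_le (δ ξ η : ℝ) (hδ : 0 < δ) : |am δ ξ η| ≤ (Wt ξ η)⁻¹ * |ξ| := by
  unfold am
  rw [abs_mul, abs_div, abs_of_pos (Wt_pos ξ η), div_eq_inv_mul, Real.abs_exp]
  have h1 : Real.exp (-δ * ξ ^ 2) ≤ 1 := by
    rw [Real.exp_le_one_iff]; nlinarith [sq_nonneg ξ]
  have h2 : 0 ≤ (Wt ξ η)⁻¹ * |ξ| := by have := Wt_pos ξ η; positivity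
  nlinarith

lemma integrable_maj (T : ℝ) (h : ℝ × ℝ → ℂ) (hh : MemLp h 2 (nu T)) :
    Integrable (fun p : ℝ × ℝ => bw p.2 * ‖h p‖) (nu T) :=
  (memLp_bw T).integrable_mul hh.norm

lemma enorm_ee (θ : ℝ) : ‖ee θ‖ₑ = 1 := by rw [← ofReal_norm, norm_ee]; simp

/-- The part of the kernel without causal cut-off is controlled by duality: local smoothing in
`(τ, η)` against the maximal estimate in `x`. -/
lemma free_part (δ T : ℝ) (hδ : 0 < δ) (c : ℝ → ℂ) (hcm : Measurable c)
    (hc : Integrable c) (t y : ℝ → ℝ)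
    (ht : Measurable t) (hy : Measurable y) (ht1 : ∀ x, t x ∈ Set.Icc (0:ℝ) 1)
    (h : ℝ × ℝ → ℂ) (hm : Measurable h) (hh : MemLp h 2 (nu T)) :
    ‖∫ x, c x * ∫ p, ee (2 * Real.pi * (y x * p.2)) * kd δ (t x - p.1) x p.2 * h p ∂(nu T)‖ₑ ^ 2 ≤
      ENNReal.ofReal (10 ^ 11) * (∫⁻ x, ‖c x‖ₑ ^ 2) * ∫⁻ p, ‖h p‖ₑ ^ 2 ∂(nu T) := by
  set Θ : ℝ → (ℝ × ℝ) × ℝ → ℂ := fun x q => c x * (am δ q.2 q.1.2 * ee (t x * (q.2 * (q.2 ^ 2 + q.1.2 ^ 2)) +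
    2 * Real.pi * (x * q.2 + y x * q.1.2)) * (ee (-(q.1.1 * (q.2 * (q.2 ^ 2 + q.1.2 ^ 2)))) * h q.1))
    with hΘ
  have hΘm : Measurable (Function.uncurry Θ) := by
    simp only [hΘ]; fun_prop
  have hΘn : ∀ x q, ‖Θ x q‖ ≤ ‖c x‖ * ((bw q.1.2 * ‖h q.1‖) * ‖q.2 * Real.exp (-δ * q.2 ^ 2)‖) := by
    intro x q
    simp only [hΘ, norm_mul, norm_ee, one_mul, mul_one, Complex.norm_real, Real.norm_eq_abs]
    refine mul_le_mul_of_nonneg_left ?_ (norm_nonneg _)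
    have := norm_am_le δ q.2 q.1.2
    rw [norm_mul] at this
    calc _ ≤ (bw q.1.2 * (‖q.2‖ * ‖Real.exp (-δ * q.2 ^ 2)‖)) * ‖h q.1‖ := by gcongr
      _ = _ := by simp only [Real.norm_eq_abs]; ring
  have hG : Integrable (fun q : (ℝ × ℝ) × ℝ => (bw q.1.2 * ‖h q.1‖) * ‖q.2 * Real.exp (-δ * q.2 ^ 2)‖)
      ((nu T).prod volume) := (integrable_maj T h hh).mul_prod (integrable_mul_exp_neg_mul_sq hδ).norm
  have hΘi : Integrable (Function.uncurry Θ) (volume.prod ((nu T).prod volume)) :=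
    (hc.norm.mul_prod hG).mono' hΘm.aestronglyMeasurable
      (Filter.Eventually.of_forall fun z => hΘn z.1 z.2)
  have hΘx : ∀ x, Integrable (Θ x) ((nu T).prod volume) := fun x =>
    (hG.const_mul ‖c x‖).mono' (hΘm.comp measurable_prodMk_left).aestronglyMeasurable
      (Filter.Eventually.of_forall fun q => hΘn x q)
  set Cf : ℝ × ℝ → ℂ := fun z => ∫ x, c x * ee (t x * (z.1 * (z.1 ^ 2 + z.2 ^ 2)) +
    2 * Real.pi * (x * z.1 + y x * z.2)) with hCf
  have hCm : Measurable Cf := by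
    have : Measurable (fun q : (ℝ × ℝ) × ℝ => c q.2 * ee (t q.2 * (q.1.1 * (q.1.1 ^ 2 + q.1.2 ^ 2)) +
        2 * Real.pi * (q.2 * q.1.1 + y q.2 * q.1.2))) := by fun_prop
    exact this.stronglyMeasurable.integral_prod_right'.measurable
  set Hf : ℝ × ℝ → ℂ := fun z => ∫ τ in Set.Icc 0 T,
    ee (-(τ * (z.1 * (z.1 ^ 2 + z.2 ^ 2)))) * h (τ, z.2) with hHf
  have hHm : Measurable Hf := by
    have : Measurable (fun q : (ℝ × ℝ) × ℝ =>
        ee (-(q.2 * (q.1.1 * (q.1.1 ^ 2 + q.1.2 ^ 2)))) * h (q.2, q.1.2)) := by fun_prop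
    exact (this.stronglyMeasurable.integral_prod_right' (ν := volume.restrict (Set.Icc 0 T))).measurable
  set f : (ℝ × ℝ) × ℝ → ℂ := fun q => am δ q.2 q.1.2 * Cf (q.2, q.1.2) *
    (ee (-(q.1.1 * (q.2 * (q.2 ^ 2 + q.1.2 ^ 2)))) * h q.1) with hf
  have hfe : ∀ q, ∫ x, Θ x q = f q := by
    intro q
    simp only [hf, hCf, hΘ]
    rw [← integral_const_mul, ← integral_mul_const]
    congr 1; ext x; ring
  have hfi : Integrable f ((nu T).prod volume) := by
    have := hΘi.integral_prod_right
    simp only [Function.uncurry] at this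
    simpa only [hfe] using this
  -- After Fubini the integral pairs `Cf`, the dual maximal function, with `Hf`, the smoothing factor.
  have e1 : ∫ x, c x * ∫ p, ee (2 * Real.pi * (y x * p.2)) * kd δ (t x - p.1) x p.2 * h p ∂(nu T) =
      ∫ q, f q ∂((nu T).prod volume) := by
    calc _ = ∫ x, ∫ q, Θ x q ∂((nu T).prod volume) := by
          congr 1; ext x
          rw [integral_prod _ (hΘx x), ← integral_const_mul]
          congr 1; ext p
          rw [kd_eq, ← integral_const_mul, ← integral_mul_const, ← integral_const_mul]
          congr 1; ext ξ
          simp only [hΘ]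
          have : ee (2 * Real.pi * (y x * p.2)) *
            ee ((t x - p.1) * (ξ * (ξ ^ 2 + p.2 ^ 2)) + 2 * Real.pi * (x * ξ)) =
            ee (t x * (ξ * (ξ ^ 2 + p.2 ^ 2)) + 2 * Real.pi * (x * ξ + y x * p.2)) *
            ee (-(p.1 * (ξ * (ξ ^ 2 + p.2 ^ 2)))) := by
            rw [← ee_add, ← ee_add]; congr 1; ring
          linear_combination (c x * (am δ ξ p.2 : ℂ) * h p) * this
      _ = ∫ q, (∫ x : ℝ, Θ x q) ∂((nu T).prod volume) := integral_integral_swap hΘi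
      _ = _ := by simp_rw [hfe]
  have e2 : ‖∫ q, f q ∂((nu T).prod volume)‖ₑ ≤ ∫⁻ ξ, ∫⁻ η,
      (ENNReal.ofReal (Wt ξ η)⁻¹ * ‖Cf (ξ, η)‖ₑ) * (ENNReal.ofReal |ξ| * ‖Hf (ξ, η)‖ₑ) := by
    rw [integral_prod_symm _ hfi]
    refine (enorm_integral_le_lintegral_enorm _).trans ?_
    refine lintegral_mono_ae ?_
    filter_upwards [hfi.prod_left_ae] with ξ hξ
    rw [integral_prod_symm _ hξ]
    refine (enorm_integral_le_lintegral_enorm _).trans ?_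
    refine lintegral_mono fun η => ?_
    simp only [hf]
    rw [integral_const_mul]
    change ‖_ * Hf (ξ, η)‖ₑ ≤ _
    rw [enorm_mul, enorm_mul, ← ofReal_norm, Complex.norm_real, Real.norm_eq_abs]
    calc _ ≤ ENNReal.ofReal ((Wt ξ η)⁻¹ * |ξ|) * ‖Cf (ξ, η)‖ₑ * ‖Hf (ξ, η)‖ₑ := by
          gcongr; exact abs_am_le δ ξ η hδ
      _ = _ := by
          rw [ENNReal.ofReal_mul (inv_nonneg.2 (Wt_pos ξ η).le)]; ring
  rw [e1]
  calc _ ≤ (∫⁻ ξ, ∫⁻ η, (ENNReal.ofReal (Wt ξ η)⁻¹ * ‖Cf (ξ, η)‖ₑ) *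
        (ENNReal.ofReal |ξ| * ‖Hf (ξ, η)‖ₑ)) ^ 2 := by gcongr
    _ = (∫⁻ z : ℝ × ℝ, (ENNReal.ofReal (Wt z.1 z.2)⁻¹ * ‖Cf z‖ₑ) *
        (ENNReal.ofReal |z.1| * ‖Hf z‖ₑ)) ^ 2 := by
        rw [Measure.volume_eq_prod, lintegral_prod _ (by
          have : Measurable (fun z : ℝ × ℝ => |z.1|) := continuous_abs.measurable.comp (by fun_prop)
          fun_prop)]
    _ ≤ (∫⁻ z : ℝ × ℝ, (ENNReal.ofReal (Wt z.1 z.2)⁻¹ * ‖Cf z‖ₑ) ^ 2) *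
        ∫⁻ z : ℝ × ℝ, (ENNReal.ofReal |z.1| * ‖Hf z‖ₑ) ^ 2 := by
        have : Measurable (fun z : ℝ × ℝ => |z.1|) := continuous_abs.measurable.comp (by fun_prop)
        exact cs_sq _ _ _ (by fun_prop) (by fun_prop)
    _ ≤ (ENNReal.ofReal (10 ^ 10) * ∫⁻ x, ‖c x‖ₑ ^ 2) *
        (ENNReal.ofReal (2 * Real.pi) * ∫⁻ p, ‖h p‖ₑ ^ 2 ∂(nu T)) := by
        have hab : Measurable (fun z : ℝ × ℝ => |z.1|) := continuous_abs.measurable.comp (by fun_prop)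
        refine mul_le_mul' ?_ ?_
        · refine le_trans (le_of_eq ?_) (max_dual c hcm hc t y ht hy ht1)
          rw [Measure.volume_eq_prod, lintegral_prod _ (by fun_prop)]
          congr 1; ext ξ; congr 1; ext η
          rw [mul_pow, ENNReal.ofReal_pow (inv_nonneg.2 (Wt_pos ξ η).le)]
        · refine le_trans (le_of_eq ?_) (smoothing T h hm)
          rw [Measure.volume_eq_prod, lintegral_prod _ (by fun_prop)]
          congr 1; ext ξ; congr 1; ext η
          rw [mul_pow, ← ENNReal.ofReal_pow (abs_nonneg _), sq_abs]
    _ = ENNReal.ofReal (10 ^ 10 * (2 * Real.pi)) * (∫⁻ x, ‖c x‖ₑ ^ 2) * ∫⁻ p, ‖h p‖ₑ ^ 2 ∂(nu T) := by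
        rw [ENNReal.ofReal_mul (p := 10 ^ 10) (by norm_num)]
        generalize ENNReal.ofReal (10 ^ 10) = a
        generalize ENNReal.ofReal (2 * Real.pi) = b
        ring
    _ ≤ _ := by
        gcongr
        have := Real.pi_lt_four
        nlinarith

/-- The linearised maximal function estimate for the regularised retarded kernel, for a source
concentrated on the line `z = 0`. -/
lemma core0 (δ T : ℝ) (hδ : 0 < δ) (c : ℝ → ℂ) (hcm : Measurable c)
    (hc : Integrable c) (t y : ℝ → ℝ)
    (ht : Measurable t) (hy : Measurable y) (ht1 : ∀ x, t x ∈ Set.Icc (0:ℝ) 1)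
    (h : ℝ × ℝ → ℂ) (hm : Measurable h) (hh : MemLp h 2 (nu T)) :
    ‖∫ x, c x * ∫ p, (if p.1 < t x then (1:ℂ) else 0) *
      (ee (2 * Real.pi * (y x * p.2)) * kd δ (t x - p.1) x p.2 * h p) ∂(nu T)‖ₑ ^ 2 ≤
      ENNReal.ofReal (10 ^ 12) * (∫⁻ x, ‖c x‖ₑ ^ 2) * ∫⁻ p, ‖h p‖ₑ ^ 2 ∂(nu T) := by
  set Ψ : ℝ → ℝ × ℝ → ℂ := fun x p =>
    ee (2 * Real.pi * (y x * p.2)) * kd δ (t x - p.1) x p.2 * h p with hΨ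
  have hΨm : Measurable (Function.uncurry Ψ) := by simp only [hΨ]; fun_prop
  set B : ℝ := ∫ ξ : ℝ, ‖ξ * Real.exp (-δ * ξ ^ 2)‖ with hB
  have hB0 : 0 ≤ B := integral_nonneg fun ξ => norm_nonneg _
  have hmaj : Integrable (fun p : ℝ × ℝ => B * (bw p.2 * ‖h p‖)) (nu T) :=
    (integrable_maj T h hh).const_mul B
  have hΨn : ∀ x p, ‖Ψ x p‖ ≤ B * (bw p.2 * ‖h p‖) := by
    intro x p
    simp only [hΨ, norm_mul, norm_ee, one_mul]
    calc _ ≤ (bw p.2 * B) * ‖h p‖ := by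
          gcongr; exact kd_decay δ _ _ _ hδ
      _ = _ := by ring
  have hΨi : ∀ x, Integrable (Ψ x) (nu T) := fun x =>
    hmaj.mono' (hΨm.comp measurable_prodMk_left).aestronglyMeasurable
      (Filter.Eventually.of_forall fun p => hΨn x p)
  have hsΨi : ∀ x, Integrable (fun p => sg x (t x) p.1 * Ψ x p) (nu T) := fun x => by
    refine hmaj.mono' ?_ (Filter.Eventually.of_forall fun p => ?_)
    · have := hΨm.comp (measurable_prodMk_left (x := x))
      have h2 : Measurable (fun p : ℝ × ℝ => sg x (t x) p.1) := by fun_prop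
      exact (h2.mul this).aestronglyMeasurable
    · rw [norm_mul]
      calc _ ≤ 1 * ‖Ψ x p‖ := by gcongr; exact norm_sg_le _ _ _
        _ ≤ _ := by rw [one_mul]; exact hΨn x p
  set K : ℝ := ∫ p, B * (bw p.2 * ‖h p‖) ∂(nu T) with hK
  have b1 : ∀ x, ‖∫ p, Ψ x p ∂(nu T)‖ ≤ K := fun x =>
    norm_integral_le_of_norm_le hmaj (Filter.Eventually.of_forall fun p => hΨn x p)
  have b2 : ∀ x, ‖∫ p, sg x (t x) p.1 * Ψ x p ∂(nu T)‖ ≤ K := fun x =>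
    norm_integral_le_of_norm_le hmaj (Filter.Eventually.of_forall fun p => by
      rw [norm_mul]
      calc _ ≤ 1 * ‖Ψ x p‖ := by gcongr; exact norm_sg_le _ _ _
        _ ≤ _ := by rw [one_mul]; exact hΨn x p)
  -- The cutoff `1_{x≤0}` is absorbed in the test function.
  set c' : ℝ → ℂ := (Set.Iic (0:ℝ)).indicator c with hc'
  have hc'm : Measurable c' := hcm.indicator measurableSet_Iic
  have hc'i : Integrable c' := hc.indicator measurableSet_Iic
  have i1 : Integrable (fun x => c' x * ∫ p, Ψ x p ∂(nu T)) := by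
    refine hc'i.mul_bdd (c := K) ?_ (Filter.Eventually.of_forall b1)
    exact hΨm.stronglyMeasurable.integral_prod_right'.aestronglyMeasurable
  have i2 : Integrable (fun x => c x * ∫ p, sg x (t x) p.1 * Ψ x p ∂(nu T)) := by
    refine hc.mul_bdd (c := K) ?_ (Filter.Eventually.of_forall b2)
    have : Measurable (fun q : ℝ × (ℝ × ℝ) => sg q.1 (t q.1) q.2.1 * Ψ q.1 q.2) := by
      have h2 : Measurable (fun q : ℝ × (ℝ × ℝ) => sg q.1 (t q.1) q.2.1) := by fun_prop
      exact h2.mul hΨm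
    exact this.stronglyMeasurable.integral_prod_right'.aestronglyMeasurable
  have split : ∫ x, c x * ∫ p, (if p.1 < t x then (1:ℂ) else 0) * Ψ x p ∂(nu T) =
      (∫ x, c' x * ∫ p, Ψ x p ∂(nu T)) + ∫ x, c x * ∫ p, sg x (t x) p.1 * Ψ x p ∂(nu T) := by
    rw [← integral_add i1 i2]
    congr 1; ext x
    have e1 : ∫ p, (if p.1 < t x then (1:ℂ) else 0) * Ψ x p ∂(nu T) =
        (if 0 < x then 0 else 1) * (∫ p, Ψ x p ∂(nu T)) +
          ∫ p, sg x (t x) p.1 * Ψ x p ∂(nu T) := by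
      rw [← integral_const_mul, ← integral_add ((hΨi x).const_mul _) (hsΨi x)]
      congr 1; ext p
      rw [sg_eq x (t x) p.1, add_mul]
    rw [e1]
    simp only [hc', Set.indicator, Set.mem_Iic]
    by_cases hx : 0 < x
    · rw [if_pos hx, if_neg (not_le.2 hx)]; ring
    · rw [if_neg hx, if_pos (not_lt.1 hx)]; ring
  have hP := free_part δ T hδ c' hc'm hc'i t y ht hy ht1 h hm hh
  have hD := diag_part δ T hδ c hcm t y ht hy h hm
  have hcc : ∫⁻ x, ‖c' x‖ₑ ^ 2 ≤ ∫⁻ x, ‖c x‖ₑ ^ 2 := by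
    gcongr with x
    exact enorm_indicator_le_enorm_self _ _
  have sqadd : ∀ a b : ℝ≥0∞, (a + b) ^ 2 ≤ 2 * (a ^ 2 + b ^ 2) := by
    intro a b
    have := ENNReal.rpow_add_le_mul_rpow_add_rpow a b (p := 2) (by norm_num)
    norm_num at this
    exact this
  set A : ℝ≥0∞ := ∫⁻ x, ‖c x‖ₑ ^ 2
  set N : ℝ≥0∞ := ∫⁻ p, ‖h p‖ₑ ^ 2 ∂(nu T)
  calc _ ≤ (‖∫ x, c' x * ∫ p, Ψ x p ∂(nu T)‖ₑ +
        ‖∫ x, c x * ∫ p, sg x (t x) p.1 * Ψ x p ∂(nu T)‖ₑ) ^ 2 := by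
        rw [split]; gcongr; exact enorm_add_le _ _
    _ ≤ 2 * (‖∫ x, c' x * ∫ p, Ψ x p ∂(nu T)‖ₑ ^ 2 +
        ‖∫ x, c x * ∫ p, sg x (t x) p.1 * Ψ x p ∂(nu T)‖ₑ ^ 2) := sqadd _ _
    _ ≤ 2 * (ENNReal.ofReal (10 ^ 11) * A * N + 2000 * A * N) := by
        gcongr
        exact hP.trans (by gcongr)
    _ = (2 * (ENNReal.ofReal (10 ^ 11) + 2000)) * A * N := by ring
    _ ≤ _ := by
        gcongr
        rw [show (2000:ℝ≥0∞) = ENNReal.ofReal 2000 by simp, show (2:ℝ≥0∞) = ENNReal.ofReal 2 by simp,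
          ← ENNReal.ofReal_add (by norm_num) (by norm_num), ← ENNReal.ofReal_mul (by norm_num)]
        exact ENNReal.ofReal_le_ofReal (by norm_num)

/-- Translation of `core0` to a source concentrated on the line with first coordinate `z`. -/
lemma core (δ T z : ℝ) (hδ : 0 < δ) (c : ℝ → ℂ) (hcm : Measurable c)
    (hc : Integrable c) (t y : ℝ → ℝ)
    (ht : Measurable t) (hy : Measurable y) (ht1 : ∀ x, t x ∈ Set.Icc (0:ℝ) 1)
    (h : ℝ × ℝ → ℂ) (hm : Measurable h) (hh : MemLp h 2 (nu T)) :
    ‖∫ x, c x * ∫ p, (if p.1 < t x then (1:ℂ) else 0) *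
      (ee (2 * Real.pi * (y x * p.2)) * kd δ (t x - p.1) (x - z) p.2 * h p) ∂(nu T)‖ₑ ^ 2 ≤
      ENNReal.ofReal (10 ^ 12) * (∫⁻ x, ‖c x‖ₑ ^ 2) * ∫⁻ p, ‖h p‖ₑ ^ 2 ∂(nu T) := by
  have := core0 δ T hδ (fun x => c (x + z)) (by fun_prop) (hc.comp_add_right z) (fun x => t (x + z))
    (fun x => y (x + z)) (by fun_prop) (by fun_prop) (fun x => ht1 _) h hm hh
  rw [lintegral_add_right_eq_self (fun x => ‖c x‖ₑ ^ 2) z] at this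
  rw [← integral_add_right_eq_self _ z]
  simpa only [add_sub_cancel_right] using this

end ZK

/-! ### Superposition of lines -/

namespace ZK

/-- The integrable weight used to express decay of the Fourier-side data. -/
def qq (ξ : ℝ) : ℝ := (1 + ξ ^ 2)⁻¹

lemma qq_pos (ξ : ℝ) : 0 < qq ξ := by unfold qq; positivity

lemma qq_le_one (ξ : ℝ) : qq ξ ≤ 1 := by
  unfold qq; exact inv_le_one_of_one_le₀ (by nlinarith [sq_nonneg ξ])

lemma integrable_qq : Integrable qq := integrable_inv_one_add_sq

lemma qq_sq_le (ξ : ℝ) : qq ξ ^ 2 ≤ qq ξ := by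
  have := qq_pos ξ; have := qq_le_one ξ; nlinarith

lemma abs_mul_qq_sq_le (ξ : ℝ) : |ξ| * qq ξ ^ 2 ≤ qq ξ := by
  have h : |ξ| * qq ξ ≤ 1 := by
    unfold qq
    rw [← div_eq_mul_inv, div_le_one (by positivity)]
    nlinarith [sq_abs ξ, sq_nonneg (|ξ| - 1)]
  have := qq_pos ξ
  nlinarith

/-- The Fourier-side data `Λ(τ, ξ, η)`: jointly continuous, with quantitative decay in `(ξ, η)`
uniform in `τ`. -/
structure Adm (Λ : ℝ × ℝ × ℝ → ℂ) (M : ℝ) : Prop where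
  cont : Continuous Λ
  bound : ∀ τ ξ η, ‖Λ (τ, ξ, η)‖ ≤ M * (qq ξ ^ 2 * qq η)

/-- Partial inverse Fourier transform of `Λ` in the first frequency variable. -/
def Gt (Λ : ℝ × ℝ × ℝ → ℂ) (τ z η : ℝ) : ℂ := ∫ ξ : ℝ, Λ (τ, ξ, η) * ee (2 * Real.pi * (z * ξ))

/-- The regularised `x₁`-derivative (up to `2πi`) of the Duhamel term with source `F⁻¹(Λ / Wt)`. -/
def Fd (Λ : ℝ × ℝ × ℝ → ℂ) (T δ t x y : ℝ) : ℂ :=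
  ∫ p, (if p.1 < t then (1:ℂ) else 0) * (ee (2 * Real.pi * (y * p.2)) *
    ∫ ξ : ℝ, am δ ξ p.2 * ee ((t - p.1) * (ξ * (ξ ^ 2 + p.2 ^ 2)) + 2 * Real.pi * (x * ξ)) *
      Λ (p.1, ξ, p.2)) ∂(nu T)

variable {Λ : ℝ × ℝ × ℝ → ℂ} {M : ℝ}

lemma Adm.M_nonneg (h : Adm Λ M) : 0 ≤ M := by
  have h1 := (norm_nonneg _).trans (h.bound 0 0 0)
  have h2 : 0 < qq 0 ^ 2 * qq 0 := by have := qq_pos 0; positivity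
  exact nonneg_of_mul_nonneg_left h1 h2

lemma Adm.bound' (h : Adm Λ M) (τ ξ η : ℝ) : ‖Λ (τ, ξ, η)‖ ≤ M * qq η * qq ξ := by
  refine (h.bound τ ξ η).trans ?_
  have := h.M_nonneg
  have := qq_pos η
  calc _ = M * qq η * qq ξ ^ 2 := by ring
    _ ≤ _ := by gcongr; exact qq_sq_le ξ

lemma Adm.slice_cont (h : Adm Λ M) (τ η : ℝ) : Continuous (fun ξ => Λ (τ, ξ, η)) :=
  h.cont.comp (by fun_prop)

lemma Adm.slice_integrable (h : Adm Λ M) (τ η : ℝ) : Integrable (fun ξ => Λ (τ, ξ, η)) :=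
  (integrable_qq.const_mul (M * qq η)).mono' (h.slice_cont τ η).aestronglyMeasurable
    (Filter.Eventually.of_forall fun ξ => h.bound' τ ξ η)

lemma measurable_Gt (h : Adm Λ M) : Measurable (fun q : ℝ × ℝ × ℝ => Gt Λ q.1 q.2.1 q.2.2) := by
  have hm := h.cont.measurable
  have h1 : Measurable (fun q : (ℝ × ℝ × ℝ) × ℝ => Λ (q.1.1, q.2, q.1.2.2)) :=
    hm.comp (by fun_prop)
  have : Measurable (fun q : (ℝ × ℝ × ℝ) × ℝ =>
      Λ (q.1.1, q.2, q.1.2.2) * ee (2 * Real.pi * (q.1.2.1 * q.2))) := by fun_prop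
  exact this.stronglyMeasurable.integral_prod_right'.measurable

lemma measurable_Gt' (h : Adm Λ M) {α : Type*} [MeasurableSpace α] {f g k : α → ℝ}
    (hf : Measurable f) (hg : Measurable g) (hk : Measurable k) :
    Measurable (fun a => Gt Λ (f a) (g a) (k a)) := by
  have h3 := Measurable.comp (measurable_Gt h) (hf.prodMk (hg.prodMk hk))
  exact h3

open FourierTransform in
/-- Fourier inversion in the first variable turns the multiplier into the kernel `kd`. -/
lemma inner_eq (h : Adm Λ M) (δ s τ x η : ℝ) (hδ : 0 < δ) (hG : Integrable (fun z => Gt Λ τ z η)) :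
    ∫ ξ : ℝ, am δ ξ η * ee (s * (ξ * (ξ ^ 2 + η ^ 2)) + 2 * Real.pi * (x * ξ)) * Λ (τ, ξ, η) =
      ∫ z : ℝ, kd δ s (x - z) η * Gt Λ τ z η := by
  have hGe : (fun z => Gt Λ τ z η) = 𝓕⁻ (fun ξ => Λ (τ, ξ, η)) := by
    ext z
    rw [fourierInv_ee, Gt]
    congr 1; ext ξ; rw [mul_comm z ξ]
  have hF : Integrable (𝓕 (fun ξ => Λ (τ, ξ, η))) := by
    have := hG.comp_neg
    refine this.congr (Filter.Eventually.of_forall fun z => ?_)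
    change (fun z => Gt Λ τ z η) (-z) = _
    rw [hGe, Real.fourierInv_eq_fourier_neg, neg_neg]
  have inv := (h.slice_cont τ η).fourier_fourierInv_eq (h.slice_integrable τ η) hF
  have inv' : ∀ ξ, Λ (τ, ξ, η) = ∫ z : ℝ, Gt Λ τ z η * ee (-(2 * Real.pi * (z * ξ))) := by
    intro ξ
    have := congrFun inv ξ
    rw [← hGe, fourier_ee] at this
    exact this.symm
  have hJ : Integrable (Function.uncurry fun ξ z : ℝ => ((am δ ξ η : ℂ) *
      ee (s * (ξ * (ξ ^ 2 + η ^ 2)) + 2 * Real.pi * ((x - z) * ξ))) * Gt Λ τ z η)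
      ((volume : Measure ℝ).prod volume) := by
    refine (((integrable_mul_exp_neg_mul_sq hδ).norm.const_mul (bw η)).mul_prod hG.norm).mono' ?_ ?_
    · have := measurable_Gt' h (α := ℝ × ℝ) (f := fun _ => τ) (g := fun a => a.2) (k := fun _ => η)
        (by fun_prop) (by fun_prop) (by fun_prop)
      have h2 : Measurable (Function.uncurry fun ξ z : ℝ => ((am δ ξ η : ℂ) *
        ee (s * (ξ * (ξ ^ 2 + η ^ 2)) + 2 * Real.pi * ((x - z) * ξ))) * Gt Λ τ z η) := by
        unfold Function.uncurry
        fun_prop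
      exact h2.aestronglyMeasurable
    · refine Filter.Eventually.of_forall fun q => ?_
      simp only [Function.uncurry, norm_mul, norm_ee, mul_one, Complex.norm_real, Real.norm_eq_abs]
      have := norm_am_le δ q.1 η
      rw [norm_mul] at this
      exact mul_le_mul_of_nonneg_right this (norm_nonneg _)
  calc _ = ∫ ξ : ℝ, ∫ z : ℝ, ((am δ ξ η : ℂ) *
      ee (s * (ξ * (ξ ^ 2 + η ^ 2)) + 2 * Real.pi * ((x - z) * ξ))) * Gt Λ τ z η := by
        congr 1; ext ξ
        rw [inv' ξ, ← integral_const_mul]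
        congr 1; ext z
        have : ee (s * (ξ * (ξ ^ 2 + η ^ 2)) + 2 * Real.pi * ((x - z) * ξ)) =
          ee (s * (ξ * (ξ ^ 2 + η ^ 2)) + 2 * Real.pi * (x * ξ)) * ee (-(2 * Real.pi * (z * ξ))) := by
          rw [← ee_add]; congr 1; ring
        rw [this]; ring
    _ = ∫ z : ℝ, ∫ ξ : ℝ, ((am δ ξ η : ℂ) *
      ee (s * (ξ * (ξ ^ 2 + η ^ 2)) + 2 * Real.pi * ((x - z) * ξ))) * Gt Λ τ z η :=
        integral_integral_swap hJ
    _ = _ := by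
        congr 1; ext z
        rw [integral_mul_const, kd_eq]

/-- The mixed norm on the line `x₁ = z`, on the frequency side in `x₂`. -/
def gam (Λ : ℝ × ℝ × ℝ → ℂ) (T z : ℝ) : ℝ≥0∞ :=
  (∫⁻ p, ‖Gt Λ p.1 z p.2‖ₑ ^ 2 ∂(nu T)) ^ ((1:ℝ) / 2)

lemma measurable_gam (h : Adm Λ M) (T : ℝ) : Measurable (gam Λ T) := by
  unfold gam
  have h1 := measurable_Gt' h (α := ℝ × ℝ × ℝ) (f := fun a => a.2.1) (g := fun a => a.1)
    (k := fun a => a.2.2) (by fun_prop) (by fun_prop) (by fun_prop)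
  have h2 : Measurable (fun a : ℝ × ℝ × ℝ => ‖Gt Λ a.2.1 a.1 a.2.2‖ₑ ^ 2) := by fun_prop
  have h3 : Measurable (fun z => ∫⁻ p, ‖Gt Λ p.1 z p.2‖ₑ ^ 2 ∂(nu T)) := h2.lintegral_prod_right'
  exact h3.pow_const _

lemma rpow_half_sq (a : ℝ≥0∞) : (a ^ ((1:ℝ) / 2)) ^ 2 = a := by
  rw [← ENNReal.rpow_natCast, ← ENNReal.rpow_mul]; norm_num

lemma sq_rpow_half (a : ℝ≥0∞) : (a ^ 2) ^ ((1:ℝ) / 2) = a := by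
  rw [← ENNReal.rpow_natCast, ← ENNReal.rpow_mul]; norm_num

lemma le_of_sq_le_sq {a b : ℝ≥0∞} (h : a ^ 2 ≤ b ^ 2) : a ≤ b := by
  rw [← sq_rpow_half a, ← sq_rpow_half b]
  exact ENNReal.rpow_le_rpow h (by norm_num)

/-- Finiteness of the mixed norm gives the absolute convergence behind Fubini's theorem: on each line
Cauchy–Schwarz is applied with the square integrable weight `bw`. -/
lemma integrable_bw_Gt (h : Adm Λ M) (T : ℝ) (hfin : ∫⁻ z, gam Λ T z < ∞) :
    Integrable (fun q : (ℝ × ℝ) × ℝ => bw q.1.2 * ‖Gt Λ q.1.1 q.2 q.1.2‖) ((nu T).prod volume) := by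
  have hbm : Measurable (fun q : (ℝ × ℝ) × ℝ => bw q.1.2) := continuous_bw.measurable.comp (by fun_prop)
  have hGm := measurable_Gt' h (α := (ℝ × ℝ) × ℝ) (f := fun a => a.1.1) (g := fun a => a.2)
    (k := fun a => a.1.2) (by fun_prop) (by fun_prop) (by fun_prop)
  have hm : Measurable (fun q : (ℝ × ℝ) × ℝ => bw q.1.2 * ‖Gt Λ q.1.1 q.2 q.1.2‖) := by fun_prop
  refine ⟨hm.aestronglyMeasurable, ?_⟩
  rw [HasFiniteIntegral, lintegral_prod_symm _ (by fun_prop)]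
  have hbfin := (memLp_two_iff (memLp_bw T).1).1 (memLp_bw T)
  set B : ℝ≥0∞ := ∫⁻ p, ‖bw p.2‖ₑ ^ 2 ∂(nu T) with hB
  calc _ ≤ ∫⁻ z, B ^ ((1:ℝ) / 2) * gam Λ T z := by
        refine lintegral_mono fun z => ?_
        refine le_of_sq_le_sq ?_
        rw [mul_pow, gam, rpow_half_sq, rpow_half_sq]
        simp only [enorm_mul, enorm_norm]
        have h1 := measurable_Gt' h (α := ℝ × ℝ) (f := fun a => a.1) (g := fun a => z)
          (k := fun a => a.2) (by fun_prop) (by fun_prop) (by fun_prop)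
        have h2 : Measurable (fun p : ℝ × ℝ => bw p.2) := continuous_bw.measurable.comp (by fun_prop)
        exact cs_sq _ _ _ h2.enorm.aemeasurable h1.enorm.aemeasurable
    _ = B ^ ((1:ℝ) / 2) * ∫⁻ z, gam Λ T z := lintegral_const_mul _ (measurable_gam h T)
    _ < ∞ := ENNReal.mul_lt_top (ENNReal.rpow_lt_top_of_nonneg (by norm_num) hbfin.ne) hfin

/-- Minkowski's inequality in `z`: the source is a superposition of sources on the lines `x₁ = z`, and
`core` bounds each of them. -/
lemma reg_estimate (h : Adm Λ M) (δ T : ℝ) (hδ : 0 < δ) (hfin : ∫⁻ z, gam Λ T z < ∞)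
    (c : ℝ → ℂ) (hcm : Measurable c)
    (hc : Integrable c) (t y : ℝ → ℝ)
    (ht : Measurable t) (hy : Measurable y) (ht1 : ∀ x, t x ∈ Set.Icc (0:ℝ) 1) :
    ‖∫ x, c x * Fd Λ T δ (t x) x (y x)‖ₑ ≤
      ENNReal.ofReal (10 ^ 6) * (∫⁻ x, ‖c x‖ₑ ^ 2) ^ ((1:ℝ) / 2) * ∫⁻ z, gam Λ T z := by
  have H := integrable_bw_Gt h T hfin
  set K : ℝ := ∫ ξ : ℝ, ‖ξ * Real.exp (-δ * ξ ^ 2)‖ with hK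
  have hGi : ∀ᵐ p ∂(nu T), Integrable (fun z => Gt Λ p.1 z p.2) := by
    filter_upwards [H.prod_right_ae] with p hp
    have h1 := hp.const_mul (bw p.2)⁻¹
    have h2 := measurable_Gt' h (α := ℝ) (f := fun a => p.1) (g := fun a => a)
      (k := fun a => p.2) (by fun_prop) (by fun_prop) (by fun_prop)
    refine h1.mono' h2.aestronglyMeasurable (Filter.Eventually.of_forall fun z => ?_)
    rw [inv_mul_cancel_left₀ (bw_pos _).ne']
  set Φ : ℝ → (ℝ × ℝ) × ℝ → ℂ := fun x q => c x * ((if q.1.1 < t x then (1:ℂ) else 0) *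
      (ee (2 * Real.pi * (y x * q.1.2)) * kd δ (t x - q.1.1) (x - q.2) q.1.2 *
        Gt Λ q.1.1 q.2 q.1.2)) with hΦ
  have hΦm : Measurable (Function.uncurry Φ) := by
    have h1 := measurable_Gt' h (α := ℝ × (ℝ × ℝ) × ℝ) (f := fun a => a.2.1.1) (g := fun a => a.2.2)
      (k := fun a => a.2.1.2) (by fun_prop) (by fun_prop) (by fun_prop)
    have h2 : Measurable (fun q : ℝ × (ℝ × ℝ) × ℝ => if q.2.1.1 < t q.1 then (1:ℂ) else 0) :=
      Measurable.ite (measurableSet_lt (by fun_prop) (by fun_prop)) measurable_const measurable_const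
    simp only [hΦ]
    unfold Function.uncurry
    fun_prop
  have hΦn : ∀ x q, ‖Φ x q‖ ≤ (K * ‖c x‖) * (bw q.1.2 * ‖Gt Λ q.1.1 q.2 q.1.2‖) := by
    intro x q
    simp only [hΦ, norm_mul, norm_ee, one_mul]
    have h1 : ‖(if q.1.1 < t x then (1:ℂ) else 0)‖ ≤ 1 := by split_ifs <;> norm_num
    have h2 : ‖kd δ (t x - q.1.1) (x - q.2) q.1.2‖ ≤ bw q.1.2 * K := kd_decay δ _ _ _ hδ
    calc _ ≤ ‖c x‖ * (1 * ((bw q.1.2 * K) * ‖Gt Λ q.1.1 q.2 q.1.2‖)) := by gcongr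
      _ = _ := by ring
  have hK0 : 0 ≤ K := integral_nonneg fun _ => norm_nonneg _
  have hΦi : Integrable (Function.uncurry Φ) (volume.prod ((nu T).prod volume)) :=
    ((hc.norm.const_mul K).mul_prod H).mono' hΦm.aestronglyMeasurable
      (Filter.Eventually.of_forall fun z => hΦn z.1 z.2)
  have hΦx : ∀ x, Integrable (Φ x) ((nu T).prod volume) := fun x =>
    (H.const_mul (K * ‖c x‖)).mono' (hΦm.comp measurable_prodMk_left).aestronglyMeasurable
      (Filter.Eventually.of_forall fun q => hΦn x q)
  have e1 : ∫ x, c x * Fd Λ T δ (t x) x (y x) = ∫ x, (∫ q, Φ x q ∂((nu T).prod volume)) := by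
    congr 1; ext x
    rw [integral_prod _ (hΦx x), Fd, ← integral_const_mul]
    refine integral_congr_ae ?_
    filter_upwards [hGi] with p hp
    rw [inner_eq h δ _ _ _ _ hδ hp, ← integral_const_mul, ← integral_const_mul,
      ← integral_const_mul]
    congr 1; ext z
    simp only [hΦ]; ring
  -- The integral in `z` is moved outside and the norm is taken inside it.
  rw [e1, integral_integral_swap hΦi]
  have hΦi2 := hΦi.integral_prod_right
  simp only [Function.uncurry] at hΦi2
  rw [integral_prod_symm _ hΦi2]
  refine (enorm_integral_le_lintegral_enorm _).trans ?_
  rw [← lintegral_const_mul _ (measurable_gam h T)]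
  refine lintegral_mono_ae ?_
  have hgf : ∀ᵐ z, gam Λ T z < ∞ := ae_lt_top (measurable_gam h T) hfin.ne
  filter_upwards [H.prod_left_ae, hgf] with z hz hgz
  have hm2 : Measurable (fun w : ℝ × ℝ × ℝ => Φ w.1 (w.2, z)) :=
    hΦm.comp (by fun_prop : Measurable fun w : ℝ × ℝ × ℝ => (w.1, (w.2, z)))
  have hsw : Integrable (Function.uncurry fun x p => Φ x (p, z)) (volume.prod (nu T)) :=
    ((hc.norm.const_mul K).mul_prod hz).mono' hm2.aestronglyMeasurable
      (Filter.Eventually.of_forall fun w => hΦn w.1 (w.2, z))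
  rw [← integral_integral_swap hsw]
  have hhm := measurable_Gt' h (α := ℝ × ℝ) (f := fun a => a.1) (g := fun a => z)
      (k := fun a => a.2) (by fun_prop) (by fun_prop) (by fun_prop)
  have hmem : MemLp (fun p : ℝ × ℝ => Gt Λ p.1 z p.2) 2 (nu T) := by
    refine (memLp_two_iff hhm.aestronglyMeasurable).2 ?_
    rw [← rpow_half_sq (∫⁻ p, ‖Gt Λ p.1 z p.2‖ₑ ^ 2 ∂(nu T))]
    exact ENNReal.pow_lt_top hgz
  have hcore := core δ T z hδ c hcm hc t y ht hy ht1 (fun p => Gt Λ p.1 z p.2) hhm hmem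
  refine le_of_sq_le_sq ?_
  rw [mul_pow, mul_pow, gam, rpow_half_sq, rpow_half_sq, ← ENNReal.ofReal_pow (by norm_num)]
  rw [show ((10:ℝ) ^ 6) ^ 2 = 10 ^ 12 by norm_num]
  simpa only [hΦ, integral_const_mul] using hcore

end ZK

/-! ### Removing the regularisation and selecting the suprema -/

namespace ZK

variable {Λ : ℝ × ℝ × ℝ → ℂ} {M : ℝ}

/-- The inner frequency integral of `Fd`. -/
def Jd (Λ : ℝ × ℝ × ℝ → ℂ) (δ t x : ℝ) (p : ℝ × ℝ) : ℂ :=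
  ∫ ξ : ℝ, am δ ξ p.2 * ee ((t - p.1) * (ξ * (ξ ^ 2 + p.2 ^ 2)) + 2 * Real.pi * (x * ξ)) *
      Λ (p.1, ξ, p.2)

lemma Jd_integrand_le (h : Adm Λ M) (δ t x : ℝ) (hδ : 0 ≤ δ) (p : ℝ × ℝ) (ξ : ℝ) :
    ‖am δ ξ p.2 * ee ((t - p.1) * (ξ * (ξ ^ 2 + p.2 ^ 2)) + 2 * Real.pi * (x * ξ)) *
      Λ (p.1, ξ, p.2)‖ ≤ M * qq p.2 * qq ξ := by
  rw [norm_mul, norm_mul, norm_ee, mul_one, Complex.norm_real, Real.norm_eq_abs]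
  have h1 : |am δ ξ p.2| ≤ |ξ| := by
    unfold am
    rw [abs_mul, abs_div, abs_of_pos (Wt_pos ξ p.2), Real.abs_exp]
    have e : Real.exp (-δ * ξ ^ 2) ≤ 1 := by
      rw [Real.exp_le_one_iff]; nlinarith [sq_nonneg ξ]
    have e2 : |ξ| / Wt ξ p.2 ≤ |ξ| := div_le_self (abs_nonneg _) (Wt_ge_one _ _)
    have e3 : 0 ≤ |ξ| / Wt ξ p.2 := div_nonneg (abs_nonneg _) (Wt_pos _ _).le
    nlinarith
  have h2 := h.bound p.1 ξ p.2
  have h3 := abs_mul_qq_sq_le ξ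
  have := h.M_nonneg
  have := qq_pos p.2
  calc _ ≤ |ξ| * (M * (qq ξ ^ 2 * qq p.2)) := by gcongr
    _ = M * qq p.2 * (|ξ| * qq ξ ^ 2) := by ring
    _ ≤ _ := by gcongr

lemma norm_Jd_le (h : Adm Λ M) (δ t x : ℝ) (hδ : 0 ≤ δ) (p : ℝ × ℝ) :
    ‖Jd Λ δ t x p‖ ≤ (M * ∫ ξ, qq ξ) * qq p.2 := by
  refine (norm_integral_le_of_norm_le (integrable_qq.const_mul (M * qq p.2))
    (Filter.Eventually.of_forall fun ξ => Jd_integrand_le h δ t x hδ p ξ)).trans (le_of_eq ?_)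
  rw [integral_const_mul]; ring

lemma continuous_Jd (h : Adm Λ M) : Continuous (fun w : (ℝ × ℝ × ℝ) × (ℝ × ℝ) =>
    Jd Λ (w.1.1 ^ 2) w.1.2.1 w.1.2.2 w.2) := by
  unfold Jd
  refine continuous_of_dominated (bound := fun ξ => M * qq ξ) (fun w => ?_) (fun w => ?_)
    (integrable_qq.const_mul M) (Filter.Eventually.of_forall fun ξ => ?_)
  · have hm := h.cont.measurable
    exact Measurable.aestronglyMeasurable (by fun_prop)
  · refine Filter.Eventually.of_forall fun ξ => (Jd_integrand_le h _ _ _ (sq_nonneg _) _ _).trans ?_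
    have := h.M_nonneg
    have := qq_le_one w.2.2
    have := (qq_pos w.2.2).le
    have := (qq_pos ξ).le
    calc _ ≤ M * 1 * qq ξ := by gcongr
      _ = _ := by ring
  · have h1 : Continuous (fun w : (ℝ × ℝ × ℝ) × (ℝ × ℝ) => Wt ξ w.2.2) :=
      continuous_Wt.comp (by fun_prop : Continuous fun w : (ℝ × ℝ × ℝ) × (ℝ × ℝ) => (ξ, w.2.2))
    have h2 : Continuous (fun w : (ℝ × ℝ × ℝ) × (ℝ × ℝ) => Λ (w.2.1, ξ, w.2.2)) :=
      h.cont.comp (by fun_prop)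
    unfold am
    refine ((Complex.continuous_ofReal.comp ((continuous_const.div h1 fun w => (Wt_pos _ _).ne').mul
      (by fun_prop))).mul (continuous_ee.comp (by fun_prop))).mul h2

lemma continuous_Jd' (h : Adm Λ M) {X : Type*} [TopologicalSpace X] {f g k : X → ℝ}
    {p : X → ℝ × ℝ} (hf : Continuous f) (hg : Continuous g) (hk : Continuous k)
    (hp : Continuous p) : Continuous (fun a => Jd Λ (f a ^ 2) (g a) (k a) (p a)) := by
  have h3 := Continuous.comp (continuous_Jd h) ((hf.prodMk (hg.prodMk hk)).prodMk hp)
  exact h3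

lemma integrable_qq_nu (T : ℝ) : Integrable (fun p : ℝ × ℝ => qq p.2) (nu T) :=
  integrable_qq.comp_snd _

lemma Fd_integrand_le (h : Adm Λ M) (δ t x y : ℝ) (hδ : 0 ≤ δ) (p : ℝ × ℝ) :
    ‖(if p.1 < t then (1:ℂ) else 0) * (ee (2 * Real.pi * (y * p.2)) * Jd Λ δ t x p)‖ ≤
      (M * ∫ ξ, qq ξ) * qq p.2 := by
  rw [norm_mul, norm_mul, norm_ee, one_mul]
  have h1 : ‖(if p.1 < t then (1:ℂ) else 0)‖ ≤ 1 := by split_ifs <;> norm_num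
  calc _ ≤ 1 * ‖Jd Λ δ t x p‖ := by gcongr
    _ ≤ _ := by rw [one_mul]; exact norm_Jd_le h δ t x hδ p

/-- A uniform bound for `Fd`. -/
lemma norm_Fd_le (h : Adm Λ M) (T δ t x y : ℝ) (hδ : 0 ≤ δ) :
    ‖Fd Λ T δ t x y‖ ≤ ∫ p, (M * ∫ ξ, qq ξ) * qq p.2 ∂(nu T) :=
  norm_integral_le_of_norm_le ((integrable_qq_nu T).const_mul _)
    (Filter.Eventually.of_forall fun p => Fd_integrand_le h δ t x y hδ p)

lemma ae_ne_nu (T t : ℝ) : ∀ᵐ p ∂(nu T), p.1 ≠ t := by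
  have h1 : ∀ᵐ τ ∂((volume : Measure ℝ).restrict (Set.Icc 0 T)), τ ≠ t := by
    refine ae_restrict_of_ae ?_
    exact Measure.ae_ne volume t
  exact Measure.quasiMeasurePreserving_fst.ae h1

/-- `Fd` is jointly continuous; the regularisation parameter is squared so that it stays
nonnegative. -/
lemma continuous_Fd (h : Adm Λ M) (T : ℝ) : Continuous (fun w : ℝ × ℝ × ℝ × ℝ =>
    Fd Λ T (w.1 ^ 2) w.2.1 w.2.2.1 w.2.2.2) := by
  rw [continuous_iff_continuousAt]
  intro w0
  change ContinuousAt (fun w : ℝ × ℝ × ℝ × ℝ => ∫ p, (if p.1 < w.2.1 then (1:ℂ) else 0) *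
    (ee (2 * Real.pi * (w.2.2.2 * p.2)) * Jd Λ (w.1 ^ 2) w.2.1 w.2.2.1 p) ∂(nu T)) w0
  refine continuousAt_of_dominated (bound := fun p => (M * ∫ ξ, qq ξ) * qq p.2)
    (Filter.Eventually.of_forall fun w => ?_) (Filter.Eventually.of_forall fun w => ?_)
    ((integrable_qq_nu T).const_mul _) ?_
  · have h1 : Measurable (fun p => Jd Λ (w.1 ^ 2) w.2.1 w.2.2.1 p) :=
      (continuous_Jd' h continuous_const continuous_const continuous_const continuous_id).measurable
    have h2 : Measurable (fun p : ℝ × ℝ => if p.1 < w.2.1 then (1:ℂ) else 0) :=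
      Measurable.ite (measurableSet_lt (by fun_prop) (by fun_prop)) measurable_const measurable_const
    have h3 : Measurable (fun p : ℝ × ℝ => ee (2 * Real.pi * (w.2.2.2 * p.2))) := by fun_prop
    exact (h2.mul (h3.mul h1)).aestronglyMeasurable
  · exact Filter.Eventually.of_forall fun p => Fd_integrand_le h _ _ _ _ (sq_nonneg _) p
  · filter_upwards [ae_ne_nu T w0.2.1] with p hp
    have h1 : ContinuousAt (fun w : ℝ × ℝ × ℝ × ℝ => if p.1 < w.2.1 then (1:ℂ) else 0) w0 := by
      rcases lt_or_gt_of_ne hp with hlt | hgt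
      · have : ∀ᶠ w : ℝ × ℝ × ℝ × ℝ in nhds w0, p.1 < w.2.1 :=
          (isOpen_lt continuous_const (by fun_prop)).mem_nhds hlt
        refine (continuousAt_const (y := (1:ℂ))).congr ?_
        filter_upwards [this] with w hw
        rw [if_pos hw]
      · have : ∀ᶠ w : ℝ × ℝ × ℝ × ℝ in nhds w0, w.2.1 < p.1 :=
          (isOpen_lt (by fun_prop) continuous_const).mem_nhds hgt
        refine (continuousAt_const (y := (0:ℂ))).congr ?_
        filter_upwards [this] with w hw
        rw [if_neg hw.not_gt]
    have h2 : Continuous (fun w : ℝ × ℝ × ℝ × ℝ =>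
        ee (2 * Real.pi * (w.2.2.2 * p.2)) * Jd Λ (w.1 ^ 2) w.2.1 w.2.2.1 p) :=
      (continuous_ee.comp (by fun_prop)).mul (continuous_Jd' h (by fun_prop) (by fun_prop)
        (by fun_prop) continuous_const)
    exact h1.mul h2.continuousAt

/-- The dual estimate without regularisation. -/
lemma dual_estimate (h : Adm Λ M) (T : ℝ) (hfin : ∫⁻ z, gam Λ T z < ∞)
    (c : ℝ → ℂ) (hcm : Measurable c)
    (hc : Integrable c) (t y : ℝ → ℝ)
    (ht : Measurable t) (hy : Measurable y) (ht1 : ∀ x, t x ∈ Set.Icc (0:ℝ) 1) :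
    ‖∫ x, c x * Fd Λ T 0 (t x) x (y x)‖ₑ ≤
      ENNReal.ofReal (10 ^ 6) * (∫⁻ x, ‖c x‖ₑ ^ 2) ^ ((1:ℝ) / 2) * ∫⁻ z, gam Λ T z := by
  have hF := continuous_Fd h T
  -- The regularisation parameter is `δ = s²`, and both sides pass to the limit `s → 0`.
  have hcont : Continuous (fun s : ℝ => ∫ x, c x * Fd Λ T (s ^ 2) (t x) x (y x)) := by
    refine continuous_of_dominated
      (bound := fun x => ‖c x‖ * ∫ p, (M * ∫ ξ, qq ξ) * qq p.2 ∂(nu T)) (fun s => ?_) (fun s => ?_)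
      (hc.norm.mul_const _) (Filter.Eventually.of_forall fun x => ?_)
    · have : Measurable (fun x => Fd Λ T (s ^ 2) (t x) x (y x)) :=
        hF.measurable.comp (by fun_prop : Measurable fun x => (s, t x, x, y x))
      exact (hcm.mul this).aestronglyMeasurable
    · refine Filter.Eventually.of_forall fun x => ?_
      rw [norm_mul]
      exact mul_le_mul_of_nonneg_left (norm_Fd_le h T _ _ _ _ (sq_nonneg _)) (norm_nonneg _)
    · exact continuous_const.mul (hF.comp
        (by fun_prop : Continuous fun s : ℝ => (s, t x, x, y x)))
  have h0 := (hcont.enorm.tendsto 0).mono_left (nhdsWithin_le_nhds (s := {0}ᶜ))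
  simp only [ne_eq, OfNat.ofNat_ne_zero, not_false_eq_true, zero_pow] at h0
  refine le_of_tendsto h0 ?_
  filter_upwards [self_mem_nhdsWithin] with s hs
  exact reg_estimate h _ T (by have : s ≠ 0 := hs; positivity) hfin c hcm hc t y ht hy ht1

/-- Estimate for a measurable choice of `(t, y)` on a bounded interval, by testing against the
function itself. -/
lemma selected_estimate (h : Adm Λ M) (T : ℝ) (hfin : ∫⁻ z, gam Λ T z < ∞) (t y : ℝ → ℝ)
    (ht : Measurable t) (hy : Measurable y) (ht1 : ∀ x, t x ∈ Set.Icc (0:ℝ) 1) (R : ℝ) :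
    ∫⁻ x in Set.Icc (-R) R, ‖Fd Λ T 0 (t x) x (y x)‖ₑ ^ 2 ≤
      (ENNReal.ofReal (10 ^ 6) * ∫⁻ z, gam Λ T z) ^ 2 := by
  have hF := continuous_Fd h T
  set f : ℝ → ℂ := fun x => Fd Λ T 0 (t x) x (y x) with hf
  have hfm : Measurable f := by
    have := hF.measurable.comp (by fun_prop : Measurable fun x => ((0:ℝ), t x, x, y x))
    simpa only [Function.comp_def, ne_eq, OfNat.ofNat_ne_zero, not_false_eq_true, zero_pow] using this
  set K : ℝ := ∫ p, (M * ∫ ξ, qq ξ) * qq p.2 ∂(nu T) with hK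
  have hfK : ∀ x, ‖f x‖ ≤ K := fun x => norm_Fd_le h T _ _ _ _ le_rfl
  -- The test function is the conjugate of `f`, cut off to a bounded interval so that it is integrable
  -- and the square norm `Q` is finite, which allows division by its square root.
  set c : ℝ → ℂ := (Set.Icc (-R) R).indicator fun x => (starRingEnd ℂ) (f x) with hc
  have hcm : Measurable c :=
    (Complex.continuous_conj.measurable.comp hfm).indicator measurableSet_Icc
  have hci : Integrable c := by
    rw [hc, integrable_indicator_iff measurableSet_Icc]
    refine Measure.integrableOn_of_bounded (M := K) (by simp) ?_ (Filter.Eventually.of_forall ?_)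
    · exact (Complex.continuous_conj.measurable.comp hfm).aestronglyMeasurable
    · intro x; rw [RCLike.norm_conj]; exact hfK x
  have hd := dual_estimate h T hfin c hcm hci t y ht hy ht1
  set Q : ℝ≥0∞ := ∫⁻ x in Set.Icc (-R) R, ‖f x‖ₑ ^ 2 with hQ
  have e1 : ∫⁻ x, ‖c x‖ₑ ^ 2 = Q := by
    rw [hQ, ← lintegral_indicator measurableSet_Icc]
    congr 1; ext x
    by_cases hx : x ∈ Set.Icc (-R) R
    · simp only [hc, Set.indicator_of_mem hx]
      rw [← ofReal_norm, RCLike.norm_conj, ofReal_norm]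
    · simp [hc, Set.indicator_of_notMem hx]
  have hQf : Q < ∞ := by
    calc Q ≤ ∫⁻ x in Set.Icc (-R) R, ENNReal.ofReal K ^ 2 := by
          refine lintegral_mono fun x => ?_
          have : ‖f x‖ₑ ≤ ENNReal.ofReal K := by
            rw [← ofReal_norm]; exact ENNReal.ofReal_le_ofReal (hfK x)
          change ‖f x‖ₑ ^ 2 ≤ ENNReal.ofReal K ^ 2
          gcongr
      _ < ∞ := by
          rw [setLIntegral_const]
          exact ENNReal.mul_lt_top (ENNReal.pow_lt_top ENNReal.ofReal_lt_top) (by simp)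
  have e2 : ‖∫ x, c x * f x‖ₑ = Q := by
    have h1 : ∀ x, c x * f x = (((Set.Icc (-R) R).indicator (fun x => ‖f x‖ ^ 2) x : ℝ) : ℂ) := by
      intro x
      by_cases hx : x ∈ Set.Icc (-R) R
      · simp only [hc, Set.indicator_of_mem hx]
        rw [mul_comm, RCLike.mul_conj]; push_cast; rfl
      · simp [hc, Set.indicator_of_notMem hx]
    simp_rw [h1]
    rw [integral_complex_ofReal, integral_indicator measurableSet_Icc, ← ofReal_norm,
      Complex.norm_real, Real.norm_of_nonneg (integral_nonneg fun _ => sq_nonneg _),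
      ofReal_integral_eq_lintegral_ofReal ?_ (Filter.Eventually.of_forall fun _ => sq_nonneg _)]
    · refine lintegral_congr fun x => ?_
      rw [ENNReal.ofReal_pow (norm_nonneg _), ofReal_norm]
    · refine Measure.integrableOn_of_bounded (M := K ^ 2) (by simp) ?_ (Filter.Eventually.of_forall ?_)
      · exact (hfm.norm.pow_const 2).aestronglyMeasurable
      · intro x
        rw [Real.norm_of_nonneg (sq_nonneg _)]
        have := hfK x
        gcongr
  rw [e1] at hd
  change ‖∫ x, c x * f x‖ₑ ≤ _ at hd
  rw [e2] at hd
  set q := Q ^ ((1:ℝ) / 2) with hq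
  have hqq : Q = q ^ 2 := (rpow_half_sq Q).symm
  have hqf : q ≠ ∞ := (ENNReal.rpow_lt_top_of_nonneg (by norm_num) hQf.ne).ne
  rw [hqq] at hd ⊢
  gcongr
  by_cases hq0 : q = 0
  · rw [hq0]; exact zero_le
  · rw [← ENNReal.mul_le_mul_iff_right hq0 hqf]
    calc q * q = q ^ 2 := (sq q).symm
      _ ≤ _ := hd
      _ = _ := by ring

/-- The maximal estimate for `Fd` at `δ = 0`: the supremum is a countable one by continuity, and
finite maxima admit measurable selections. -/
lemma sup_estimate (h : Adm Λ M) (T : ℝ) (hT0 : 0 ≤ T) (hT1 : T ≤ 1)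
    (hfin : ∫⁻ z, gam Λ T z < ∞) :
    ∫⁻ x : ℝ, (⨆ y : ℝ, ⨆ t ∈ Set.Icc (0:ℝ) T, ‖Fd Λ T 0 t x y‖ₑ) ^ 2 ≤
      (ENNReal.ofReal (10 ^ 6) * ∫⁻ z, gam Λ T z) ^ 2 := by
  have hF : Continuous (fun w : ℝ × ℝ × ℝ => Fd Λ T 0 w.1 w.2.1 w.2.2) := by
    have := (continuous_Fd h T).comp
      (by fun_prop : Continuous fun w : ℝ × ℝ × ℝ => ((0:ℝ), w.1, w.2.1, w.2.2))
    simpa only [Function.comp_def, ne_eq, OfNat.ofNat_ne_zero, not_false_eq_true, zero_pow] using this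
  have : Nonempty (Set.Icc (0:ℝ) T) := ⟨⟨0, le_rfl, hT0⟩⟩
  set d : ℕ → (Set.Icc (0:ℝ) T) × ℝ := TopologicalSpace.denseSeq _ with hd
  have hdd : DenseRange d := TopologicalSpace.denseRange_denseSeq _
  set v : ℕ → ℝ → ℝ≥0∞ := fun n x => ‖Fd Λ T 0 (d n).1 x (d n).2‖ₑ with hv
  have hvm : ∀ n, Measurable (v n) := fun n =>
    (hF.measurable.comp (by fun_prop :
      Measurable fun x : ℝ => (((d n).1 : ℝ), x, (d n).2))).enorm
  -- By continuity the supremum equals that over a countable dense sequence.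
  have hsup : ∀ x, (⨆ y : ℝ, ⨆ t ∈ Set.Icc (0:ℝ) T, ‖Fd Λ T 0 t x y‖ₑ) ≤ ⨆ n, v n x := by
    intro x
    refine iSup_le fun y => iSup₂_le fun t ht => ?_
    have hcl : IsClosed {w : (Set.Icc (0:ℝ) T) × ℝ | ‖Fd Λ T 0 w.1 x w.2‖ₑ ≤ ⨆ n, v n x} := by
      refine isClosed_le (Continuous.enorm (hF.comp (by fun_prop :
        Continuous fun w : (Set.Icc (0:ℝ) T) × ℝ => ((w.1 : ℝ), x, w.2)))) continuous_const
    have := hdd.induction_on (p := fun w => ‖Fd Λ T 0 w.1 x w.2‖ₑ ≤ ⨆ n, v n x)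
      ((⟨t, ht⟩, y) : (Set.Icc (0:ℝ) T) × ℝ) hcl
      (fun n => le_iSup (fun n => v n x) n)
    exact this
  -- The maximum of finitely many terms is realised by measurable selectors.
  have hsel : ∀ N : ℕ, ∃ a : ℝ → ℝ × ℝ, Measurable a ∧ (∀ x, (a x).1 ∈ Set.Icc 0 T) ∧
      ∀ n ≤ N, ∀ x, v n x ≤ ‖Fd Λ T 0 (a x).1 x (a x).2‖ₑ := by
    intro N
    induction N with
    | zero =>
      refine ⟨fun x => ((d 0).1, (d 0).2), measurable_const, fun x => (d 0).1.2, fun n hn x => ?_⟩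
      rw [Nat.le_zero.1 hn]
    | succ N ih =>
      obtain ⟨a, ha, hai, hav⟩ := ih
      have hu : Measurable (fun x => ‖Fd Λ T 0 (a x).1 x (a x).2‖ₑ) :=
        (hF.measurable.comp (by fun_prop : Measurable fun x : ℝ => ((a x).1, x, (a x).2))).enorm
      refine ⟨fun x => if v (N + 1) x ≤ ‖Fd Λ T 0 (a x).1 x (a x).2‖ₑ then a x else
        ((d (N + 1)).1, (d (N + 1)).2), ?_, fun x => ?_, fun n hn x => ?_⟩
      · exact Measurable.ite (measurableSet_le (hvm _) hu) ha measurable_const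
      · beta_reduce
        split_ifs
        · exact hai x
        · exact (d (N + 1)).1.2
      · rcases Nat.lt_or_ge n (N + 1) with hlt | hge
        · have h1 := hav n (Nat.lt_succ_iff.1 hlt) x
          beta_reduce
          split_ifs with hcond
          · exact h1
          · exact h1.trans (not_le.1 hcond).le
        · have : n = N + 1 := le_antisymm hn hge
          rw [this]
          beta_reduce
          split_ifs with hcond
          · exact hcond
          · exact le_rfl
  set s : ℕ → ℝ → ℝ≥0∞ := fun N => (Set.Icc (-(N:ℝ)) N).indicator
    fun x => (⨆ n ≤ N, v n x) ^ 2 with hs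
  have hsm : ∀ N, Measurable (s N) := fun N => by
    refine Measurable.indicator ?_ measurableSet_Icc
    exact (Measurable.iSup fun n => Measurable.iSup fun _ => hvm n).pow_const 2
  have hmono : Monotone s := by
    intro N N' hN x
    have hc : (N:ℝ) ≤ N' := by exact_mod_cast hN
    have h1 : (⨆ n ≤ N, v n x) ≤ ⨆ n ≤ N', v n x :=
      iSup₂_le fun n hn => le_iSup₂_of_le n (hn.trans hN) le_rfl
    simp only [hs]
    by_cases hx : x ∈ Set.Icc (-(N:ℝ)) N
    · have hx' : x ∈ Set.Icc (-(N':ℝ)) N' := ⟨by linarith [hx.1], by linarith [hx.2]⟩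
      rw [Set.indicator_of_mem hx, Set.indicator_of_mem hx']
      gcongr
    · rw [Set.indicator_of_notMem hx]; exact zero_le
  have hpt : ∀ x, (⨆ n, v n x) ^ 2 ≤ ⨆ N, s N x := by
    intro x
    obtain ⟨N0, hN0⟩ := exists_nat_ge |x|
    have hsq : ∀ b : ℝ≥0∞, (b ^ ((1:ℝ) / 2)) ^ 2 = b := rpow_half_sq
    rw [← hsq (⨆ N, s N x)]
    gcongr
    refine iSup_le fun n => ?_
    refine le_of_sq_le_sq ?_
    rw [hsq]
    refine le_iSup_of_le (max n N0) ?_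
    have hx : x ∈ Set.Icc (-((max n N0 : ℕ):ℝ)) (max n N0 : ℕ) := by
      have : (N0:ℝ) ≤ (max n N0 : ℕ) := by exact_mod_cast le_max_right n N0
      exact abs_le.1 (hN0.trans this)
    simp only [hs]
    rw [Set.indicator_of_mem hx]
    gcongr
    exact le_iSup₂_of_le n (le_max_left _ _) le_rfl
  calc _ ≤ ∫⁻ x, ⨆ N, s N x := by
        refine lintegral_mono fun x => le_trans ?_ (hpt x)
        have := hsup x
        gcongr
    _ = ⨆ N, ∫⁻ x, s N x := lintegral_iSup hsm hmono
    _ ≤ _ := by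
        refine iSup_le fun N => ?_
        obtain ⟨a, ha, hai, hav⟩ := hsel N
        refine le_trans ?_ (selected_estimate h T hfin (fun x => (a x).1) (fun x => (a x).2)
          (by fun_prop) (by fun_prop) (fun x => ⟨(hai x).1, (hai x).2.trans hT1⟩) N)
        simp only [hs]
        rw [lintegral_indicator measurableSet_Icc]
        refine lintegral_mono fun x => ?_
        have : (⨆ n ≤ N, v n x) ≤ ‖Fd Λ T 0 (a x).1 x (a x).2‖ₑ := iSup₂_le fun n hn => hav n hn x
        change (⨆ n ≤ N, v n x) ^ 2 ≤ ‖Fd Λ T 0 (a x).1 x (a x).2‖ₑ ^ 2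
        gcongr

end ZK

/-! ### Fourier transform of Schwartz sources -/

namespace ZK

/-- The identification of the Euclidean plane `WithLp 2 (ℝ × ℝ)` with `ℝ × ℝ`. -/
abbrev eE : WithLp 2 (ℝ × ℝ) ≃L[ℝ] ℝ × ℝ := WithLp.prodContinuousLinearEquiv 2 ℝ ℝ ℝ

lemma eE_mp : MeasurePreserving (eE : WithLp 2 (ℝ × ℝ) → ℝ × ℝ) :=
  WithLp.volume_preserving_ofLp ℝ ℝ

lemma eE_emb : MeasurableEmbedding (eE : WithLp 2 (ℝ × ℝ) → ℝ × ℝ) :=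
  eE.toHomeomorph.measurableEmbedding

open FourierTransform in
/-- The Fourier transform as a map of Schwartz functions on `ℝ × ℝ`, transported from the Euclidean
plane. -/
def FS (φ : SchwartzMap (ℝ × ℝ) ℂ) : SchwartzMap (ℝ × ℝ) ℂ :=
  SchwartzMap.compCLMOfContinuousLinearEquiv ℝ eE.symm
    (𝓕 (SchwartzMap.compCLMOfContinuousLinearEquiv ℝ eE φ))

lemma continuous_FS : Continuous FS := by
  unfold FS
  fun_prop

lemma inner_eE (v : WithLp 2 (ℝ × ℝ)) (ξ : ℝ × ℝ) :
    inner ℝ v (eE.symm ξ) = (eE v).1 * ξ.1 + (eE v).2 * ξ.2 := by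
  simp [WithLp.prod_inner_apply, mul_comm]

open FourierTransform in
lemma FS_apply (φ : SchwartzMap (ℝ × ℝ) ℂ) (ξ : ℝ × ℝ) : FS φ ξ = FT φ ξ := by
  change (𝓕 (SchwartzMap.compCLMOfContinuousLinearEquiv ℝ eE φ)) (eE.symm ξ) = _
  rw [SchwartzMap.fourier_coe, Real.fourier_eq', FT, ← eE_mp.integral_comp eE_emb]
  refine integral_congr_ae (Filter.Eventually.of_forall fun v => ?_)
  simp only [inner_eE, SchwartzMap.compCLMOfContinuousLinearEquiv_apply, smul_eq_mul,
    Function.comp_apply]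
  congr 3
  push_cast; ring

open FourierTransform in
lemma FTinv_FT (φ : SchwartzMap (ℝ × ℝ) ℂ) (x : ℝ × ℝ) : FTinv (FT φ) x = φ x := by
  have h1 : 𝓕⁻ (𝓕 (SchwartzMap.compCLMOfContinuousLinearEquiv ℝ eE φ)) =
    SchwartzMap.compCLMOfContinuousLinearEquiv ℝ eE φ := FourierTransform.fourierInv_fourier_eq _
  have h2 := DFunLike.congr_fun h1 (eE.symm x)
  rw [SchwartzMap.fourierInv_coe, Real.fourierInv_eq'] at h2
  simp only [SchwartzMap.compCLMOfContinuousLinearEquiv_apply, Function.comp_apply,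
    ContinuousLinearEquiv.apply_symm_apply] at h2
  rw [← h2, FTinv, ← eE_mp.integral_comp eE_emb]
  refine integral_congr_ae (Filter.Eventually.of_forall fun v => ?_)
  simp only [inner_eE, smul_eq_mul]
  rw [← FS_apply]
  have e : FS φ (eE v) = (𝓕 (SchwartzMap.compCLMOfContinuousLinearEquiv ℝ eE φ)) v := by
    change (𝓕 (SchwartzMap.compCLMOfContinuousLinearEquiv ℝ eE φ)) (eE.symm (eE v)) = _
    rw [ContinuousLinearEquiv.symm_apply_apply]
  rw [e]
  congr 2
  push_cast; ring

/-- A Schwartz function decays like any power of the weight, with a constant continuous in the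
Schwartz topology. -/
lemma schwartz_decay (ψ : SchwartzMap (ℝ × ℝ) ℂ) (ξ η : ℝ) :
    ‖ψ (ξ, η)‖ ≤ (2 ^ 12 * (Finset.Iic (12, 0)).sup (fun m => SchwartzMap.seminorm ℝ m.1 m.2) ψ) *
      (qq ξ ^ 3 * qq η ^ 3) := by
  have h := SchwartzMap.one_add_le_sup_seminorm_apply (𝕜 := ℝ) (m := (12, 0)) (k := 12) (n := 0)
    le_rfl le_rfl ψ (ξ, η)
  rw [norm_iteratedFDeriv_zero] at h
  have h1 : (1 + ξ ^ 2) ^ 3 * (1 + η ^ 2) ^ 3 ≤ (1 + ‖((ξ, η) : ℝ × ℝ)‖) ^ 12 := by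
    have a1 : |ξ| ≤ ‖((ξ, η) : ℝ × ℝ)‖ := norm_fst_le (ξ, η)
    have a2 : |η| ≤ ‖((ξ, η) : ℝ × ℝ)‖ := norm_snd_le (ξ, η)
    have b : ∀ u r : ℝ, |u| ≤ r → 1 + u ^ 2 ≤ (1 + r) ^ 2 := by
      intro u r hu
      have := abs_nonneg u
      nlinarith [sq_abs u]
    calc _ ≤ ((1 + ‖((ξ, η) : ℝ × ℝ)‖) ^ 2) ^ 3 * ((1 + ‖((ξ, η) : ℝ × ℝ)‖) ^ 2) ^ 3 := by
          gcongr
          · exact b _ _ a1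
          · exact b _ _ a2
      _ = _ := by ring
  have h2 : qq ξ ^ 3 * qq η ^ 3 = ((1 + ξ ^ 2) ^ 3 * (1 + η ^ 2) ^ 3)⁻¹ := by
    unfold qq; rw [mul_inv, inv_pow, inv_pow]
  rw [h2, ← div_eq_mul_inv, le_div_iff₀ (by positivity), mul_comm]
  exact (mul_le_mul_of_nonneg_right h1 (norm_nonneg _)).trans h

lemma continuous_sup_seminorm : Continuous fun ψ : SchwartzMap (ℝ × ℝ) ℂ =>
    (Finset.Iic (12, 0)).sup (fun m => SchwartzMap.seminorm ℝ m.1 m.2) ψ := by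
  have h := schwartz_withSeminorms ℝ (ℝ × ℝ) ℂ
  exact Seminorm.continuous_finsetSup fun i _ => h.continuous_seminorm i

/-- The source, extended to all times by freezing it outside `[0,T]`. -/
def gp (T : ℝ) (hT : 0 ≤ T) (g : ℝ → SchwartzMap (ℝ × ℝ) ℂ) (τ : ℝ) : SchwartzMap (ℝ × ℝ) ℂ :=
  g (Set.projIcc 0 T hT τ)

lemma gp_eq (T : ℝ) (hT : 0 ≤ T) (g : ℝ → SchwartzMap (ℝ × ℝ) ℂ) {τ : ℝ} (h : τ ∈ Set.Icc 0 T) :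
    gp T hT g τ = g τ := by
  unfold gp; rw [Set.projIcc_of_mem hT h]

lemma continuous_gp (T : ℝ) (hT : 0 ≤ T) (g : ℝ → SchwartzMap (ℝ × ℝ) ℂ)
    (hg : ContinuousOn g (Set.Icc 0 T)) : Continuous (gp T hT g) :=
  (continuousOn_iff_continuous_domRestrict.1 hg).comp continuous_projIcc

/-- The Fourier transform in space of the extended source. -/
def Gm (T : ℝ) (hT : 0 ≤ T) (g : ℝ → SchwartzMap (ℝ × ℝ) ℂ) (w : ℝ × ℝ × ℝ) : ℂ :=
  FS (gp T hT g w.1) w.2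

lemma continuous_Gm (T : ℝ) (hT : 0 ≤ T) (g : ℝ → SchwartzMap (ℝ × ℝ) ℂ)
    (hg : ContinuousOn g (Set.Icc 0 T)) : Continuous (Gm T hT g) := by
  have h1 : Continuous fun w : ℝ × ℝ × ℝ =>
      SchwartzMap.toBoundedContinuousFunctionCLM ℝ (ℝ × ℝ) ℂ (FS (gp T hT g w.1)) :=
    (SchwartzMap.toBoundedContinuousFunctionCLM ℝ (ℝ × ℝ) ℂ).continuous.comp
      (continuous_FS.comp ((continuous_gp T hT g hg).comp continuous_fst))
  exact h1.eval continuous_snd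

/-- Decay of the Fourier transform of the source, uniform in time by compactness of `[0, T]`. -/
lemma Gm_bound (T : ℝ) (hT : 0 ≤ T) (g : ℝ → SchwartzMap (ℝ × ℝ) ℂ)
    (hg : ContinuousOn g (Set.Icc 0 T)) :
    ∃ M, 0 ≤ M ∧ ∀ τ ξ η, ‖Gm T hT g (τ, ξ, η)‖ ≤ M * (qq ξ ^ 3 * qq η ^ 3) := by
  have hc : ContinuousOn (fun τ => (2:ℝ) ^ 12 * (Finset.Iic (12, 0)).sup
      (fun m => SchwartzMap.seminorm ℝ m.1 m.2) (FS (g τ))) (Set.Icc 0 T) :=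
    (continuous_const.mul (continuous_sup_seminorm.comp continuous_FS)).comp_continuousOn hg
  obtain ⟨M, hM⟩ := isCompact_Icc.bddAbove_image hc
  have hM' : ∀ τ ξ η, ‖Gm T hT g (τ, ξ, η)‖ ≤ M * (qq ξ ^ 3 * qq η ^ 3) := by
    intro τ ξ η
    refine (schwartz_decay _ ξ η).trans ?_
    have h1 := hM (Set.mem_image_of_mem _ (Set.projIcc 0 T hT τ).2)
    have := qq_pos ξ
    have := qq_pos η
    exact mul_le_mul_of_nonneg_right h1 (by positivity)
  refine ⟨M, ?_, hM'⟩
  have h1 := (norm_nonneg _).trans (hM' 0 0 0)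
  have h2 : 0 < qq 0 ^ 3 * qq 0 ^ 3 := by have := qq_pos 0; positivity
  exact nonneg_of_mul_nonneg_left h1 h2

lemma rpow_le_inv_qq (u : ℝ) : |u| ^ ((7:ℝ) / 9) ≤ (qq u)⁻¹ := by
  unfold qq
  rw [inv_inv]
  rcases le_total |u| 1 with h | h
  · exact (Real.rpow_le_one (abs_nonneg _) h (by norm_num)).trans (by nlinarith [sq_nonneg u])
  · calc |u| ^ ((7:ℝ) / 9) ≤ |u| ^ (2:ℝ) := Real.rpow_le_rpow_of_exponent_le h (by norm_num)
      _ = u ^ 2 := by rw [Real.rpow_two, sq_abs]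
      _ ≤ _ := by linarith

lemma Wt_mul_le (ξ η : ℝ) : Wt ξ η * (qq ξ * qq η) ≤ 3 := by
  have h1 := qq_pos ξ
  have h2 := qq_pos η
  have h3 := qq_le_one ξ
  have h4 := qq_le_one η
  have a1 : |ξ| ^ ((7:ℝ) / 9) * qq ξ ≤ 1 := by
    have := mul_le_mul_of_nonneg_right (rpow_le_inv_qq ξ) h1.le
    rwa [inv_mul_cancel₀ h1.ne'] at this
  have a2 : |η| ^ ((7:ℝ) / 9) * qq η ≤ 1 := by
    have := mul_le_mul_of_nonneg_right (rpow_le_inv_qq η) h2.le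
    rwa [inv_mul_cancel₀ h2.ne'] at this
  have a3 : qq ξ * qq η ≤ 1 := mul_le_one₀ h3 h2.le h4
  have b1 : (|ξ| ^ ((7:ℝ) / 9) * qq ξ) * qq η ≤ 1 := mul_le_one₀ a1 h2.le h4
  have b2 : (|η| ^ ((7:ℝ) / 9) * qq η) * qq ξ ≤ 1 := mul_le_one₀ a2 h1.le h3
  unfold Wt
  nlinarith

/-- The weighted data `Wt · F g`. -/
def Lm (T : ℝ) (hT : 0 ≤ T) (g : ℝ → SchwartzMap (ℝ × ℝ) ℂ) (w : ℝ × ℝ × ℝ) : ℂ :=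
  (Wt w.2.1 w.2.2 : ℂ) * Gm T hT g w

lemma Lm_adm (T : ℝ) (hT : 0 ≤ T) (g : ℝ → SchwartzMap (ℝ × ℝ) ℂ)
    (hg : ContinuousOn g (Set.Icc 0 T)) : ∃ M, Adm (Lm T hT g) M := by
  obtain ⟨M, hM0, hM⟩ := Gm_bound T hT g hg
  refine ⟨3 * M, ?_, fun τ ξ η => ?_⟩
  · have h1 : Continuous (fun w : ℝ × ℝ × ℝ => Wt w.2.1 w.2.2) := continuous_Wt.comp continuous_snd
    exact (Complex.continuous_ofReal.comp h1).mul (continuous_Gm T hT g hg)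
  · unfold Lm
    rw [norm_mul, Complex.norm_real, Real.norm_of_nonneg (Wt_pos _ _).le]
    have h1 := qq_pos ξ
    have h2 := qq_pos η
    have h4 := qq_le_one η
    have h3 := (Wt_pos ξ η).le
    calc Wt ξ η * ‖Gm T hT g (τ, ξ, η)‖ ≤ Wt ξ η * (M * (qq ξ ^ 3 * qq η ^ 3)) := by
          gcongr; exact hM τ ξ η
      _ = (Wt ξ η * (qq ξ * qq η)) * (M * (qq ξ ^ 2 * qq η ^ 2)) := by ring
      _ ≤ 3 * (M * (qq ξ ^ 2 * qq η)) := by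
          gcongr
          · exact Wt_mul_le ξ η
          · exact qq_sq_le η
      _ = _ := by ring

end ZK

/-! ### The derivative of the Duhamel term -/

namespace ZK

/-- The space-time Fourier integrand of the Duhamel term at `(t, x, y)`; the integration variable is
`q = ((τ, η), ξ)`. -/
def Ki (G : ℝ × ℝ × ℝ → ℂ) (t x y : ℝ) (q : (ℝ × ℝ) × ℝ) : ℂ :=
  (if q.1.1 < t then (1:ℂ) else 0) * (ee (2 * Real.pi * (y * q.1.2)) *
    (ee ((t - q.1.1) * (q.2 * (q.2 ^ 2 + q.1.2 ^ 2)) + 2 * Real.pi * (x * q.2)) *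
      G (q.1.1, q.2, q.1.2)))

lemma measurable_Ki {G : ℝ × ℝ × ℝ → ℂ} (hG : Continuous G) (t x y : ℝ) :
    Measurable (Ki G t x y) := by
  have hm := hG.measurable
  have h2 : Measurable (fun p : (ℝ × ℝ) × ℝ => if p.1.1 < t then (1:ℂ) else 0) :=
    Measurable.ite (measurableSet_lt (by fun_prop) (by fun_prop)) measurable_const measurable_const
  have h3 : Measurable (fun q : (ℝ × ℝ) × ℝ => ee (2 * Real.pi * (y * q.1.2)) *
    (ee ((t - q.1.1) * (q.2 * (q.2 ^ 2 + q.1.2 ^ 2)) + 2 * Real.pi * (x * q.2)) *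
      G (q.1.1, q.2, q.1.2))) := by fun_prop
  exact h2.mul h3

lemma norm_Ki_le (G : ℝ × ℝ × ℝ → ℂ) (t x y : ℝ) (q : (ℝ × ℝ) × ℝ) :
    ‖Ki G t x y q‖ ≤ ‖G (q.1.1, q.2, q.1.2)‖ := by
  unfold Ki
  rw [norm_mul, norm_mul, norm_mul, norm_ee, norm_ee, one_mul, one_mul]
  have h1 : ‖(if q.1.1 < t then (1:ℂ) else 0)‖ ≤ 1 := by split_ifs <;> norm_num
  exact mul_le_of_le_one_left (norm_nonneg _) h1

lemma qq_cube_le (ξ η : ℝ) : qq ξ ^ 3 * qq η ^ 3 ≤ qq η * qq ξ := by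
  have h1 := qq_pos ξ
  have h2 := qq_pos η
  have h3 : qq ξ ^ 3 ≤ qq ξ := pow_le_of_le_one h1.le (qq_le_one ξ) (by norm_num)
  have h4 : qq η ^ 3 ≤ qq η := pow_le_of_le_one h2.le (qq_le_one η) (by norm_num)
  rw [mul_comm]
  gcongr

lemma abs_mul_qq_cube_le (ξ η : ℝ) : |ξ| * (qq ξ ^ 3 * qq η ^ 3) ≤ qq η * qq ξ := by
  have h1 := qq_pos ξ
  have h2 := qq_pos η
  have h3 : |ξ| * qq ξ ^ 3 ≤ qq ξ := by
    calc |ξ| * qq ξ ^ 3 = (|ξ| * qq ξ ^ 2) * qq ξ := by ring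
      _ ≤ qq ξ * 1 := mul_le_mul (abs_mul_qq_sq_le ξ) (qq_le_one ξ) h1.le h1.le
      _ = _ := mul_one _
  have h4 : qq η ^ 3 ≤ qq η := pow_le_of_le_one h2.le (qq_le_one η) (by norm_num)
  calc _ = qq η ^ 3 * (|ξ| * qq ξ ^ 3) := by ring
    _ ≤ _ := by gcongr

variable {G : ℝ × ℝ × ℝ → ℂ} {M : ℝ}

lemma integrable_maj_Ki (T M : ℝ) :
    Integrable (fun q : (ℝ × ℝ) × ℝ => M * (qq q.1.2 * qq q.2)) ((nu T).prod volume) :=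
  ((integrable_qq_nu T).mul_prod integrable_qq).const_mul M

lemma integrable_Ki (hG : Continuous G) (hM : 0 ≤ M)
    (hb : ∀ τ ξ η, ‖G (τ, ξ, η)‖ ≤ M * (qq ξ ^ 3 * qq η ^ 3)) (T t x y : ℝ) :
    Integrable (Ki G t x y) ((nu T).prod volume) := by
  refine (integrable_maj_Ki T M).mono' (measurable_Ki hG t x y).aestronglyMeasurable
    (Filter.Eventually.of_forall fun q => ?_)
  refine (norm_Ki_le G t x y q).trans ((hb _ _ _).trans ?_)
  exact mul_le_mul_of_nonneg_left (qq_cube_le _ _) hM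

lemma hasDerivAt_ee_lin (a b x : ℝ) :
    HasDerivAt (fun x : ℝ => ee (a + 2 * Real.pi * (x * b)))
      (ee (a + 2 * Real.pi * (x * b)) * ((2 * Real.pi * b : ℝ) * Complex.I)) x := by
  unfold ee
  have h1 : HasDerivAt (fun x : ℝ => a + 2 * Real.pi * (x * b)) (2 * Real.pi * b) x := by
    have := (((hasDerivAt_id' x).mul_const b).const_mul (2 * Real.pi)).const_add a
    simpa using this
  exact (h1.ofReal_comp.mul_const Complex.I).cexp

lemma hasDerivAt_Ki (t x y : ℝ) (q : (ℝ × ℝ) × ℝ) :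
    HasDerivAt (fun x => Ki G t x y q)
      (((2 * Real.pi * q.2 : ℝ) * Complex.I) * Ki G t x y q) x := by
  have h1 := hasDerivAt_ee_lin ((t - q.1.1) * (q.2 * (q.2 ^ 2 + q.1.2 ^ 2))) q.2 x
  have h2 := ((h1.mul_const (G (q.1.1, q.2, q.1.2))).const_mul
    (ee (2 * Real.pi * (y * q.1.2)))).const_mul (if q.1.1 < t then (1:ℂ) else 0)
  refine h2.congr_deriv ?_
  unfold Ki
  ring

/-- Differentiation under the integral sign in the Fourier representation of the Duhamel term. -/
lemma hasDerivAt_integral_Ki (hG : Continuous G) (hM : 0 ≤ M)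
    (hb : ∀ τ ξ η, ‖G (τ, ξ, η)‖ ≤ M * (qq ξ ^ 3 * qq η ^ 3)) (T t x y : ℝ) :
    Integrable (fun q : (ℝ × ℝ) × ℝ => ((2 * Real.pi * q.2 : ℝ) * Complex.I) * Ki G t x y q)
      ((nu T).prod volume) ∧
    HasDerivAt (fun x => ∫ q, Ki G t x y q ∂((nu T).prod volume))
      (∫ q : (ℝ × ℝ) × ℝ, ((2 * Real.pi * q.2 : ℝ) * Complex.I) * Ki G t x y q
        ∂((nu T).prod volume)) x := by
  refine hasDerivAt_integral_of_dominated_loc_of_deriv_le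
    (bound := fun q : (ℝ × ℝ) × ℝ => (2 * Real.pi * M) * (qq q.1.2 * qq q.2))
    (F' := fun x q => ((2 * Real.pi * q.2 : ℝ) * Complex.I) * Ki G t x y q)
    (s := Set.univ) Filter.univ_mem
    (Filter.Eventually.of_forall fun x => (measurable_Ki hG t x y).aestronglyMeasurable)
    (integrable_Ki hG hM hb T t x y) ?_ ?_ (integrable_maj_Ki T _) ?_
  · have h1 := measurable_Ki hG t x y
    have h2 : Measurable (fun q : (ℝ × ℝ) × ℝ => ((2 * Real.pi * q.2 : ℝ) : ℂ) * Complex.I) := by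
      fun_prop
    exact (h2.mul h1).aestronglyMeasurable
  · refine Filter.Eventually.of_forall fun q x _ => ?_
    have e : ‖((2 * Real.pi * q.2 : ℝ) : ℂ) * Complex.I‖ = 2 * Real.pi * |q.2| := by
      rw [norm_mul, Complex.norm_I, mul_one, Complex.norm_real, Real.norm_eq_abs, abs_mul,
        abs_of_pos (by positivity : (0:ℝ) < 2 * Real.pi)]
    rw [norm_mul, e]
    calc 2 * Real.pi * |q.2| * ‖Ki G t x y q‖
        ≤ 2 * Real.pi * |q.2| * (M * (qq q.2 ^ 3 * qq q.1.2 ^ 3)) := by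
          gcongr; exact (norm_Ki_le G t x y q).trans (hb _ _ _)
      _ = (2 * Real.pi * M) * (|q.2| * (qq q.2 ^ 3 * qq q.1.2 ^ 3)) := by ring
      _ ≤ _ := mul_le_mul_of_nonneg_left (abs_mul_qq_cube_le _ _) (by positivity)
  · exact Filter.Eventually.of_forall fun q x _ => hasDerivAt_Ki t x y q

/-- The `x₁`-derivative of the Fourier representation is `2πi · Fd` for the weighted data. -/
lemma integral_deriv_eq (T : ℝ) (hT : 0 ≤ T) (g : ℝ → SchwartzMap (ℝ × ℝ) ℂ) (t x y : ℝ)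
    (hi : Integrable (fun q : (ℝ × ℝ) × ℝ =>
      ((2 * Real.pi * q.2 : ℝ) * Complex.I) * Ki (Gm T hT g) t x y q) ((nu T).prod volume)) :
    ∫ q : (ℝ × ℝ) × ℝ, ((2 * Real.pi * q.2 : ℝ) * Complex.I) * Ki (Gm T hT g) t x y q
        ∂((nu T).prod volume) = (2 * Real.pi * Complex.I) * Fd (Lm T hT g) T 0 t x y := by
  rw [integral_prod _ hi, Fd, ← integral_const_mul]
  congr 1; ext p
  rw [← integral_const_mul, ← integral_const_mul, ← integral_const_mul]
  congr 1; ext ξ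
  have hW : (Wt ξ p.2 : ℂ) ≠ 0 := by exact_mod_cast (Wt_pos ξ p.2).ne'
  simp only [Ki, Lm, am, neg_zero, zero_mul, Real.exp_zero, mul_one]
  push_cast
  field_simp

/-- The Duhamel term as a single absolutely convergent integral over `(τ, η, ξ)`. -/
lemma duh_eq (T : ℝ) (hT : 0 ≤ T) (g : ℝ → SchwartzMap (ℝ × ℝ) ℂ)
    (hg : ContinuousOn g (Set.Icc 0 T)) (t : ℝ) (ht : t ∈ Set.Icc 0 T) (x y : ℝ) :
    Duh (fun τ => ⇑(g τ)) t (x, y) = ∫ q, Ki (Gm T hT g) t x y q ∂((nu T).prod volume) := by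
  obtain ⟨M, hM, hb⟩ := Gm_bound T hT g hg
  have hc := continuous_Gm T hT g hg
  have hi := integrable_Ki hc hM hb T t x y
  rw [integral_prod _ hi]
  have hi2 := hi.integral_prod_left
  unfold nu at hi2 ⊢
  rw [integral_prod _ hi2]
  have key : ∀ τ ∈ Set.Icc 0 T, (∫ η, ∫ ξ, Ki (Gm T hT g) t x y ((τ, η), ξ)) =
      (Set.Iio t).indicator (fun τ => U (t - τ) (g τ) (x, y)) τ := by
    intro τ hτ
    by_cases hlt : τ < t
    · rw [Set.indicator_of_mem (by exact hlt)]
      unfold U FTinv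
      have hintg : Integrable (fun ξ : ℝ × ℝ => Complex.exp
          ((((2 * Real.pi * (x * ξ.1 + y * ξ.2)) : ℝ) : ℂ) * Complex.I) *
          (Complex.exp (Complex.I * (((t - τ) * ξ.1 * (ξ.1 ^ 2 + ξ.2 ^ 2) : ℝ) : ℂ)) *
            FT (g τ) ξ)) ((volume : Measure ℝ).prod volume) := by
        have h1 : Integrable (FS (g τ)) ((volume : Measure ℝ).prod volume) :=
          (FS (g τ)).integrable
        refine h1.norm.mono' ?_ (Filter.Eventually.of_forall fun ξ => ?_)
        · have h2 : FT (g τ) = FS (g τ) := by ext ξ; rw [FS_apply]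
          rw [h2]
          have h3 : Continuous (FS (g τ)) := (FS (g τ)).continuous
          exact Continuous.aestronglyMeasurable (by fun_prop)
        · rw [norm_mul, norm_mul, Complex.norm_exp_ofReal_mul_I, mul_comm Complex.I,
            Complex.norm_exp_ofReal_mul_I, one_mul, one_mul, FS_apply]
      rw [Measure.volume_eq_prod, integral_prod_symm _ hintg]
      congr 1; ext η
      congr 1; ext ξ
      simp only [Ki, if_pos hlt, Gm, gp_eq T hT g hτ, FS_apply, one_mul]
      rw [mul_comm Complex.I]
      change _ = ee _ * (ee _ * _)
      rw [← mul_assoc (ee _) (ee _), ← mul_assoc (ee _) (ee _), ← ee_add, ← ee_add]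
      congr 2
      ring
    · rw [Set.indicator_of_notMem (by exact hlt)]
      simp [Ki, hlt]
  rw [setIntegral_congr_fun measurableSet_Icc key, setIntegral_indicator measurableSet_Iio]
  have hs : Set.Icc 0 T ∩ Set.Iio t = Set.Ico 0 t := by
    ext τ
    simp only [Set.mem_inter_iff, Set.mem_Icc, Set.mem_Iio, Set.mem_Ico]
    constructor
    · rintro ⟨⟨a, _⟩, b⟩; exact ⟨a, b⟩
    · rintro ⟨a, b⟩; exact ⟨⟨a, b.le.trans ht.2⟩, b⟩
  rw [hs, Duh, intervalIntegral.integral_of_le ht.1, integral_Ico_eq_integral_Ioo,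
    integral_Ioc_eq_integral_Ioo]

/-- The classical derivative of the Duhamel term is controlled by `Fd`. Where the Duhamel term is
not differentiable as a function of two variables, `fderiv` vanishes and there is nothing to
prove. -/
lemma norm_pd1_le (T : ℝ) (hT : 0 ≤ T) (g : ℝ → SchwartzMap (ℝ × ℝ) ℂ)
    (hg : ContinuousOn g (Set.Icc 0 T)) (t : ℝ) (ht : t ∈ Set.Icc 0 T) (x y : ℝ) :
    ‖pd1 (Duh (fun τ => ⇑(g τ)) t) (x, y)‖ ≤ 2 * Real.pi * ‖Fd (Lm T hT g) T 0 t x y‖ := by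
  obtain ⟨M, hM, hb⟩ := Gm_bound T hT g hg
  obtain ⟨hi, hd⟩ := hasDerivAt_integral_Ki (continuous_Gm T hT g hg) hM hb T t x y
  rw [integral_deriv_eq T hT g t x y hi] at hd
  have hd' : HasDerivAt (fun x => Duh (fun τ => ⇑(g τ)) t (x, y))
      ((2 * Real.pi * Complex.I) * Fd (Lm T hT g) T 0 t x y) x := by
    simp_rw [duh_eq T hT g hg t ht]
    exact hd
  unfold pd1
  by_cases hdiff : DifferentiableAt ℝ (Duh (fun τ => ⇑(g τ)) t) (x, y)
  · have h1 : HasDerivAt (fun x : ℝ => (x, y)) ((1:ℝ), (0:ℝ)) x :=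
      (hasDerivAt_id' x).prodMk (hasDerivAt_const x y)
    have h2 := hdiff.hasFDerivAt.comp_hasDerivAt x h1
    rw [h2.unique hd', norm_mul]
    simp [abs_of_pos Real.pi_pos]
  · rw [fderiv_zero_of_not_differentiableAt hdiff]
    simp only [_root_.zero_apply, norm_zero]
    positivity

end ZK

/-! ### The right-hand side -/

namespace ZK

variable {Λ : ℝ × ℝ × ℝ → ℂ} {M : ℝ}

lemma norm_Gt_le (h : Adm Λ M) (τ z η : ℝ) : ‖Gt Λ τ z η‖ ≤ (M * ∫ ξ, qq ξ) * qq η := by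
  unfold Gt
  calc _ ≤ ∫ ξ, M * qq η * qq ξ := by
        refine norm_integral_le_of_norm_le (integrable_qq.const_mul _)
          (Filter.Eventually.of_forall fun ξ => ?_)
        rw [norm_mul, norm_ee, mul_one]
        exact h.bound' τ ξ η
    _ = _ := by rw [integral_const_mul]; ring

/-- Plancherel in the second variable, at fixed time and fixed `x₁ = z`. -/
lemma plancherel_Gt (h : Adm Λ M) (τ z : ℝ) :
    ∫⁻ y, ‖∫ η, Gt Λ τ z η * ee (2 * Real.pi * (y * η))‖ₑ ^ 2 = ∫⁻ η, ‖Gt Λ τ z η‖ₑ ^ 2 := by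
  have hm : Measurable (fun η => Gt Λ τ z η) := measurable_Gt' h (by fun_prop) (by fun_prop)
    (by fun_prop)
  have h1 : Integrable (fun η => Gt Λ τ z η) :=
    (integrable_qq.const_mul _).mono' hm.aestronglyMeasurable
      (Filter.Eventually.of_forall fun η => norm_Gt_le h τ z η)
  have hK : ∀ η, ‖Gt Λ τ z η‖ ≤ M * ∫ ξ, qq ξ := by
    intro η
    refine (norm_Gt_le h τ z η).trans (mul_le_of_le_one_right ?_ (qq_le_one η))
    exact mul_nonneg h.M_nonneg (integral_nonneg fun ξ => (qq_pos ξ).le)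
  have h2 : MemLp (fun η => Gt Λ τ z η) 2 := by
    rw [memLp_two_iff_integrable_sq_norm hm.aestronglyMeasurable]
    refine (h1.norm.mul_bdd (c := M * ∫ ξ, qq ξ) h1.norm.aestronglyMeasurable
      (Filter.Eventually.of_forall fun η => by rw [norm_norm]; exact hK η)).congr
      (Filter.Eventually.of_forall fun η => ?_)
    exact (sq _).symm
  rw [← plancherel _ h1 h2, ← lintegral_neg_eq_self]
  refine lintegral_congr fun y => ?_
  congr 2
  refine integral_congr_ae (Filter.Eventually.of_forall fun η => ?_)
  change _ * ee _ = _ * ee _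
  congr 2
  ring

/-- The weighted source `(1 + D_{x₁}^{7/9} + D_{x₂}^{7/9}) g` is the partial inverse Fourier transform
of `Gt` for the weighted data. -/
lemma source_eq (T : ℝ) (hT : 0 ≤ T) (g : ℝ → SchwartzMap (ℝ × ℝ) ℂ)
    (hg : ContinuousOn g (Set.Icc 0 T)) (τ : ℝ) (hτ : τ ∈ Set.Icc 0 T) (z y : ℝ) :
    (g τ) (z, y) + Dx1 ((7:ℝ)/9) (⇑(g τ)) (z, y) + Dx2 ((7:ℝ)/9) (⇑(g τ)) (z, y) =
      ∫ η, Gt (Lm T hT g) τ z η * ee (2 * Real.pi * (y * η)) := by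
  obtain ⟨M, h⟩ := Lm_adm T hT g hg
  have hG : ∀ ξ : ℝ × ℝ, FT (g τ) ξ = Gm T hT g (τ, ξ) := by
    intro ξ; rw [Gm, gp_eq T hT g hτ, FS_apply]
  have hGc : Continuous (fun ξ : ℝ × ℝ => Gm T hT g (τ, ξ)) :=
    (continuous_Gm T hT g hg).comp (by fun_prop)
  have hL : Integrable (fun ξ : ℝ × ℝ => M * (qq ξ.1 * qq ξ.2))
      ((volume : Measure ℝ).prod volume) := (integrable_qq.mul_prod integrable_qq).const_mul M
  -- each of the three symbols is nonnegative and at most `Wt`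
  have hsym : ∀ w : ℝ × ℝ → ℝ, Continuous w → (∀ ξ, 0 ≤ w ξ) → (∀ ξ, w ξ ≤ Wt ξ.1 ξ.2) →
      Integrable (fun ξ : ℝ × ℝ => ee (2 * Real.pi * (z * ξ.1 + y * ξ.2)) *
        ((w ξ : ℂ) * Gm T hT g (τ, ξ))) ((volume : Measure ℝ).prod volume) := by
    intro w hwc hw0 hw
    refine hL.mono' ?_ (Filter.Eventually.of_forall fun ξ => ?_)
    · have h1 : Continuous (fun ξ : ℝ × ℝ => ee (2 * Real.pi * (z * ξ.1 + y * ξ.2))) :=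
        continuous_ee.comp (by fun_prop)
      exact (h1.mul ((Complex.continuous_ofReal.comp hwc).mul hGc)).aestronglyMeasurable
    · rw [norm_mul, norm_ee, one_mul, norm_mul, Complex.norm_real, Real.norm_of_nonneg (hw0 ξ)]
      have h2 := h.bound' τ ξ.1 ξ.2
      unfold Lm at h2
      rw [norm_mul, Complex.norm_real, Real.norm_of_nonneg (Wt_pos _ _).le] at h2
      calc w ξ * ‖Gm T hT g (τ, ξ)‖ ≤ Wt ξ.1 ξ.2 * ‖Gm T hT g (τ, ξ)‖ := by gcongr; exact hw ξ
        _ ≤ M * qq ξ.2 * qq ξ.1 := h2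
        _ = _ := by ring
  have p1 : ∀ u : ℝ, 0 ≤ |u| ^ ((7:ℝ) / 9) := fun u => by positivity
  have i0 := hsym (fun _ => 1) (by fun_prop) (fun _ => zero_le_one)
    (fun ξ => by have := p1 ξ.1; have := p1 ξ.2; unfold Wt; linarith)
  have i1 := hsym (fun ξ => |ξ.1| ^ ((7:ℝ) / 9))
    ((continuous_abs.comp continuous_fst).rpow_const fun _ => Or.inr (by norm_num))
    (fun ξ => p1 _) (fun ξ => by have := p1 ξ.2; unfold Wt; linarith)
  have i2 := hsym (fun ξ => |ξ.2| ^ ((7:ℝ) / 9))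
    ((continuous_abs.comp continuous_snd).rpow_const fun _ => Or.inr (by norm_num))
    (fun ξ => p1 _) (fun ξ => by have := p1 ξ.1; unfold Wt; linarith)
  have i3 := hsym (fun ξ => Wt ξ.1 ξ.2) continuous_Wt (fun ξ => (Wt_pos _ _).le) (fun _ => le_rfl)
  have e0 : (g τ) (z, y) = ∫ ξ : ℝ × ℝ, ee (2 * Real.pi * (z * ξ.1 + y * ξ.2)) *
      (((1 : ℝ) : ℂ) * Gm T hT g (τ, ξ)) := by
    rw [← FTinv_FT, FTinv]
    congr 1; ext ξ
    rw [hG, Complex.ofReal_one, one_mul]; rfl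
  have e1 : Dx1 ((7:ℝ)/9) (⇑(g τ)) (z, y) = ∫ ξ : ℝ × ℝ, ee (2 * Real.pi * (z * ξ.1 + y * ξ.2)) *
      (((|ξ.1| ^ ((7:ℝ) / 9) : ℝ) : ℂ) * Gm T hT g (τ, ξ)) := by
    rw [Dx1, FTinv]
    congr 1; ext ξ
    rw [hG]; rfl
  have e2 : Dx2 ((7:ℝ)/9) (⇑(g τ)) (z, y) = ∫ ξ : ℝ × ℝ, ee (2 * Real.pi * (z * ξ.1 + y * ξ.2)) *
      (((|ξ.2| ^ ((7:ℝ) / 9) : ℝ) : ℂ) * Gm T hT g (τ, ξ)) := by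
    rw [Dx2, FTinv]
    congr 1; ext ξ
    rw [hG]; rfl
  rw [e0, e1, e2, Measure.volume_eq_prod, ← integral_add i0 i1, ← integral_add (by exact i0.add i1) i2]
  calc _ = ∫ ξ : ℝ × ℝ, ee (2 * Real.pi * (z * ξ.1 + y * ξ.2)) *
        ((Wt ξ.1 ξ.2 : ℂ) * Gm T hT g (τ, ξ)) ∂((volume : Measure ℝ).prod volume) := by
        refine integral_congr_ae (Filter.Eventually.of_forall fun ξ => ?_)
        simp only [Wt]
        push_cast; ring
    _ = _ := by
        rw [integral_prod_symm _ i3]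
        congr 1; ext η
        rw [Gt, ← integral_mul_const]
        congr 1; ext ξ
        have e : ee (2 * Real.pi * (z * ξ + y * η)) =
            ee (2 * Real.pi * (z * ξ)) * ee (2 * Real.pi * (y * η)) := by
          rw [← ee_add]; congr 1; ring
        rw [e, Lm]; ring

/-- The mixed norm of the weighted source is the integral of `gam`, by Plancherel in `x₂` on each line. -/
lemma rhs_eq (T : ℝ) (hT : 0 ≤ T) (g : ℝ → SchwartzMap (ℝ × ℝ) ℂ)
    (hg : ContinuousOn g (Set.Icc 0 T)) :
    L1x1L2Norm T (fun τ => fun x =>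
      (g τ) x + Dx1 ((7:ℝ)/9) (⇑(g τ)) x + Dx2 ((7:ℝ)/9) (⇑(g τ)) x) =
      ∫⁻ z, gam (Lm T hT g) T z := by
  obtain ⟨M, h⟩ := Lm_adm T hT g hg
  unfold L1x1L2Norm gam
  refine lintegral_congr fun z => ?_
  congr 1
  have hm1 := measurable_Gt' h (α := (ℝ × ℝ) × ℝ) (f := fun a => a.1.2) (g := fun _ => z)
    (k := fun a => a.2) (by fun_prop) (by fun_prop) (by fun_prop)
  have hm2 : Measurable (fun a : (ℝ × ℝ) × ℝ => Gt (Lm T hT g) a.1.2 z a.2 *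
      ee (2 * Real.pi * (a.1.1 * a.2))) := by fun_prop
  have hm3 : Measurable (fun a : ℝ × ℝ => ∫ η, Gt (Lm T hT g) a.2 z η *
      ee (2 * Real.pi * (a.1 * η))) := hm2.stronglyMeasurable.integral_prod_right'.measurable
  have hm4 : Measurable (Function.uncurry fun y τ : ℝ => ‖∫ η, Gt (Lm T hT g) τ z η *
      ee (2 * Real.pi * (y * η))‖ₑ ^ 2) := hm3.enorm.pow_const 2
  have hm5 : Measurable (fun a : ℝ × ℝ => ‖Gt (Lm T hT g) a.1 z a.2‖ₑ ^ 2) :=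
    (measurable_Gt' h measurable_fst measurable_const measurable_snd).enorm.pow_const 2
  calc _ = ∫⁻ y : ℝ, ∫⁻ τ in Set.Icc (0:ℝ) T, ‖∫ η, Gt (Lm T hT g) τ z η *
      ee (2 * Real.pi * (y * η))‖ₑ ^ 2 := by
        refine lintegral_congr fun y => setLIntegral_congr_fun measurableSet_Icc fun τ hτ => ?_
        beta_reduce
        rw [source_eq T hT g hg τ hτ z y, ENNReal.rpow_two]
        rfl
    _ = ∫⁻ τ in Set.Icc (0:ℝ) T, ∫⁻ y : ℝ, ‖∫ η, Gt (Lm T hT g) τ z η *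
      ee (2 * Real.pi * (y * η))‖ₑ ^ 2 := lintegral_lintegral_swap hm4.aemeasurable
    _ = ∫⁻ τ in Set.Icc (0:ℝ) T, ∫⁻ η, ‖Gt (Lm T hT g) τ z η‖ₑ ^ 2 :=
        lintegral_congr fun τ => plancherel_Gt h τ z
    _ = _ := by
        unfold nu
        rw [lintegral_prod _ hm5.aemeasurable]

end ZK

/-- `L²_{x₁} L^∞_{x₂ T}` smoothing estimate for `∂_{x₁}` of the Duhamel
term by the `L¹_{x₁} L²_{x₂ T}` norm of `(1 + D_{x₁}^{7/9} + D_{x₂}^{7/9}) g`. -/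
theorem stmt9 :
    ∃ C : ℝ, 0 < C ∧ ∀ T : ℝ, 0 ≤ T → T ≤ 1 →
      ∀ g : ℝ → SchwartzMap (ℝ × ℝ) ℂ, ContinuousOn g (Set.Icc 0 T) →
        L2x1LinfNorm T (fun t => pd1 (Duh (fun τ => ⇑(g τ)) t))
          ≤ ENNReal.ofReal C *
              L1x1L2Norm T (fun τ => fun x =>
                (g τ) x + Dx1 ((7:ℝ)/9) (⇑(g τ)) x + Dx2 ((7:ℝ)/9) (⇑(g τ)) x) := by
  refine ⟨2 * Real.pi * 10 ^ 6, by positivity, fun T hT0 hT1 g hg => ?_⟩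
  rw [ZK.rhs_eq T hT0 g hg]
  obtain ⟨M, h⟩ := ZK.Lm_adm T hT0 g hg
  -- If the right-hand norm is infinite there is nothing to prove.
  rcases eq_or_ne (∫⁻ z, ZK.gam (ZK.Lm T hT0 g) T z) ∞ with htop | htop
  · rw [htop, ENNReal.mul_top (by simp; positivity)]
    exact le_top
  have hs := ZK.sup_estimate h T hT0 hT1 (lt_top_iff_ne_top.2 htop)
  have h2pi : (0:ℝ) ≤ 2 * Real.pi := by positivity
  unfold L2x1LinfNorm
  refine ZK.le_of_sq_le_sq ?_
  rw [ZK.rpow_half_sq]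
  calc _ ≤ ∫⁻ x, (ENNReal.ofReal (2 * Real.pi) *
        ⨆ y : ℝ, ⨆ t ∈ Set.Icc 0 T, ‖ZK.Fd (ZK.Lm T hT0 g) T 0 t x y‖ₑ) ^ 2 := by
        refine lintegral_mono fun x => ?_
        beta_reduce
        rw [ENNReal.rpow_two]
        gcongr
        refine iSup_le fun y => iSup₂_le fun t ht => ?_
        calc _ ≤ ENNReal.ofReal (2 * Real.pi) * ‖ZK.Fd (ZK.Lm T hT0 g) T 0 t x y‖ₑ := by
              change ‖pd1 (Duh (fun τ => ⇑(g τ)) t) (x, y)‖ₑ ≤ _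
              rw [← ofReal_norm, ← ofReal_norm, ← ENNReal.ofReal_mul h2pi]
              exact ENNReal.ofReal_le_ofReal (ZK.norm_pd1_le T hT0 g hg t ht x y)
          _ ≤ _ := by
              gcongr
              exact le_iSup_of_le y (le_iSup₂_of_le t ht le_rfl)
    _ = ENNReal.ofReal (2 * Real.pi) ^ 2 * ∫⁻ x, (⨆ y : ℝ, ⨆ t ∈ Set.Icc 0 T,
        ‖ZK.Fd (ZK.Lm T hT0 g) T 0 t x y‖ₑ) ^ 2 := by
        rw [← lintegral_const_mul' _ _ (ENNReal.pow_ne_top ENNReal.ofReal_ne_top)]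
        simp_rw [mul_pow]
    _ ≤ ENNReal.ofReal (2 * Real.pi) ^ 2 *
        (ENNReal.ofReal (10 ^ 6) * ∫⁻ z, ZK.gam (ZK.Lm T hT0 g) T z) ^ 2 := by gcongr
    _ = _ := by rw [ENNReal.ofReal_mul h2pi]; ring
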